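/- arXiv:1706.05266 — 3 statements merged into one kernel-verified Lean document; each statement's English description precedes it below -/
import Mathlib

section
/- Let μ ≥ 0, q > 0, and let v : ℝⁿ → ℝᵈ be continuous. Define Φ(E) = inf { Σ_j (diam D_j)^μ (diam v(D_j))^q : E ⊂ ⋃_j D_j, D_j compact }. If Φ(E) = 0 for a set E ⊂ ℝⁿ, then H^μ(E ∩ v^{-1}(y)) = 0 for H^q-almost all y ∈ ℝᵈ. -/
open MeasureTheory Set
open scoped ENNReal

/-- The set function `Φ(E) = inf Σ_j (diam D_j)^μ (diam v(D_j))^q`, the infimum being taken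
over all countable covers of `E` by compact sets `D_j`. -/
noncomputable def Phi {n d : ℕ} (μ q : ℝ)
    (v : EuclideanSpace ℝ (Fin n) → EuclideanSpace ℝ (Fin d))
    (E : Set (EuclideanSpace ℝ (Fin n))) : ℝ≥0∞ :=
  ⨅ (D : ℕ → Set (EuclideanSpace ℝ (Fin n))) (_ : ∀ j, IsCompact (D j))
    (_ : E ⊆ ⋃ j, D j),
    ∑' j, EMetric.diam (D j) ^ μ * EMetric.diam (v '' D j) ^ q


lemma vol_aux (P C : ℝ≥0∞) :
    volume {θ : ℝ | 0 < θ ∧ P ≤ ENNReal.ofReal θ ∧ ENNReal.ofReal θ < P + C} ≤ C := by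
  by_cases hC : C = ∞
  · simp [hC]
  by_cases hP : P = ∞
  · simp [hP]
  lift C to NNReal using hC
  lift P to NNReal using hP
  calc _ ≤ volume (Ico (P:ℝ) (P + C)) := by
        apply measure_mono
        rintro θ ⟨h0, h1, h2⟩
        constructor
        · rw [ENNReal.le_ofReal_iff_toReal_le (by simp) h0.le] at h1
          simpa using h1
        · rw [← ENNReal.coe_add, ENNReal.ofReal_lt_iff_lt_toReal h0.le (by simp)] at h2
          exact h2
    _ = C := by simp

lemma threshold {Y M : Type*} [Countable M] (π : ℕ → Y → M) (anc : ℕ → ℕ → M → M)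
    (hanc : ∀ k' k y, k' < k → anc k' k (π k y) = π k' y) (C : ℕ × M → ℝ≥0∞) (w : ℕ → ℝ≥0∞)
    (S : Set Y) (t : ℝ) (ht : 0 < t)
    (hS : ∀ y ∈ S, ENNReal.ofReal t ≤ ∑' k, C (k, π k y)) :
    ∃ I : Set (ℕ × M), (∀ y ∈ S, ∃ k, (k, π k y) ∈ I) ∧
      ∑' p : I, w p.1.1 ≤ (∑' p, C p * w p.1) / ENNReal.ofReal t := by
  classical
  let P : ℕ × M → ℝ≥0∞ := fun p => ∑ k' ∈ Finset.range p.1, C (k', anc k' p.1 p.2)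
  have hP : ∀ k y, P (k, π k y) = ∑ k' ∈ Finset.range k, C (k', π k' y) := by
    intro k y
    apply Finset.sum_congr rfl
    intro k' hk'
    simp only [hanc k' k y (Finset.mem_range.1 hk')]
  let J : ℕ × M → Set ℝ := fun p =>
    {θ : ℝ | 0 < θ ∧ P p ≤ ENNReal.ofReal θ ∧ ENNReal.ofReal θ < P p + C p}
  have hJ : ∀ p, MeasurableSet (J p) := by
    intro p
    apply MeasurableSet.inter measurableSet_Ioi
    apply MeasurableSet.inter
    · exact measurableSet_le measurable_const ENNReal.measurable_ofReal
    · exact measurableSet_lt ENNReal.measurable_ofReal measurable_const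
  let F : ℝ → ℝ≥0∞ := fun θ => ∑' p, (J p).indicator (fun _ => w p.1) θ
  have hF : Measurable F :=
    Measurable.tsum fun p => measurable_const.indicator (hJ p)
  have hint : ∫⁻ θ in Ioo 0 t, F θ ≤ ∑' p, C p * w p.1 := by
    calc _ ≤ ∫⁻ θ, F θ := setLIntegral_le_lintegral _ _
      _ = ∑' p, ∫⁻ θ, (J p).indicator (fun _ => w p.1) θ :=
        lintegral_tsum fun p => (measurable_const.indicator (hJ p)).aemeasurable
      _ ≤ _ := by
        apply ENNReal.tsum_le_tsum
        intro p
        rw [lintegral_indicator_const (hJ p), mul_comm]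
        exact mul_le_mul_left (vol_aux _ _) _
  have hv : volume (Ioo 0 t) = ENNReal.ofReal t := by simp
  obtain ⟨θ, hθ, hle⟩ := exists_le_setLAverage (μ := volume) (s := Ioo 0 t) (f := F)
    (by rw [hv]; simpa using ht) (by rw [hv]; simp) hF.aemeasurable
  rw [setLAverage_eq, hv] at hle
  refine ⟨{p | θ ∈ J p}, ?_, ?_⟩
  · intro y hy
    have h1 : ENNReal.ofReal θ < ∑' k, C (k, π k y) :=
      lt_of_lt_of_le ((ENNReal.ofReal_lt_ofReal_iff ht).2 hθ.2) (hS y hy)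
    have h2 : ∃ N, ENNReal.ofReal θ < ∑ k ∈ Finset.range N, C (k, π k y) := by
      rw [ENNReal.tsum_eq_iSup_nat, lt_iSup_iff] at h1
      exact h1
    have h3 := Nat.find_spec h2
    rcases hN : Nat.find h2 with _ | K
    · rw [hN] at h3; simp at h3
    · rw [hN, Finset.sum_range_succ] at h3
      have h4 := Nat.find_min h2 (m := K) (by omega)
      refine ⟨K, hθ.1, ?_, ?_⟩
      · rw [hP]; exact not_lt.1 h4
      · rw [hP]; exact h3
  · refine le_trans (le_of_eq ?_) (hle.trans (ENNReal.div_le_div_right hint _))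
    rw [tsum_subtype {p | θ ∈ J p} (fun p : ℕ × M => w p.1)]
    rfl

noncomputable def cellIdx {d : ℕ} (k : ℕ) (y : EuclideanSpace ℝ (Fin d)) : Fin d → ℤ :=
  fun i => ⌊(2:ℝ)^k * y i⌋

noncomputable def cell {d : ℕ} (p : ℕ × (Fin d → ℤ)) : Set (EuclideanSpace ℝ (Fin d)) :=
  {y | cellIdx p.1 y = p.2}

lemma anc_aux {d : ℕ} (k' k : ℕ) (y : EuclideanSpace ℝ (Fin d)) (h : k' < k) :
    (fun i => cellIdx k y i / ((2 ^ (k - k') : ℕ) : ℤ)) = cellIdx k' y := by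
  funext i
  unfold cellIdx
  rw [← Int.floor_div_natCast]
  congr 1
  obtain ⟨j, rfl⟩ := Nat.exists_eq_add_of_lt h
  rw [show k' + j + 1 - k' = j + 1 by omega]
  push_cast
  field_simp
  ring

lemma half_pow (k : ℕ) : ((2:ℝ≥0∞)⁻¹)^k = ENNReal.ofReal ((2:ℝ)⁻¹^k) := by
  rw [ENNReal.ofReal_pow (by positivity), ENNReal.ofReal_inv_of_pos (by norm_num)]; simp

lemma diam_cell {d : ℕ} (p : ℕ × (Fin d → ℤ)) :
    Metric.ediam (cell p) ≤ ((d : NNReal) ^ (1 / (2:ℝ≥0∞)).toReal : NNReal) * ((2:ℝ≥0∞)⁻¹)^p.1 := by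
  apply Metric.ediam_le
  intro x hx y hy
  have h := PiLp.antilipschitzWith_ofLp 2 (fun _ : Fin d => ℝ) x y
  rw [Fintype.card_fin] at h
  refine h.trans ?_
  gcongr
  rw [edist_pi_le_iff]
  intro i
  rw [edist_dist, half_pow]
  apply ENNReal.ofReal_le_ofReal
  have h2 : ⌊(2:ℝ)^p.1 * x i⌋ = ⌊(2:ℝ)^p.1 * y i⌋ := by
    have := congrFun (hx.trans hy.symm) i
    exact this
  have h3 := Int.abs_sub_lt_one_of_floor_eq_floor h2
  rw [← mul_sub, abs_mul, abs_of_pos (by positivity)] at h3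
  rw [Real.dist_eq, inv_pow, inv_eq_one_div, le_div_iff₀ (by positivity), mul_comm]
  exact h3.le

lemma count_cells {d : ℕ} (k : ℕ) (A : Set (EuclideanSpace ℝ (Fin d)))
    (hA : Metric.ediam A ≤ ((2:ℝ≥0∞)⁻¹)^k) (c : ℝ≥0∞) :
    ∑' m : Fin d → ℤ, {m | (A ∩ cell (k, m)).Nonempty}.indicator (fun _ => c) m ≤ 3 ^ d * c := by
  classical
  rcases A.eq_empty_or_nonempty with rfl | ⟨x, hx⟩
  · simp
  let s : Finset (Fin d → ℤ) :=
    Fintype.piFinset fun i => Finset.Icc (cellIdx k x i - 1) (cellIdx k x i + 1)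
  have hs : ∀ m ∉ s, {m | (A ∩ cell (k, m)).Nonempty}.indicator (fun _ => c) m = 0 := by
    intro m hm
    apply indicator_of_notMem
    rintro ⟨y, hyA, hy⟩
    apply hm
    rw [Fintype.mem_piFinset]
    intro i
    have hy' : cellIdx k y = m := hy
    rw [← hy', Finset.mem_Icc]
    have h1 : edist x y ≤ ((2:ℝ≥0∞)⁻¹)^k := (Metric.edist_le_ediam_of_mem hx hyA).trans hA
    rw [half_pow, edist_dist, ENNReal.ofReal_le_ofReal_iff (by positivity)] at h1
    have h2 : |x i - y i| ≤ (2:ℝ)⁻¹^k := by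
      have := PiLp.norm_apply_le (x - y) i
      rw [← dist_eq_norm] at this
      simpa using this.trans h1
    have h3 : |(2:ℝ)^k * x i - (2:ℝ)^k * y i| ≤ 1 := by
      rw [← mul_sub, abs_mul, abs_of_pos (by positivity)]
      calc _ ≤ (2:ℝ)^k * (2:ℝ)⁻¹^k := by gcongr
        _ = 1 := by rw [← mul_pow]; norm_num
    rw [abs_le] at h3
    unfold cellIdx
    constructor
    · rw [Int.le_floor]; push_cast
      have := Int.floor_le ((2:ℝ)^k * x i); linarith
    · rw [← Int.lt_add_one_iff, Int.floor_lt]; push_cast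
      have := Int.lt_floor_add_one ((2:ℝ)^k * x i); linarith
  rw [tsum_eq_sum hs]
  calc _ ≤ ∑ m ∈ s, c := Finset.sum_le_sum fun m _ => indicator_le_self' (by simp) m
    _ = _ := by
      rw [Finset.sum_const, nsmul_eq_mul, Fintype.card_piFinset]
      congr 1
      have h3 : ∀ i : Fin d, (Finset.Icc (cellIdx k x i - 1) (cellIdx k x i + 1)).card = 3 := by
        intro i
        rw [Int.card_Icc]
        omega
      simp [h3]

lemma weighted_cover {d : ℕ} (w : ℕ → ℝ≥0∞) (A : ℕ → Set (EuclideanSpace ℝ (Fin d)))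
    (c : ℕ → ℝ≥0∞) (k : ℕ → ℕ) (hA : ∀ j, Metric.ediam (A j) ≤ ((2:ℝ≥0∞)⁻¹)^(k j))
    (S : Set (EuclideanSpace ℝ (Fin d))) (t : ℝ) (ht : 0 < t)
    (hS : ∀ y ∈ S, ENNReal.ofReal t ≤ ∑' j, (A j).indicator (fun _ => c j) y) :
    ∃ I : Set (ℕ × (Fin d → ℤ)), S ⊆ ⋃ p : I, cell p.1 ∧
      ∑' p : I, w p.1.1 ≤ (3 ^ d * ∑' j, c j * w (k j)) / ENNReal.ofReal t := by
  classical
  let C : ℕ × (Fin d → ℤ) → ℝ≥0∞ := fun p =>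
    ∑' j, if k j = p.1 then {m | (A j ∩ cell (p.1, m)).Nonempty}.indicator (fun _ => c j) p.2 else 0
  obtain ⟨I, hI, hI2⟩ := threshold (Y := EuclideanSpace ℝ (Fin d)) (fun k y => cellIdx k y)
    (fun k' k m i => m i / ((2 ^ (k - k') : ℕ) : ℤ)) (fun k' k y h => anc_aux k' k y h) C w S t ht
    (by
      intro y hy
      refine (hS y hy).trans ?_
      rw [ENNReal.tsum_comm]
      apply ENNReal.tsum_le_tsum
      intro j
      refine le_trans ?_ (ENNReal.le_tsum (k j))
      rw [if_pos rfl]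
      by_cases h : y ∈ A j
      · rw [indicator_of_mem h, indicator_of_mem]
        exact ⟨y, h, rfl⟩
      · rw [indicator_of_notMem h]; exact zero_le)
  refine ⟨I, ?_, hI2.trans ?_⟩
  · intro y hy
    obtain ⟨k, hk⟩ := hI y hy
    exact mem_iUnion.2 ⟨⟨_, hk⟩, rfl⟩
  · apply ENNReal.div_le_div_right
    rw [ENNReal.tsum_prod (f := fun l m => C (l, m) * w l), ← ENNReal.tsum_mul_left]
    calc _ = ∑' l, ∑' j, ∑' m, (if k j = l then
              {m | (A j ∩ cell (l, m)).Nonempty}.indicator (fun _ => c j) m else 0) * w l := by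
          congr 1; funext l
          rw [ENNReal.tsum_comm]
          congr 1; funext m
          simp only [C]
          rw [ENNReal.tsum_mul_right]
      _ = ∑' j, ∑' l, ∑' m, (if k j = l then
              {m | (A j ∩ cell (l, m)).Nonempty}.indicator (fun _ => c j) m else 0) * w l :=
          ENNReal.tsum_comm
      _ ≤ _ := by
          apply ENNReal.tsum_le_tsum
          intro j
          rw [tsum_eq_single (k j)]
          · simp only [if_true]
            rw [ENNReal.tsum_mul_right, ← mul_assoc]
            exact mul_le_mul_left (count_cells (k j) (A j) (hA j) (c j)) _
          · intro l hl
            simp [hl.symm]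

lemma null_of_covers {X : Type*} [EMetricSpace X] [MeasurableSpace X] [BorelSpace X] {ι : Type*}
    [Countable ι] (q : ℝ) (hq : 0 ≤ q) (s : Set X)
    (h : ∀ ε : ℝ≥0∞, 0 < ε → ∃ (I : Set ι) (T : ι → Set X), s ⊆ ⋃ i : I, T i ∧
      ∑' i : I, Metric.ediam (T i) ^ q ≤ ε) : μH[q] s = 0 := by
  rcases hq.eq_or_lt with rfl | hq
  · obtain ⟨I, T, hs, hT⟩ := h 2⁻¹ (by simp)
    rcases isEmpty_or_nonempty I with hI | ⟨⟨i⟩⟩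
    · simp at hs; simp [hs]
    · exfalso
      have := (ENNReal.le_tsum i).trans hT
      simp at this
  · have hpos : ∀ n : ℕ, (0:ℝ≥0∞) < (n:ℝ≥0∞)⁻¹ := fun n => by simp
    choose I T hs hT using fun n : ℕ => h (n:ℝ≥0∞)⁻¹ (hpos n)
    have hlim : Filter.Tendsto (fun n : ℕ => (n:ℝ≥0∞)⁻¹) Filter.atTop (nhds 0) :=
      ENNReal.tendsto_inv_nat_nhds_zero
    have := Measure.hausdorffMeasure_le_liminf_tsum (ι := fun n => I n) q s (l := Filter.atTop)
      (fun n : ℕ => ((n:ℝ≥0∞)⁻¹) ^ (q⁻¹)) (by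
        have := (ENNReal.continuous_rpow_const (y := q⁻¹)).tendsto 0 |>.comp hlim
        rw [ENNReal.zero_rpow_of_pos (by positivity)] at this
        exact this) (fun n i => T n i) (by
        refine Filter.Eventually.of_forall fun n i => ?_
        rw [ENNReal.le_rpow_inv_iff hq]
        exact (ENNReal.le_tsum i).trans (hT n)) (Filter.Eventually.of_forall hs)
    refine le_antisymm (this.trans ?_) zero_le
    rw [← hlim.liminf_eq]
    exact Filter.liminf_le_liminf (Filter.Eventually.of_forall hT)

lemma scale_exists (q : ℝ) (hq : 0 < q) (c D ε : ℝ≥0∞) (hc : c ≠ ∞) (hD : D ≤ 1) (hε : 0 < ε) :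
    ∃ k : ℕ, D ≤ ((2:ℝ≥0∞)⁻¹)^k ∧
      c * (((2:ℝ≥0∞)⁻¹)^k) ^ q ≤ 2 ^ q * (c * D ^ q) + ε := by
  rcases eq_or_ne D 0 with rfl | hD0
  · have h1 : Filter.Tendsto (fun k : ℕ => c * (((2:ℝ≥0∞)⁻¹)^k) ^ q) Filter.atTop (nhds 0) := by
      have h2 := (ENNReal.continuous_rpow_const (y := q)).tendsto 0 |>.comp
        (ENNReal.tendsto_pow_atTop_nhds_zero_of_lt_one (r := (2:ℝ≥0∞)⁻¹) (by simp))
      rw [ENNReal.zero_rpow_of_pos hq] at h2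
      have h3 := ENNReal.Tendsto.const_mul h2 (Or.inr hc)
      rw [mul_zero] at h3
      exact h3
    obtain ⟨k, hk⟩ := (h1.eventually (gt_mem_nhds hε)).exists
    exact ⟨k, zero_le, hk.le.trans le_add_self⟩
  · have hDt : D ≠ ∞ := (hD.trans_lt (by simp)).ne
    lift D to NNReal using hDt
    obtain ⟨n, h1, h2⟩ := exists_nat_pow_near_of_lt_one (x := D) (y := (2:NNReal)⁻¹)
      (pos_iff_ne_zero.2 (by simpa using hD0)) (by simpa using hD) (by simp)
      (by rw [← NNReal.coe_lt_coe]; norm_num)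
    have e : ∀ m : ℕ, ((2:ℝ≥0∞)⁻¹)^m = (((2:NNReal)⁻¹ ^ m : NNReal) : ℝ≥0∞) := by
      intro m; rw [ENNReal.coe_pow, ENNReal.coe_inv (by simp)]; rfl
    refine ⟨n, by rw [e]; exact_mod_cast h2, le_trans ?_ le_self_add⟩
    rw [mul_left_comm, ← ENNReal.mul_rpow_of_nonneg _ _ hq.le]
    gcongr
    rw [e, show (2:ℝ≥0∞) = ((2:NNReal):ℝ≥0∞) by simp, ← ENNReal.coe_mul, ENNReal.coe_le_coe]
    rw [pow_succ] at h1
    calc (2:NNReal)⁻¹ ^ n = 2 * (2⁻¹ ^ n * 2⁻¹) := by field_simp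
      _ ≤ _ := by gcongr

lemma main_aux {n d : ℕ} (μ q : ℝ) (hμ : 0 ≤ μ) (hq : 0 < q)
    (v : EuclideanSpace ℝ (Fin n) → EuclideanSpace ℝ (Fin d))
    (E : Set (EuclideanSpace ℝ (Fin n)))
    (hE : ∀ η : ℝ≥0∞, 0 < η → ∃ D : ℕ → Set (EuclideanSpace ℝ (Fin n)), (∀ j, IsCompact (D j)) ∧
      E ⊆ ⋃ j, D j ∧ ∑' j, Metric.ediam (D j) ^ μ * Metric.ediam (v '' D j) ^ q < η)
    (t : ℝ) (ht : 0 < t) :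
    μH[q] {y | ∀ D : ℕ → Set (EuclideanSpace ℝ (Fin n)), (∀ j, IsCompact (D j)) → E ⊆ ⋃ j, D j →
      ENNReal.ofReal t ≤ ∑' j, (v '' D j).indicator (fun _ => Metric.ediam (D j) ^ μ) y} = 0 := by
  classical
  apply null_of_covers (ι := ℕ × (Fin d → ℤ)) q hq.le
  intro ε hε
  set K : NNReal := ((d : NNReal) ^ (1 / (2:ℝ≥0∞)).toReal : NNReal) with hK
  have ht2 : ENNReal.ofReal (t/2) ≠ 0 := by simpa using ht
  set L : ℝ≥0∞ := (K:ℝ≥0∞) ^ q * ((3 ^ d * (2 ^ q + 1)) / ENNReal.ofReal (t/2)) with hL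
  have hLt : L ≠ ∞ := by
    apply ENNReal.mul_ne_top (ENNReal.rpow_ne_top_of_nonneg hq.le (by simp))
    apply ENNReal.div_ne_top _ ht2
    apply ENNReal.mul_ne_top (by simp)
    simp [hq.le]
  set η : ℝ≥0∞ := min (ε / L) (ENNReal.ofReal (t/2)) with hη
  have hη0 : 0 < η := lt_min (ENNReal.div_pos hε.ne' hLt) (pos_iff_ne_zero.2 ht2)
  obtain ⟨D, hDc, hDE, hDs⟩ := hE η hη0
  set c : ℕ → ℝ≥0∞ := fun j => Metric.ediam (D j) ^ μ with hc
  have hct : ∀ j, c j ≠ ∞ := fun j =>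
    ENNReal.rpow_ne_top_of_nonneg hμ (hDc j).isBounded.ediam_ne_top
  set A : ℕ → Set (EuclideanSpace ℝ (Fin d)) := fun j =>
    if Metric.ediam (v '' D j) ≤ 1 then v '' D j else ∅ with hA
  have hA1 : ∀ j, Metric.ediam (A j) ≤ 1 := by
    intro j
    simp only [hA]
    split_ifs with h
    · exact h
    · simp
  have hA2 : ∀ j, Metric.ediam (A j) ≤ Metric.ediam (v '' D j) := by
    intro j
    simp only [hA]
    split_ifs with h
    · exact le_rfl
    · simp
  obtain ⟨e, he0, hes⟩ := ENNReal.exists_pos_sum_of_countable' hη0.ne' ℕ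
  choose k hk1 hk2 using fun j => scale_exists q hq (c j) (Metric.ediam (A j)) (e j) (hct j)
    (hA1 j) (he0 j)
  obtain ⟨I, hI1, hI2⟩ := weighted_cover (fun k => (((2:ℝ≥0∞)⁻¹)^k) ^ q) A c k hk1
    {y | ∀ D : ℕ → Set (EuclideanSpace ℝ (Fin n)), (∀ j, IsCompact (D j)) → E ⊆ ⋃ j, D j →
      ENNReal.ofReal t ≤ ∑' j, (v '' D j).indicator (fun _ => Metric.ediam (D j) ^ μ) y}
    (t/2) (by positivity) (by
      intro y hy
      have h1 := hy D hDc hDE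
      have h2 : ∑' j, (v '' D j).indicator (fun _ => Metric.ediam (D j) ^ μ) y ≤
          ∑' j, (A j).indicator (fun _ => c j) y + ENNReal.ofReal (t/2) := by
        calc _ ≤ ∑' j, ((A j).indicator (fun _ => c j) y + c j * Metric.ediam (v '' D j) ^ q) := by
              apply ENNReal.tsum_le_tsum
              intro j
              simp only [hA]
              split_ifs with h
              · exact le_self_add
              · refine le_trans ?_ le_add_self
                refine le_trans (indicator_le_self' (by simp) y) ?_
                refine le_mul_of_one_le_right zero_le ?_
                exact ENNReal.one_le_rpow (not_le.1 h).le hq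
          _ = ∑' j, (A j).indicator (fun _ => c j) y + ∑' j, c j * Metric.ediam (v '' D j) ^ q :=
              ENNReal.tsum_add
          _ ≤ _ := by
              gcongr
              exact hDs.le.trans (min_le_right _ _)
      have h3 := h1.trans h2
      rw [show t = t/2 + t/2 by ring, ENNReal.ofReal_add (by positivity) (by positivity),
        show (t/2+t/2)/2 = t/2 by ring] at h3
      exact (ENNReal.add_le_add_iff_right (by simp)).1 h3)
  refine ⟨I, cell, hI1, ?_⟩
  have hsum : ∑' j, c j * (((2:ℝ≥0∞)⁻¹)^(k j)) ^ q ≤ (2 ^ q + 1) * η := by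
    calc _ ≤ ∑' j, (2 ^ q * (c j * Metric.ediam (v '' D j) ^ q) + e j) := by
          apply ENNReal.tsum_le_tsum
          intro j
          refine (hk2 j).trans ?_
          gcongr 2 ^ q * (c j * ?_) + e j
          exact ENNReal.rpow_le_rpow (hA2 j) hq.le
      _ = 2 ^ q * ∑' j, (c j * Metric.ediam (v '' D j) ^ q) + ∑' j, e j := by
          rw [ENNReal.tsum_add, ENNReal.tsum_mul_left]
      _ ≤ 2 ^ q * η + η := by gcongr
      _ = _ := by ring
  calc _ ≤ ∑' p : I, (K:ℝ≥0∞) ^ q * (((2:ℝ≥0∞)⁻¹)^p.1.1) ^ q := by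
        apply ENNReal.tsum_le_tsum
        intro p
        rw [← ENNReal.mul_rpow_of_nonneg _ _ hq.le]
        exact ENNReal.rpow_le_rpow (diam_cell p.1) hq.le
    _ = (K:ℝ≥0∞) ^ q * ∑' p : I, (((2:ℝ≥0∞)⁻¹)^p.1.1) ^ q := ENNReal.tsum_mul_left
    _ ≤ (K:ℝ≥0∞) ^ q * ((3 ^ d * ((2 ^ q + 1) * η)) / ENNReal.ofReal (t/2)) := by
        gcongr
        refine hI2.trans ?_
        gcongr
    _ = L * η := by
        simp only [hL, ENNReal.div_eq_inv_mul]; ring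
    _ ≤ L * (ε / L) := by gcongr; exact min_le_left _ _
    _ ≤ ε := ENNReal.mul_div_le

/-- If `Φ(E) = 0`, then `H^μ(E ∩ v⁻¹(y)) = 0` for `H^q`-almost all `y`. -/
theorem hausdorff_level_zero_of_Phi_zero {n d : ℕ} (μ q : ℝ) (hμ : 0 ≤ μ) (hq : 0 < q)
    (v : EuclideanSpace ℝ (Fin n) → EuclideanSpace ℝ (Fin d)) (hv : Continuous v)
    (E : Set (EuclideanSpace ℝ (Fin n))) (hE : Phi μ q v E = 0) :
    ∀ᵐ y ∂(μH[q] : Measure (EuclideanSpace ℝ (Fin d))),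
      μH[μ] (E ∩ v ⁻¹' {y}) = 0 := by
  have hE' : ∀ η : ℝ≥0∞, 0 < η → ∃ D : ℕ → Set (EuclideanSpace ℝ (Fin n)),
      (∀ j, IsCompact (D j)) ∧
      E ⊆ ⋃ j, D j ∧ ∑' j, Metric.ediam (D j) ^ μ * Metric.ediam (v '' D j) ^ q < η := by
    intro η hη
    rw [← hE, Phi] at hη
    simp only [iInf_lt_iff] at hη
    obtain ⟨D, h1, h2, h3⟩ := hη
    exact ⟨D, h1, h2, h3⟩
  have hall := ae_all_iff.2 fun m : ℕ => measure_eq_zero_iff_ae_notMem.1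
    (main_aux μ q hμ hq v E hE' (1 / ((m:ℝ) + 1)) (by positivity))
  filter_upwards [hall] with y hy
  apply null_of_covers (ι := ℕ) μ hμ
  intro ε hε
  obtain ⟨m, hm⟩ : ∃ m : ℕ, ENNReal.ofReal (1 / ((m:ℝ) + 1)) < ε := by
    have h := ENNReal.tendsto_ofReal (tendsto_one_div_add_atTop_nhds_zero_nat (𝕜 := ℝ))
    rw [ENNReal.ofReal_zero] at h
    exact (h.eventually (gt_mem_nhds hε)).exists
  have hym := hy m
  simp only [mem_ofPred_eq, not_forall, not_le] at hym
  obtain ⟨D, hD1, hD2, hD3⟩ := hym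
  refine ⟨{j | y ∈ v '' D j}, D, ?_, ?_⟩
  · rintro x ⟨hx, hxy⟩
    obtain ⟨j, hj⟩ := mem_iUnion.1 (hD2 hx)
    exact mem_iUnion.2 ⟨⟨j, ⟨x, hj, hxy⟩⟩, hj⟩
  · refine le_trans (le_of_eq ?_) (hD3.trans hm).le
    rw [tsum_subtype {j | y ∈ v '' D j} (fun j => Metric.ediam (D j) ^ μ)]
    rfl
end

section
/- Let β > 0, p > 1, and τ = n − βp > 0. Then there is C = C(n, p, β) such that for every g in the Lorentz space L^{p,1}(ℝⁿ), ∫₀^∞ H^τ_∞({x : M(I_β g)(x) ≥ t^{1/p}}) dt ≤ C ‖g‖_{L^{p,1}}^p. -/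
open MeasureTheory Metric Set
open scoped ENNReal NNReal

/-- `τ`-dimensional Hausdorff content. -/
noncomputable def hContent {X : Type*} [EMetricSpace X] (τ : ℝ) (S : Set X) : ℝ≥0∞ :=
  ⨅ (c : ℕ → Set X) (_ : S ⊆ ⋃ i, c i), ∑' i, EMetric.diam (c i) ^ τ

/-- The Hardy–Littlewood maximal function. -/
noncomputable def maxFn {n : ℕ} (f : EuclideanSpace ℝ (Fin n) → ℝ≥0∞)
    (x : EuclideanSpace ℝ (Fin n)) : ℝ≥0∞ :=
  ⨆ (r : ℝ) (_ : 0 < r), (∫⁻ y in Metric.ball x r, f y) / volume (Metric.ball x r)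

/-- The Riesz potential `I_β g(x) = ∫ g(y) / |y - x|^{n-β} dy`. -/
noncomputable def rieszPot {n : ℕ} (β : ℝ) (g : EuclideanSpace ℝ (Fin n) → ℝ)
    (x : EuclideanSpace ℝ (Fin n)) : ℝ :=
  ∫ y, g y / ‖y - x‖ ^ ((n : ℝ) - β)

/-- The Lorentz `L^{p,1}` norm, `‖f‖_{L^{p,1}} = ∫₀^∞ (L^n {|f| > t})^{1/p} dt`. -/
noncomputable def lorentzNorm {n : ℕ} (p : ℝ) (f : EuclideanSpace ℝ (Fin n) → ℝ) : ℝ≥0∞ :=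
  ∫⁻ t in Set.Ioi (0 : ℝ), (volume {x | t < |f x|}) ^ (1 / p)

noncomputable def up {n : ℕ} (m : Fin n → ℤ) : Fin n → ℤ := fun i => m i / 2

noncomputable def idx {n : ℕ} (k : ℤ) (x : EuclideanSpace ℝ (Fin n)) : Fin n → ℤ :=
  fun i => ⌊x i / (2:ℝ) ^ k⌋

noncomputable def tow {n : ℕ} (c : ℤ → (Fin n → ℤ) → ℝ≥0∞) (k : ℤ) (m : Fin n → ℤ) : ℝ≥0∞ :=
  ∑' i : ℕ, c (k + i) (up^[i] m)

/-- powers of two -/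
noncomputable def e2 (s : ℝ) : ℝ≥0∞ := (2 : ℝ≥0∞) ^ s

lemma e2_add (a b : ℝ) : e2 (a + b) = e2 a * e2 b :=
  ENNReal.rpow_add _ _ (by simp) (by simp)
lemma e2_ne_zero (a : ℝ) : e2 a ≠ 0 := by simp [e2]
lemma e2_pos (a : ℝ) : 0 < e2 a := pos_iff_ne_zero.2 (e2_ne_zero a)
lemma e2_ne_top (a : ℝ) : e2 a ≠ ⊤ := by simp [e2]
lemma e2_zero : e2 0 = 1 := by simp [e2]
lemma e2_rpow (a b : ℝ) : e2 a ^ b = e2 (a * b) := by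
  simp [e2, ENNReal.rpow_mul]
lemma e2_mono {a b : ℝ} (h : a ≤ b) : e2 a ≤ e2 b :=
  ENNReal.rpow_le_rpow_of_exponent_le (by norm_num) h
lemma e2_lt_one {a : ℝ} (h : a < 0) : e2 a < 1 :=
  ENNReal.rpow_lt_one_of_one_lt_of_neg (by norm_num) h
lemma e2_ofReal (a : ℝ) : e2 a = ENNReal.ofReal ((2:ℝ) ^ a) := by
  rw [e2, ← ENNReal.ofReal_rpow_of_pos (by norm_num)]; simp
lemma e2_zpow (k : ℤ) : e2 k = ENNReal.ofReal ((2:ℝ) ^ k) := by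
  rw [e2_ofReal, Real.rpow_intCast]

/-- geometric constant -/
noncomputable def geo (s : ℝ) : ℝ≥0∞ := ∑' i : ℕ, e2 (-(i * s))

lemma geo_ne_top {s : ℝ} (hs : 0 < s) : geo s ≠ ⊤ := by
  have : geo s = ∑' i : ℕ, (e2 (-s)) ^ i := by
    unfold geo; congr 1; ext i
    rw [← ENNReal.rpow_natCast, e2_rpow]; congr 1; ring
  rw [this, ENNReal.tsum_geometric]
  have := e2_lt_one (a := -s) (by linarith)
  simp only [ne_eq, ENNReal.inv_eq_top]
  exact (tsub_pos_of_lt this).ne'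

/-- e2 (-kσ) tends to 0 -/
lemma exists_small {A ε : ℝ≥0∞} (hA : A ≠ ⊤) (hε : ε ≠ 0) {s : ℝ} (hs : 0 < s) :
    ∃ k0 : ℤ, ∀ k : ℤ, k0 ≤ k → A * e2 (-(k * s)) ≤ ε := by
  have h1 : Filter.Tendsto (fun i : ℕ => A * (e2 (-s)) ^ i) Filter.atTop (nhds (A * 0)) :=
    ENNReal.Tendsto.const_mul
      (ENNReal.tendsto_pow_atTop_nhds_zero_of_lt_one (e2_lt_one (by linarith))) (Or.inr hA)
  rw [mul_zero] at h1
  obtain ⟨N, hN⟩ := ((ENNReal.tendsto_nhds_zero.1 h1) ε (pos_iff_ne_zero.2 hε)).exists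
  refine ⟨N, fun k hk => le_trans ?_ hN⟩
  rw [← ENNReal.rpow_natCast, e2_rpow]
  gcongr
  apply e2_mono
  have : (N:ℝ) ≤ k := by exact_mod_cast hk
  nlinarith

lemma idx_succ {n : ℕ} (k : ℤ) (x : EuclideanSpace ℝ (Fin n)) : idx (k+1) x = up (idx k x) := by
  ext i
  simp only [idx, up]
  have := Int.floor_div_natCast (x i / (2:ℝ)^k) 2
  push_cast at this
  rw [← this, zpow_add_one₀ (by norm_num), div_div]

lemma idx_add {n : ℕ} (k : ℤ) (j : ℕ) (x : EuclideanSpace ℝ (Fin n)) :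
    idx (k+j) x = up^[j] (idx k x) := by
  induction j with
  | zero => simp
  | succ j ih => rw [Function.iterate_succ_apply', ← ih, ← idx_succ]; congr 1; push_cast; ring

lemma tow_succ {n : ℕ} (c : ℤ → (Fin n → ℤ) → ℝ≥0∞) (k : ℤ) (m : Fin n → ℤ) :
    tow c k m = c k m + tow c (k+1) (up m) := by
  unfold tow
  rw [tsum_eq_zero_add' ENNReal.summable]
  simp only [Nat.cast_zero, add_zero, Function.iterate_zero, id_eq, Function.iterate_succ_apply]
  congr 2; ext i; congr 1; push_cast; ring

lemma tow_idx {n : ℕ} (c : ℤ → (Fin n → ℤ) → ℝ≥0∞) (k : ℤ) (x : EuclideanSpace ℝ (Fin n)) :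
    tow c k (idx k x) = ∑' i : ℕ, c (k+i) (idx (k+i) x) := by
  simp only [tow, idx_add]

lemma tow_idx_succ {n : ℕ} (c : ℤ → (Fin n → ℤ) → ℝ≥0∞) (k : ℤ) (x : EuclideanSpace ℝ (Fin n)) :
    tow c k (idx k x) = c k (idx k x) + tow c (k+1) (idx (k+1) x) := by
  rw [tow_succ, idx_succ]

lemma tow_anti {n : ℕ} (c : ℤ → (Fin n → ℤ) → ℝ≥0∞) (x : EuclideanSpace ℝ (Fin n)) :
    Antitone (fun k : ℤ => tow c k (idx k x)) := by
  apply antitone_int_of_succ_le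
  intro k
  rw [tow_idx_succ c k]; exact le_add_self

lemma tow_le_geo {n : ℕ} {c : ℤ → (Fin n → ℤ) → ℝ≥0∞} {A : ℝ≥0∞} {s : ℝ}
    (h : ∀ k m, c k m ≤ A * e2 (-(k * s))) (k : ℤ) (m : Fin n → ℤ) :
    tow c k m ≤ A * geo s * e2 (-(k * s)) := by
  calc tow c k m ≤ ∑' i : ℕ, A * e2 (-(k*s)) * e2 (-(i * s)) := by
        apply ENNReal.tsum_le_tsum
        intro i
        refine (h _ _).trans_eq ?_
        rw [mul_assoc, ← e2_add]; congr 2; push_cast; ring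
    _ = _ := by rw [ENNReal.tsum_mul_left, geo]; ring

/-- total sum -/
noncomputable def tot {n : ℕ} (c : ℤ → (Fin n → ℤ) → ℝ≥0∞) (x : EuclideanSpace ℝ (Fin n)) : ℝ≥0∞ :=
  ∑' k : ℤ, c k (idx k x)

lemma tow_le_tot {n : ℕ} (c : ℤ → (Fin n → ℤ) → ℝ≥0∞) (k : ℤ) (x : EuclideanSpace ℝ (Fin n)) :
    tow c k (idx k x) ≤ tot c x := by
  rw [tow_idx, tot]
  exact ENNReal.tsum_comp_le_tsum_of_injective (f := fun i : ℕ => k + (i:ℤ))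
    (fun a b h => by simpa using h) (fun k => c k (idx k x))

lemma exists_lt_tow {n : ℕ} (c : ℤ → (Fin n → ℤ) → ℝ≥0∞) (x : EuclideanSpace ℝ (Fin n))
    {t : ℝ≥0∞} (ht : t < tot c x) : ∃ k, t < tow c k (idx k x) := by
  rw [tot, ENNReal.tsum_eq_iSup_sum] at ht
  obtain ⟨s, hs⟩ := lt_iSup_iff.1 ht
  obtain ⟨k, hk⟩ := s.bddBelow
  refine ⟨k, hs.trans_le ?_⟩
  rw [tow_idx]
  have : ∑ j ∈ s, c j (idx j x) =
      ∑ i ∈ s.image (fun j => (j - k).toNat), c (k+i) (idx (k+i) x) := by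
    rw [Finset.sum_image]
    · apply Finset.sum_congr rfl
      intro j hj
      have := hk hj
      have : k + ((j-k).toNat : ℤ) = j := by omega
      rw [this]
    · intro a ha b hb h
      have := hk ha
      have := hk hb
      simp only at h
      omega
  rw [this]
  exact ENNReal.sum_le_tsum _

/-- crossing: for threshold, find a last index -/
lemma exists_cross (P : ℤ → Prop) (h1 : ∃ k, P k) (h2 : ∃ k0, ∀ k, k0 ≤ k → ¬ P k) :
    ∃ K, P K ∧ ∀ k, K < k → ¬ P k := by
  obtain ⟨k0, hk0⟩ := h2
  obtain ⟨K, hK, h⟩ := Int.exists_greatest_of_bdd (P := P)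
    ⟨k0, fun z hz => by by_contra hh; exact hk0 z (by omega) hz⟩ h1
  exact ⟨K, hK, fun k hk hP => by have := h k hP; omega⟩
set_option linter.deprecated false

lemma dist_le_of_coord {n : ℕ} {x y : EuclideanSpace ℝ (Fin n)} {r : ℝ} (hr : 0 ≤ r)
    (h : ∀ i, |x i - y i| ≤ r) : dist x y ≤ n * r := by
  rw [EuclideanSpace.dist_eq]
  apply Real.sqrt_le_iff.2
  refine ⟨by positivity, ?_⟩
  calc ∑ i, dist (x i) (y i) ^ 2 ≤ ∑ i : Fin n, r ^ 2 := by
        apply Finset.sum_le_sum; intro i _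
        rw [Real.dist_eq]; gcongr; exact h i
    _ = n * r^2 := by simp
    _ ≤ (n * r)^2 := by
        rw [mul_pow]
        gcongr
        have : (n:ℝ) ≤ (n:ℝ)^2 := by exact_mod_cast Nat.le_self_pow (by norm_num) n
        exact this

lemma coord_of_idx {n : ℕ} {k : ℤ} {x y : EuclideanSpace ℝ (Fin n)} {i : Fin n} {a : ℤ}
    (h : |idx k x i - idx k y i| ≤ a) : |x i - y i| ≤ (a + 1) * (2:ℝ)^k := by
  have hk : (0:ℝ) < 2^k := by positivity
  simp only [idx] at h
  have h1 := Int.floor_le (x i / (2:ℝ)^k)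
  have h2 := Int.lt_floor_add_one (x i / (2:ℝ)^k)
  have h3 := Int.floor_le (y i / (2:ℝ)^k)
  have h4 := Int.lt_floor_add_one (y i / (2:ℝ)^k)
  have h5 : |((⌊x i / (2:ℝ)^k⌋ : ℝ) - ⌊y i / (2:ℝ)^k⌋)| ≤ a := by exact_mod_cast h
  rw [abs_le] at h5
  have : |x i / 2^k - y i / 2^k| ≤ a + 1 := by rw [abs_le]; constructor <;> linarith
  rw [← sub_div, abs_div, abs_of_pos hk, div_le_iff₀ hk] at this
  exact this

lemma diam_cube {n : ℕ} (k : ℤ) (m : Fin n → ℤ) :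
    EMetric.diam {x : EuclideanSpace ℝ (Fin n) | idx k x = m} ≤ n * e2 k := by
  apply EMetric.diam_le
  intro x hx y hy
  have : dist x y ≤ n * (2:ℝ)^k := by
    apply dist_le_of_coord (by positivity)
    intro i
    have := coord_of_idx (k := k) (x := x) (y := y) (i := i) (a := 0)
      (by rw [show idx k x = m from hx, show idx k y = m from hy]; simp)
    simpa using this
  rw [edist_dist, e2_zpow]
  refine (ENNReal.ofReal_le_ofReal this).trans_eq ?_
  rw [ENNReal.ofReal_mul (by positivity)]; simp

lemma emdiam_empty {X : Type*} [EMetricSpace X] : EMetric.diam (∅ : Set X) = 0 := Metric.ediam_empty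

lemma hContent_le {X ι : Type*} [EMetricSpace X] [Countable ι] {τ : ℝ} (hτ : 0 < τ) {S : Set X}
    (c : ι → Set X) (h : S ⊆ ⋃ i, c i) : hContent τ S ≤ ∑' i, EMetric.diam (c i) ^ τ := by
  have := Encodable.ofCountable ι
  have h1 := tsum_iUnion_decode₂ (fun s : Set X => EMetric.diam s ^ τ)
    (by simp [emdiam_empty, hτ]) c
  rw [← h1]
  apply iInf₂_le
  rw [Encodable.iUnion_decode₂]; exact h

lemma hContent_mono {X : Type*} [EMetricSpace X] {τ : ℝ} {S T : Set X} (h : S ⊆ T) :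
    hContent τ S ≤ hContent τ T := by
  unfold hContent
  apply le_iInf₂
  intro c hc
  exact iInf₂_le c (h.trans hc)

lemma vol_Ico_le (a b c : ℝ≥0∞) (h : b ≤ c + a) :
    volume ({t : ℝ | a ≤ ENNReal.ofReal t ∧ ENNReal.ofReal t < b} ∩ Ioi 0) ≤ c := by
  by_cases ha : a = ⊤
  · have : {t : ℝ | a ≤ ENNReal.ofReal t ∧ ENNReal.ofReal t < b} ∩ Ioi 0 = ∅ := by
      ext t; simp [ha]
    simp [this]
  by_cases hc : c = ⊤
  · simp [hc]
  calc _ ≤ volume (Icc a.toReal (a.toReal + c.toReal)) := by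
        apply measure_mono
        rintro t ⟨⟨h1, h2⟩, h3 : 0 < t⟩
        have h4 := h2.trans_le h
        constructor
        · exact ENNReal.toReal_le_of_le_ofReal h3.le h1
        · have := (ENNReal.ofReal_lt_iff_lt_toReal h3.le (by simp [ha, hc])).1 h4
          rw [ENNReal.toReal_add hc ha] at this
          linarith
    _ = c := by simp [hc]

lemma choquet_tot {n : ℕ} {τ : ℝ} (hτ : 0 < τ) (hn : 0 < n) (c : ℤ → (Fin n → ℤ) → ℝ≥0∞) :
    ∫⁻ t in Ioi (0:ℝ), hContent τ {x : EuclideanSpace ℝ (Fin n) | ENNReal.ofReal t < tot c x}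
      ≤ (n:ℝ≥0∞) ^ τ * ∑' q : ℤ × (Fin n → ℤ), c q.1 q.2 * e2 (q.1 * τ) := by
  by_cases hfin : ∑' q : ℤ × (Fin n → ℤ), c q.1 q.2 * e2 (q.1 * τ) = ⊤
  · rw [hfin, ENNReal.mul_top]
    · exact le_top
    · simp [hn.ne', ENNReal.rpow_eq_zero_iff]
  set A := ∑' q : ℤ × (Fin n → ℤ), c q.1 q.2 * e2 (q.1 * τ) with hA
  have hc : ∀ k m, c k m ≤ A * e2 (-(k * τ)) := by
    intro k m
    have h1 : c k m * e2 (k * τ) ≤ A := ENNReal.le_tsum (f := fun q : ℤ × (Fin n → ℤ) =>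
      c q.1 q.2 * e2 (q.1 * τ)) (k, m)
    calc c k m = c k m * e2 (k * τ) * e2 (-(k*τ)) := by
          rw [mul_assoc, ← e2_add]; simp [e2_zero]
      _ ≤ _ := by gcongr
  let T : ℤ × (Fin n → ℤ) → Set ℝ := fun q =>
    {t : ℝ | tow c (q.1+1) (up q.2) ≤ ENNReal.ofReal t ∧ ENNReal.ofReal t < tow c q.1 q.2}
  have hT : ∀ q, MeasurableSet (T q) := fun q =>
    (measurableSet_le measurable_const ENNReal.measurable_ofReal).inter
      (measurableSet_lt ENNReal.measurable_ofReal measurable_const)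
  have key : ∀ t ∈ Ioi (0:ℝ),
      hContent τ {x : EuclideanSpace ℝ (Fin n) | ENNReal.ofReal t < tot c x} ≤
      ∑' q : ℤ × (Fin n → ℤ), (T q).indicator (fun _ => (n * e2 q.1) ^ τ) t := by
    intro t (ht : 0 < t)
    refine (hContent_le hτ (fun q : ℤ × (Fin n → ℤ) =>
      {x : EuclideanSpace ℝ (Fin n) | idx q.1 x = q.2 ∧ t ∈ T q}) ?_).trans ?_
    · intro x hx
      obtain ⟨K, hK, hK'⟩ := exists_cross (fun k => ENNReal.ofReal t < tow c k (idx k x))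
        (exists_lt_tow c x hx) (by
          obtain ⟨k0, hk0⟩ := exists_small (A := A * geo τ)
            (ENNReal.mul_ne_top hfin (geo_ne_top hτ))
            (ε := ENNReal.ofReal t) (by simp [ht]) hτ
          exact ⟨k0, fun k hk => not_lt.2 ((tow_le_geo hc k _).trans (hk0 k hk))⟩)
      simp only [mem_iUnion]
      refine ⟨(K, idx K x), rfl, ?_, hK⟩
      have := not_lt.1 (hK' (K+1) (by omega))
      rwa [idx_succ] at this
    · apply ENNReal.tsum_le_tsum
      intro q
      by_cases htq : t ∈ T q
      · simp only [htq, and_true, indicator_of_mem]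
        gcongr
        exact diam_cube _ _
      · simp [htq, emdiam_empty, hτ]
  calc _ ≤ ∫⁻ t in Ioi (0:ℝ), ∑' q : ℤ × (Fin n → ℤ),
        (T q).indicator (fun _ => (n * e2 q.1) ^ τ) t := setLIntegral_mono' measurableSet_Ioi key
    _ = ∑' q : ℤ × (Fin n → ℤ), ∫⁻ t in Ioi (0:ℝ),
        (T q).indicator (fun _ => (n * e2 q.1) ^ τ) t := by
        apply lintegral_tsum
        intro q
        exact (measurable_const.indicator (hT q)).aemeasurable
    _ ≤ ∑' q : ℤ × (Fin n → ℤ), (n:ℝ≥0∞) ^ τ * (c q.1 q.2 * e2 (q.1 * τ)) := by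
        apply ENNReal.tsum_le_tsum
        intro q
        rw [lintegral_indicator_const (hT q), Measure.restrict_apply (hT q),
          ENNReal.mul_rpow_of_nonneg _ _ hτ.le, e2_rpow]
        calc _ ≤ (n:ℝ≥0∞) ^ τ * e2 (q.1 * τ) * c q.1 q.2 := by
              gcongr
              apply vol_Ico_le
              rw [tow_succ]
          _ = _ := by ring
    _ = _ := by rw [ENNReal.tsum_mul_left]

def near {n : ℕ} (a : ℤ) (m m' : Fin n → ℤ) : Prop := ∀ i, |m i - m' i| ≤ a

lemma near_symm {n : ℕ} {a : ℤ} {m m' : Fin n → ℤ} (h : near a m m') : near a m' m :=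
  fun i => by rw [abs_sub_comm]; exact h i

lemma near_up {n : ℕ} {m m' : Fin n → ℤ} (h : near 2 m m') : near 1 (up m) (up m') := by
  intro i
  have := h i
  simp only [up]
  rw [abs_le] at *
  omega

lemma near_mono {n : ℕ} {a b : ℤ} (hab : a ≤ b) {m m' : Fin n → ℤ} (h : near a m m') :
    near b m m' := fun i => (h i).trans hab

lemma near_up_iter {n : ℕ} {m m' : Fin n → ℤ} (h : near 1 m m') (i : ℕ) :
    near 1 (up^[i] m) (up^[i] m') := by
  induction i with
  | zero => exact h
  | succ i ih =>
    rw [Function.iterate_succ_apply', Function.iterate_succ_apply']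
    exact near_up (near_mono (by norm_num) ih)

lemma near_trans {n : ℕ} {m m' m'' : Fin n → ℤ} (h : near 1 m m') (h' : near 1 m' m'') :
    near 2 m m'' := by
  intro i
  have := h i
  have := h' i
  rw [abs_le] at *
  omega

/-- the triple of a cube -/
def tri {n : ℕ} (k : ℤ) (m : Fin n → ℤ) : Set (EuclideanSpace ℝ (Fin n)) :=
  {y | near 1 m (idx k y)}

lemma measurable_idx {n : ℕ} (k : ℤ) :
    Measurable (idx k : EuclideanSpace ℝ (Fin n) → (Fin n → ℤ)) := by
  apply measurable_pi_lambda
  intro i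
  unfold idx
  apply Int.measurable_floor.comp
  apply Measurable.div_const
  fun_prop

lemma measurableSet_tri {n : ℕ} (k : ℤ) (m : Fin n → ℤ) : MeasurableSet (tri k m) :=
  measurable_idx k (MeasurableSet.of_discrete (s := {m' | near 1 m m'}))

lemma vol_tri (n : ℕ) : ∃ C : ℝ≥0∞, C ≠ ⊤ ∧ ∀ (k : ℤ) (m : Fin n → ℤ),
    volume (tri k m) ≤ C * e2 (k * n) := by
  refine ⟨ENNReal.ofReal ((n * 3 : ℝ) ^ n) * volume (closedBall (0 : EuclideanSpace ℝ (Fin n)) 1),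
    ENNReal.mul_ne_top ENNReal.ofReal_ne_top measure_closedBall_lt_top.ne, fun k m => ?_⟩
  by_cases h : (tri k m).Nonempty
  · obtain ⟨y, hy⟩ := h
    have : tri k m ⊆ closedBall y (n * 3 * (2:ℝ)^k) := by
      intro z hz
      rw [mem_closedBall, mul_assoc]
      apply dist_le_of_coord (by positivity)
      intro i
      have := coord_of_idx (near_trans (near_symm hz) hy i)
      push_cast at this
      linarith
    refine (measure_mono this).trans_eq ?_
    rw [Measure.addHaar_closedBall' _ _ (by positivity), finrank_euclideanSpace_fin, mul_pow,
      ENNReal.ofReal_mul (by positivity), e2_ofReal, Real.rpow_mul (by norm_num),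
      Real.rpow_intCast, Real.rpow_natCast]
    ring
  · rw [not_nonempty_iff_eq_empty] at h
    simp [h]

/-- averages over triples -/
noncomputable def uu {n : ℕ} (β : ℝ) (E : Set (EuclideanSpace ℝ (Fin n))) (k : ℤ)
    (m : Fin n → ℤ) : ℝ≥0∞ := e2 (k * (β - n)) * volume (E ∩ tri k m)

lemma uu_comp {n : ℕ} (β : ℝ) (E : Set (EuclideanSpace ℝ (Fin n))) (k : ℤ)
    {m m' : Fin n → ℤ} (h : near 1 m m') :
    uu β E k m ≤ e2 (n - β) * uu β E (k+1) (up m') := by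
  unfold uu
  rw [← mul_assoc, ← e2_add]
  have : (n:ℝ) - β + (k+1 : ℤ) * (β - n) = k * (β - n) := by push_cast; ring
  rw [this]
  gcongr
  intro y hy
  simp only [tri, mem_setOf_eq, idx_succ] at *
  exact near_up (near_trans (near_symm h) hy)

lemma tow_comp {n : ℕ} (β : ℝ) (E : Set (EuclideanSpace ℝ (Fin n))) (k : ℤ)
    {m m' : Fin n → ℤ} (h : near 1 m m') :
    tow (uu β E) k m ≤ e2 (n - β) * tow (uu β E) (k+1) (up m') := by
  unfold tow
  rw [← ENNReal.tsum_mul_left]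
  apply ENNReal.tsum_le_tsum
  intro i
  have := uu_comp β E (k+i) (near_up_iter h i)
  rw [← Function.iterate_succ_apply' up, Function.iterate_succ_apply] at this
  rw [add_right_comm]; exact this

lemma bern {a b : ℝ≥0∞} (ha : a ≠ ⊤) (hb : b ≠ ⊤) {p : ℝ} (hp : 1 < p) :
    (a + b) ^ p ≤ b ^ p + ENNReal.ofReal p * (a * (a + b) ^ (p - 1)) := by
  by_cases h0 : a + b = 0
  · rw [h0, ENNReal.zero_rpow_of_pos (by linarith)]; simp
  lift a to ℝ≥0 using ha
  lift b to ℝ≥0 using hb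
  have hab : (0:ℝ) < a + b := by
    have : a + b ≠ 0 := by exact_mod_cast h0
    exact_mod_cast pos_iff_ne_zero.2 this
  rw [show ENNReal.ofReal p = ((p.toNNReal : ℝ≥0) : ℝ≥0∞) from rfl, ← ENNReal.coe_add,
    ← ENNReal.coe_rpow_of_nonneg _ (by linarith), ← ENNReal.coe_rpow_of_nonneg _ (by linarith),
    ← ENNReal.coe_rpow_of_nonneg _ (by linarith)]
  norm_cast
  rw [← NNReal.coe_le_coe]
  push_cast
  rw [Real.coe_toNNReal p (by linarith)]
  have h1 := one_add_mul_self_le_rpow_one_add (s := -(a / (a+b) : ℝ)) (by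
    rw [neg_le_neg_iff, div_le_one hab]; simp) hp.le
  have h2 : 1 + -(a / (a+b) : ℝ) = b / (a + b) := by field_simp; ring
  rw [h2, Real.div_rpow (by simp) hab.le] at h1
  have h3 : ((a:ℝ)+b)^p = (a+b)^(p-1) * (a+b) := by
    rw [← Real.rpow_add_one hab.ne']; ring_nf
  have h4 : 0 < ((a:ℝ)+b)^p := by positivity
  have h5 := mul_le_mul_of_nonneg_right h1 h4.le
  rw [div_mul_cancel₀ _ h4.ne'] at h5
  have h6 : (1 + p * -((a:ℝ) / (a+b))) * (a+b)^p = (a+b)^p - p * (a * (a+b)^(p-1)) := by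
    rw [h3]; field_simp
    ring
  linarith

/-- truncated coefficients -/
noncomputable def cc {n : ℕ} (β p : ℝ) (L : ℝ≥0∞) (E : Set (EuclideanSpace ℝ (Fin n))) (k : ℤ)
    (m : Fin n → ℤ) : ℝ≥0∞ :=
  open Classical in
  uu β E k m * (if tow (uu β E) k m ≤ L * e2 (k * β) then (tow (uu β E) k m) ^ (p - 1) else 0)

lemma geom_aux {z : ℤ → ℝ≥0∞} (hz : Antitone z) {M : ℝ≥0∞} {β q : ℝ} (hq : 0 < q) :
    (open Classical in ∑' k : ℤ, (if z k ≤ M * e2 (k * β) then e2 (-(k * β * q)) * z k ^ q else 0))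
      ≤ M ^ q * geo (β * q) := by
  classical
  rw [ENNReal.tsum_eq_iSup_sum]
  apply iSup_le
  intro s
  rw [← Finset.sum_filter]
  by_cases hs : (s.filter (fun k => z k ≤ M * e2 (k * β))).Nonempty
  · set s' := s.filter (fun k => z k ≤ M * e2 (k * β)) with hs'
    set k0 := s'.min' hs with hk0
    have hk0' : z k0 ≤ M * e2 (k0 * β) := (Finset.mem_filter.1 (s'.min'_mem hs)).2
    have hle : ∀ k ∈ s', k0 ≤ k := fun k hk => s'.min'_le k hk
    calc ∑ k ∈ s', e2 (-(k * β * q)) * z k ^ q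
        ≤ ∑ k ∈ s', M ^ q * e2 (-(((k - k0).toNat : ℕ) * (β * q))) := by
          apply Finset.sum_le_sum
          intro k hk
          have h1 := hle k hk
          calc _ ≤ e2 (-(k * β * q)) * (M * e2 (k0 * β)) ^ q := by
                gcongr
                exact (hz h1).trans hk0'
            _ = _ := by
                rw [ENNReal.mul_rpow_of_nonneg _ _ hq.le, e2_rpow]
                have : (((k - k0).toNat : ℕ) : ℝ) = k - k0 := by
                  have h2 : (((k - k0).toNat : ℕ) : ℤ) = k - k0 := by omega
                  exact_mod_cast h2
                rw [this, mul_left_comm, ← e2_add]; congr 2; ring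
      _ = M ^ q * ∑ i ∈ s'.image (fun k => (k-k0).toNat), e2 (-((i:ℕ) * (β * q))) := by
          rw [← Finset.mul_sum, Finset.sum_image]
          intro a ha b hb h
          have := hle a ha
          have := hle b hb
          simp only at h
          omega
      _ ≤ _ := by
          gcongr
          exact ENNReal.sum_le_tsum _
  · rw [Finset.not_nonempty_iff_eq_empty.1 hs]; simp

lemma tsum_near {n : ℕ} (a : Fin n → ℤ) (B : ℝ≥0∞) (f : (Fin n → ℤ) → ℝ≥0∞)
    (h1 : ∀ m, near 1 m a → f m ≤ B) (h2 : ∀ m, ¬ near 1 m a → f m = 0) :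
    ∑' m, f m ≤ 3 ^ n * B := by
  classical
  rw [tsum_eq_sum (s := Fintype.piFinset (fun i => Finset.Icc (a i - 1) (a i + 1)))]
  · calc _ ≤ ∑ m ∈ Fintype.piFinset (fun i => Finset.Icc (a i - 1) (a i + 1)), B := by
          apply Finset.sum_le_sum
          intro m hm
          apply h1
          intro i
          have := Fintype.mem_piFinset.1 hm i
          rw [Finset.mem_Icc] at this
          rw [abs_le]; omega
      _ = 3 ^ n * B := by
          rw [Finset.sum_const, Fintype.card_piFinset]
          have : ∀ i : Fin n, (Finset.Icc (a i - 1) (a i + 1)).card = 3 := by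
            intro i; rw [Int.card_Icc]; omega
          simp [this]
  · intro m hm
    apply h2
    intro h
    apply hm
    rw [Fintype.mem_piFinset]
    intro i
    have := h i
    rw [abs_le] at this
    rw [Finset.mem_Icc]; omega

lemma cc_sum {n : ℕ} {β p : ℝ} (hp : 1 < p) (L : ℝ≥0∞) (E : Set (EuclideanSpace ℝ (Fin n))) :
    ∑' q : ℤ × (Fin n → ℤ), cc β p L E q.1 q.2 * e2 (q.1 * (n - β * p)) ≤
      (3 ^ n * e2 ((n - β) * (p-1)) * ((e2 (n - β) * L) ^ (p-1) * geo (β * (p-1)))) * volume E := by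
  classical
  set D := e2 (n - β) with hD
  have hp' : 0 < p - 1 := by linarith
  let W : ℤ × (Fin n → ℤ) → ℝ≥0∞ := fun q =>
    if tow (uu β E) q.1 q.2 ≤ L * e2 (q.1 * β) then
      e2 (-(q.1 * β * (p-1))) * (tow (uu β E) q.1 q.2) ^ (p - 1) else 0
  calc _ = ∑' q : ℤ × (Fin n → ℤ), ∫⁻ y in E, (tri q.1 q.2).indicator (fun _ => W q) y := by
        congr 1; ext q
        rw [lintegral_indicator_const (measurableSet_tri _ _),
          Measure.restrict_apply (measurableSet_tri _ _), inter_comm]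
        simp only [cc, uu, W]
        split_ifs
        · have : e2 (-(q.1 * β * (p-1))) = e2 (q.1 * (β - n)) * e2 (q.1 * (n - β * p)) := by
            rw [← e2_add]; congr 1; ring
          rw [this]; ring
        · simp
    _ = ∫⁻ y in E, ∑' q : ℤ × (Fin n → ℤ), (tri q.1 q.2).indicator (fun _ => W q) y := by
        rw [lintegral_tsum]
        intro q
        exact (measurable_const.indicator (measurableSet_tri _ _)).aemeasurable
    _ ≤ ∫⁻ y in E, (3 ^ n * e2 ((n - β) * (p-1)) * ((D * L) ^ (p-1) * geo (β * (p-1)))) := by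
        apply lintegral_mono
        intro y
        simp only
        rw [ENNReal.tsum_prod']
        let z : ℤ → ℝ≥0∞ := fun k => tow (uu β E) (k+1) (idx (k+1) y)
        have hz : Antitone z := fun a b h => tow_anti (uu β E) y (by omega)
        refine le_trans ?_ (mul_le_mul_right (geom_aux hz (M := D * L) (β := β) hp') _)
        rw [← ENNReal.tsum_mul_left]
        apply ENNReal.tsum_le_tsum
        intro k
        rw [mul_assoc]
        apply tsum_near (idx k y)
        · intro m hm
          have hmem : y ∈ tri k m := hm
          simp only [hmem, indicator_of_mem, W]
          by_cases hg : tow (uu β E) k m ≤ L * e2 (k * β)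
          · have h1 : tow (uu β E) k m ≤ D * z k := by
              simp only [z, idx_succ]
              exact tow_comp β E k hm
            have h2 : z k ≤ D * L * e2 (k * β) := by
              calc z k ≤ tow (uu β E) k (idx k y) := tow_anti (uu β E) y (by omega)
                _ ≤ D * tow (uu β E) (k+1) (up m) := tow_comp β E k (near_symm hm)
                _ ≤ D * tow (uu β E) k m := by
                    gcongr
                    rw [tow_succ _ k]; exact le_add_self
                _ ≤ D * (L * e2 (k * β)) := by gcongr
                _ = _ := by ring
            rw [if_pos hg, if_pos h2]
            calc _ ≤ e2 (-(k * β * (p-1))) * (D * z k) ^ (p-1) := by gcongr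
              _ = _ := by
                rw [ENNReal.mul_rpow_of_nonneg _ _ hp'.le, hD, e2_rpow]; ring
          · rw [if_neg hg]; exact zero_le
        · intro m hm
          have hmem : y ∉ tri k m := hm
          simp [hmem]
    _ = _ := by rw [lintegral_const, Measure.restrict_apply MeasurableSet.univ, univ_inter]

lemma uu_le {n : ℕ} {β : ℝ} {C : ℝ≥0∞} (hC : ∀ (k : ℤ) (m : Fin n → ℤ),
    volume (tri k m) ≤ C * e2 (k * n)) (E : Set (EuclideanSpace ℝ (Fin n))) (k : ℤ)
    (m : Fin n → ℤ) : uu β E k m ≤ C * e2 (k * β) := by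
  unfold uu
  calc _ ≤ e2 (k * (β - n)) * (C * e2 (k * n)) := by
        gcongr
        exact (measure_mono inter_subset_right).trans (hC k m)
    _ = _ := by rw [mul_left_comm, ← e2_add]; congr 2; ring

lemma tele {v u : ℤ → ℝ≥0∞} {p : ℝ} (hp : 1 < p) (hv : ∀ k, v k = u k + v (k+1))
    (hfin : ∀ k, v k ≠ ⊤) (hsm : ∀ ε : ℝ≥0∞, ε ≠ 0 → ∃ k0 : ℤ, ∀ k, k0 ≤ k → v k ≤ ε) (K : ℤ) :
    v K ^ p ≤ ENNReal.ofReal p * ∑' i : ℕ, u (K + i) * v (K + i) ^ (p - 1) := by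
  have hp0 : 0 < p := by linarith
  have step : ∀ N : ℕ, v K ^ p ≤
      ENNReal.ofReal p * (∑ i ∈ Finset.range N, u (K + i) * v (K + i) ^ (p - 1)) + v (K + N) ^ p := by
    intro N
    induction N with
    | zero => simp
    | succ N ih =>
      refine ih.trans ?_
      rw [Finset.sum_range_succ, mul_add, add_assoc]
      gcongr
      have h1 := hv (K + N)
      have h2 : u (K+N) ≠ ⊤ := by
        intro h; apply hfin (K+N); rw [h1, h]; simp
      have := bern h2 (hfin (K + N + 1)) hp
      rw [← h1] at this
      refine (this.trans_eq (add_comm _ _)).trans_eq ?_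
      push_cast
      rw [← add_assoc]
  apply le_of_forall_pos_le_add
  intro ε hε
  obtain ⟨k0, hk0⟩ := hsm (ε ^ (1/p)) (by
    simp only [ne_eq, ENNReal.rpow_eq_zero_iff, not_or, not_and]
    exact ⟨fun h => absurd h hε.ne', fun _ => not_lt.2 (by positivity)⟩)
  refine (step (k0 - K).toNat).trans ?_
  gcongr
  · exact ENNReal.sum_le_tsum _
  · have := hk0 (K + (k0 - K).toNat) (by omega)
    calc _ ≤ (ε ^ (1/p)) ^ p := by gcongr
      _ = ε := by rw [← ENNReal.rpow_mul, one_div_mul_cancel hp0.ne', ENNReal.rpow_one]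

lemma tot_uu_le {n : ℕ} {β p : ℝ} (hβ : 0 < β) (hβn : β < n) (hp : 1 < p)
    {C : ℝ≥0∞} (hCt : C ≠ ⊤) (hC : ∀ (k : ℤ) (m : Fin n → ℤ), volume (tri k m) ≤ C * e2 (k * n)) :
    ∃ C1 : ℝ≥0∞, C1 ≠ ⊤ ∧ ∀ (E : Set (EuclideanSpace ℝ (Fin n))), volume E ≠ ⊤ →
      ∀ x, tot (uu β E) x ^ p ≤ C1 * tot (cc β p (C + e2 β) E) x := by
  have he : 1 < e2 β := ENNReal.one_lt_rpow (by norm_num) hβ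
  have he' : e2 β - 1 ≠ 0 := (tsub_pos_of_lt he).ne'
  have he'' : e2 β - 1 ≠ ⊤ := ENNReal.sub_ne_top (e2_ne_top β)
  set C' := C / (e2 β - 1) with hC'
  have hC't : C' ≠ ⊤ := ENNReal.div_ne_top hCt he'
  have hCC : C + C' = C' * e2 β := by
    have h1 : C' * (e2 β - 1) = C := ENNReal.div_mul_cancel he' he''
    have h2 : e2 β = (e2 β - 1) + 1 := (tsub_add_cancel_of_le he.le).symm
    rw [h2, mul_add, h1, mul_one]
  refine ⟨(1 + C') ^ p * ENNReal.ofReal p, ENNReal.mul_ne_top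
    (ENNReal.rpow_ne_top_of_nonneg (by linarith) (by simp [hC't])) (by simp), ?_⟩
  intro E hE x
  set v : ℤ → ℝ≥0∞ := fun k => tow (uu β E) k (idx k x) with hv
  set u : ℤ → ℝ≥0∞ := fun k => uu β E k (idx k x) with hu
  have hvu : ∀ k, v k = u k + v (k+1) := fun k => tow_idx_succ _ k x
  have huu : ∀ k m, uu β E k m ≤ volume E * e2 (-(k * (n - β))) := by
    intro k m
    unfold uu
    rw [mul_comm, show (k:ℝ) * (β - n) = -(k * (n - β)) by ring]
    gcongr
    exact inter_subset_left
  have hvb : ∀ k, v k ≤ volume E * geo (n - β) * e2 (-(k * (n-β))) := fun k => tow_le_geo huu k _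
  have hAt : volume E * geo (n - β) ≠ ⊤ := ENNReal.mul_ne_top hE (geo_ne_top (by linarith))
  have hfin : ∀ k, v k ≠ ⊤ := fun k =>
    ne_top_of_le_ne_top (ENNReal.mul_ne_top hAt (e2_ne_top _)) (hvb k)
  have hsm : ∀ ε : ℝ≥0∞, ε ≠ 0 → ∃ k0 : ℤ, ∀ k, k0 ≤ k → v k ≤ ε := by
    intro ε hε
    obtain ⟨k0, hk0⟩ := exists_small hAt hε (s := n - β) (by linarith)
    exact ⟨k0, fun k hk => (hvb k).trans (hk0 k hk)⟩
  have hanti : Antitone v := tow_anti (uu β E) x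
  by_cases h0 : tot (uu β E) x = 0
  · rw [h0, ENNReal.zero_rpow_of_pos (by linarith)]; exact zero_le
  obtain ⟨k1, hk1⟩ := exists_lt_tow (uu β E) x (pos_iff_ne_zero.2 h0)
  obtain ⟨K, hK, hK'⟩ := exists_cross (fun k => e2 (k * β) < v k) (by
      obtain ⟨k0, hk0⟩ := exists_small (A := 2) (by simp) (ε := v k1) hk1.ne' hβ
      refine ⟨-(max k0 (-k1)), ?_⟩
      have h1 := hk0 (max k0 (-k1)) (le_max_left _ _)
      have h2 : v k1 ≤ v (-(max k0 (-k1))) := hanti (by omega)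
      refine lt_of_lt_of_le ?_ (h1.trans h2)
      push_cast
      rw [neg_mul, mul_comm (2:ℝ≥0∞)]
      conv_lhs => rw [← mul_one (e2 _)]
      exact ENNReal.mul_lt_mul_right (e2_ne_zero _) (e2_ne_top _) (by norm_num)) (by
      obtain ⟨k0, hk0⟩ := hsm 1 (by simp)
      refine ⟨max k0 0, fun k hk => not_lt.2 ((hk0 k (by omega)).trans ?_)⟩
      rw [← e2_zero]
      apply e2_mono
      have : (0:ℝ) ≤ k := by exact_mod_cast (by omega : 0 ≤ k)
      positivity)
  -- goodness for all `k ≥ K`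
  have hgood : ∀ k, K ≤ k → v k ≤ (C + e2 β) * e2 (k * β) := by
    intro k hk
    rw [hvu k, add_mul]
    gcongr
    · exact uu_le hC E k _
    · have := not_lt.1 (hK' (k+1) (by omega))
      refine this.trans_eq ?_
      rw [← e2_add]; congr 1; push_cast; ring
  -- control of the total
  have hdown : ∀ i : ℕ, v (K - i) + C' * e2 ((K - i : ℤ) * β) ≤ v K + C' * e2 (K * β) := by
    intro i
    induction i with
    | zero => simp
    | succ i ih =>
      refine le_trans ?_ ih
      have h1 := hvu (K - (i+1 : ℕ))
      have h3 : K - ((i+1 : ℕ) : ℤ) + 1 = K - i := by push_cast; ring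
      rw [h3] at h1
      rw [h1]
      have h2 : u (K - (i+1:ℕ)) ≤ C * e2 ((K - (i+1:ℕ) : ℤ) * β) := uu_le hC E _ _
      calc _ ≤ C * e2 ((K - (i+1:ℕ) : ℤ) * β) + v (K - i) + C' * e2 ((K - (i+1:ℕ) : ℤ) * β) := by
            gcongr
        _ = v (K - i) + (C + C') * e2 ((K - (i+1:ℕ) : ℤ) * β) := by ring
        _ = _ := by
            rw [hCC, mul_assoc, ← e2_add]; congr 3; push_cast; ring
  have htot : tot (uu β E) x ≤ (1 + C') * v K := by
    apply le_of_forall_lt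
    intro t ht
    obtain ⟨k, hk⟩ := exists_lt_tow (uu β E) x ht
    refine hk.trans_le ?_
    have h1 : v k ≤ v (K - (K - k).toNat) := hanti (by omega)
    calc v k ≤ v (K - (K - k).toNat) := h1
      _ ≤ v K + C' * e2 (K * β) := le_trans le_self_add (hdown _)
      _ ≤ v K + C' * v K := by gcongr
      _ = _ := by ring
  calc tot (uu β E) x ^ p ≤ ((1 + C') * v K) ^ p := by gcongr
    _ = (1 + C') ^ p * v K ^ p := ENNReal.mul_rpow_of_nonneg _ _ (by linarith)
    _ ≤ (1 + C') ^ p * (ENNReal.ofReal p * ∑' i : ℕ, u (K + i) * v (K + i) ^ (p - 1)) := by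
        gcongr
        exact tele hp hvu hfin hsm K
    _ ≤ (1 + C') ^ p * (ENNReal.ofReal p * tot (cc β p (C + e2 β) E) x) := by
        gcongr
        refine le_trans ?_ (tow_le_tot _ K x)
        rw [tow_idx]
        apply ENNReal.tsum_le_tsum
        intro i
        have := hgood (K+i) (by omega)
        simp only [cc]
        rw [if_pos this]
    _ = _ := by ring

/-- the Riesz kernel -/
noncomputable def kk {n : ℕ} (β : ℝ) (w : EuclideanSpace ℝ (Fin n)) : ℝ≥0∞ := ‖w‖ₑ ^ (β - n)

lemma measurable_kk {n : ℕ} (β : ℝ) : Measurable (kk β : EuclideanSpace ℝ (Fin n) → ℝ≥0∞) := by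
  unfold kk; fun_prop

lemma rpow_anti {a b : ℝ≥0∞} {s : ℝ} (hs : s ≤ 0) (h : a ≤ b) : b ^ s ≤ a ^ s := by
  have h1 := ENNReal.rpow_le_rpow h (neg_nonneg.2 hs)
  rw [ENNReal.rpow_neg, ENNReal.rpow_neg] at h1
  exact ENNReal.inv_le_inv.1 h1

lemma kk_one {n : ℕ} {β : ℝ} (hβ : 0 < β) (hn : 0 < n) :
    ∫⁻ w in ball (0 : EuclideanSpace ℝ (Fin n)) 1, kk β w ≠ ⊤ := by
  have : Nonempty (Fin n) := ⟨⟨0, hn⟩⟩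
  have h1 : IntegrableOn (fun w : EuclideanSpace ℝ (Fin n) => ‖w‖ ^ (-((n:ℝ) - β))) (ball 0 1) := by
    refine integrableOn_ball_of_norm_le_rpow (C := 1) (α := n - β) ?_ ?_ ?_ ?_
    · rw [finrank_euclideanSpace_fin]; omega
    · rw [finrank_euclideanSpace_fin]; linarith
    · refine Filter.Eventually.of_forall fun x => ?_
      rw [Real.norm_of_nonneg (by positivity), one_mul]
    · exact (Measurable.pow_const measurable_norm _).aestronglyMeasurable
  have h2 := h1.2
  rw [hasFiniteIntegral_iff_enorm] at h2
  refine ne_top_of_le_ne_top h2.ne ?_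
  apply lintegral_mono_ae
  have h3 : ∀ᵐ w : EuclideanSpace ℝ (Fin n) ∂(volume.restrict (ball 0 1)), w ≠ 0 := by
    apply ae_restrict_of_ae
    simp [ae_iff]
  filter_upwards [h3] with w hw
  have hw' : 0 < ‖w‖ := norm_pos_iff.2 hw
  rw [kk, Real.enorm_of_nonneg (by positivity), ← ENNReal.ofReal_rpow_of_pos hw', ofReal_norm]
  apply le_of_eq; congr 1; ring

lemma kk_ball {n : ℕ} {β : ℝ} {R : ℝ} (hR : 0 < R) :
    ∫⁻ w in ball (0 : EuclideanSpace ℝ (Fin n)) R, kk β w =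
      ENNReal.ofReal R ^ β * ∫⁻ w in ball (0 : EuclideanSpace ℝ (Fin n)) 1, kk β w := by
  have hm : Measurable ((ball (0 : EuclideanSpace ℝ (Fin n)) R).indicator (kk β)) :=
    (measurable_kk β).indicator measurableSet_ball
  have h1 := lintegral_map (μ := (volume : Measure (EuclideanSpace ℝ (Fin n)))) hm
    (measurable_const_smul R)
  rw [Measure.map_addHaar_smul _ hR.ne', lintegral_smul_measure,
    lintegral_indicator measurableSet_ball, finrank_euclideanSpace_fin] at h1
  have hR0 : ENNReal.ofReal R ≠ 0 := by simp [hR]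
  have hRt : ENNReal.ofReal R ≠ ⊤ := by simp
  have h2 : ∀ a : EuclideanSpace ℝ (Fin n), (ball (0 : EuclideanSpace ℝ (Fin n)) R).indicator (kk β) (R • a)
      = ENNReal.ofReal R ^ (β - n) * (ball (0 : EuclideanSpace ℝ (Fin n)) 1).indicator (kk β) a := by
    intro a
    have h3 : R • a ∈ ball (0 : EuclideanSpace ℝ (Fin n)) R ↔ a ∈ ball (0 : EuclideanSpace ℝ (Fin n)) 1 := by
      rw [mem_ball_zero_iff, mem_ball_zero_iff, norm_smul, Real.norm_of_nonneg hR.le]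
      exact mul_lt_iff_lt_one_right hR
    by_cases ha : a ∈ ball (0 : EuclideanSpace ℝ (Fin n)) 1
    · rw [indicator_of_mem (h3.2 ha), indicator_of_mem ha, kk, kk, enorm_smul,
        Real.enorm_of_nonneg hR.le, ENNReal.mul_rpow_of_ne_top hRt (by simp)]
    · rw [indicator_of_notMem (fun h => ha (h3.1 h)), indicator_of_notMem ha, mul_zero]
  simp_rw [h2] at h1
  rw [lintegral_const_mul _ ((measurable_kk β).indicator measurableSet_ball),
    lintegral_indicator measurableSet_ball, smul_eq_mul] at h1
  have h4 : ENNReal.ofReal |(R ^ n)⁻¹| = ENNReal.ofReal R ^ (-(n:ℝ)) := by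
    rw [abs_of_nonneg (by positivity), ENNReal.ofReal_inv_of_pos (by positivity),
      ENNReal.ofReal_pow hR.le, ENNReal.rpow_neg, ENNReal.rpow_natCast]
  rw [h4] at h1
  have h5 := congrArg (fun t => ENNReal.ofReal R ^ (n:ℝ) * t) h1
  simp only [← mul_assoc] at h5
  rw [← ENNReal.rpow_add _ _ hR0 hRt, ← ENNReal.rpow_add _ _ hR0 hRt] at h5
  simpa using h5

lemma kk_avg {n : ℕ} {β : ℝ} (hβ : 0 < β) (hβn : β < n) (hn : 0 < n) : ∃ C : ℝ≥0∞, C ≠ ⊤ ∧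
    ∀ (x y : EuclideanSpace ℝ (Fin n)) (r : ℝ), 0 < r →
      ∫⁻ z in ball x r, kk β (y - z) ≤ C * kk β (y - x) * volume (ball x r) := by
  have : Nonempty (Fin n) := ⟨⟨0, hn⟩⟩
  set I := ∫⁻ w in ball (0 : EuclideanSpace ℝ (Fin n)) 1, kk β w with hI
  set B := volume (ball (0 : EuclideanSpace ℝ (Fin n)) 1) with hB
  have hB0 : B ≠ 0 := (measure_ball_pos _ _ (by norm_num)).ne'
  have hBt : B ≠ ⊤ := measure_ball_lt_top.ne
  have hs : β - n ≤ 0 := by linarith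
  refine ⟨(2:ℝ≥0∞)^(n - β) + 3 ^ β * I / B * 2 ^ (n - β), ?_, ?_⟩
  · apply ENNReal.add_ne_top.2
    refine ⟨by simp, ENNReal.mul_ne_top (ENNReal.div_ne_top (ENNReal.mul_ne_top (by simp) (kk_one hβ hn)) hB0) (by simp)⟩
  intro x y r hr
  by_cases hc : 2 * r ≤ ‖y - x‖
  · calc ∫⁻ z in ball x r, kk β (y - z) ≤ ∫⁻ z in ball x r, (2:ℝ≥0∞)^(n - β) * kk β (y - x) := by
          apply setLIntegral_mono' measurableSet_ball
          intro z hz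
          have h1 : ‖y - x‖ₑ ≤ 2 * ‖y - z‖ₑ := by
            have h2 : ‖y - x‖ ≤ 2 * ‖y - z‖ := by
              have := norm_sub_le_norm_sub_add_norm_sub y z x
              rw [mem_ball, dist_eq_norm] at hz
              linarith
            rw [← ofReal_norm, ← ofReal_norm]
            refine (ENNReal.ofReal_le_ofReal h2).trans_eq ?_
            rw [ENNReal.ofReal_mul (by norm_num)]; simp
          have h3 := rpow_anti hs h1
          rw [ENNReal.mul_rpow_of_ne_top (by simp) (by simp)] at h3
          calc kk β (y - z) = (2:ℝ≥0∞)^(n-β) * ((2:ℝ≥0∞)^(β-n) * kk β (y - z)) := by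
                rw [← mul_assoc, ← ENNReal.rpow_add _ _ (by simp) (by simp)]; simp
            _ ≤ _ := by gcongr; exact h3
      _ = (2:ℝ≥0∞)^(n - β) * kk β (y - x) * volume (ball x r) := by simp
      _ ≤ _ := by gcongr; exact le_self_add
  · push Not at hc
    have hr0 : ENNReal.ofReal r ≠ 0 := by simp [hr]
    have hrt : ENNReal.ofReal r ≠ ⊤ := by simp
    have hvol : volume (ball x r) = ENNReal.ofReal r ^ (n:ℝ) * B := by
      rw [Measure.addHaar_ball _ _ hr.le, finrank_euclideanSpace_fin, ENNReal.ofReal_pow hr.le,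
        ENNReal.rpow_natCast]
    have hk : ENNReal.ofReal r ^ (β - n) ≤ 2 ^ (n - β) * kk β (y - x) := by
      have h1 : ‖y - x‖ₑ ≤ 2 * ENNReal.ofReal r := by
        rw [← ofReal_norm]
        refine (ENNReal.ofReal_le_ofReal hc.le).trans_eq ?_
        rw [ENNReal.ofReal_mul (by norm_num)]; simp
      have h3 := rpow_anti hs h1
      rw [ENNReal.mul_rpow_of_ne_top (by simp) (by simp)] at h3
      calc _ = (2:ℝ≥0∞)^(n-β) * ((2:ℝ≥0∞)^(β-n) * ENNReal.ofReal r ^ (β - n)) := by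
            rw [← mul_assoc, ← ENNReal.rpow_add _ _ (by simp) (by simp)]; simp
        _ ≤ _ := by gcongr; exact h3
    calc ∫⁻ z in ball x r, kk β (y - z) ≤ ∫⁻ z in ball y (3 * r), kk β (y - z) := by
          apply lintegral_mono_set
          apply ball_subset_ball'
          rw [dist_comm, dist_eq_norm]; linarith
      _ = ∫⁻ w in ball (0 : EuclideanSpace ℝ (Fin n)) (3 * r), kk β w := by
          rw [← lintegral_indicator measurableSet_ball, ← lintegral_indicator measurableSet_ball,
            ← lintegral_sub_left_eq_self _ y]
          congr 1; ext z
          simp only [indicator, mem_ball, dist_zero_right]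
          rw [dist_comm, dist_eq_norm, sub_sub_cancel]
      _ = ENNReal.ofReal (3 * r) ^ β * I := kk_ball (by positivity)
      _ = 3 ^ β * I * ENNReal.ofReal r ^ β := by
          rw [ENNReal.ofReal_mul (by norm_num), ENNReal.mul_rpow_of_nonneg _ _ hβ.le]
          simp; ring
      _ = 3 ^ β * I / B * ENNReal.ofReal r ^ (β - n) * volume (ball x r) := by
          have h6 : ENNReal.ofReal r ^ β = ENNReal.ofReal r ^ (β - n) * ENNReal.ofReal r ^ (n:ℝ) := by
            rw [← ENNReal.rpow_add _ _ hr0 hrt]; simp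
          rw [hvol, h6]
          conv_lhs => rw [← ENNReal.div_mul_cancel (b := 3 ^ β * I) hB0 hBt]
          ring
      _ ≤ 3 ^ β * I / B * (2 ^ (n - β) * kk β (y - x)) * volume (ball x r) := by gcongr
      _ = 3 ^ β * I / B * 2 ^ (n - β) * kk β (y - x) * volume (ball x r) := by ring
      _ ≤ _ := by gcongr; exact le_add_self

lemma maxFn_le {n : ℕ} {β : ℝ} (hβ : 0 < β) (hβn : β < n) (hn : 0 < n) : ∃ C : ℝ≥0∞, C ≠ ⊤ ∧
    ∀ g : EuclideanSpace ℝ (Fin n) → ℝ, Measurable g → ∀ x,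
      maxFn (fun y => (‖rieszPot β g y‖₊ : ℝ≥0∞)) x ≤ C * ∫⁻ y, ‖g y‖ₑ * kk β (y - x) := by
  obtain ⟨C, hC, h⟩ := kk_avg hβ hβn hn
  refine ⟨C, hC, fun g hg x => ?_⟩
  apply iSup₂_le
  intro r hr
  apply ENNReal.div_le_of_le_mul
  have h1 : ∀ z, (‖rieszPot β g z‖₊ : ℝ≥0∞) ≤ ∫⁻ y, ‖g y‖ₑ * kk β (y - z) := by
    intro z
    change ‖rieszPot β g z‖ₑ ≤ _
    refine (enorm_integral_le_lintegral_enorm _).trans ?_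
    apply lintegral_mono
    intro y
    by_cases hyz : y - z = 0
    · simp only [hyz, norm_zero]
      rw [Real.zero_rpow (by linarith)]; simp
    · have : 0 < ‖y - z‖ := norm_pos_iff.2 hyz
      simp only
      rw [div_eq_mul_inv, enorm_mul, ← Real.rpow_neg this.le, kk,
        Real.enorm_of_nonneg (r := ‖y - z‖ ^ (-((n:ℝ) - β))) (by positivity), ← ENNReal.ofReal_rpow_of_pos this, ofReal_norm,
        neg_sub]
  calc ∫⁻ z in ball x r, (‖rieszPot β g z‖₊ : ℝ≥0∞)
      ≤ ∫⁻ z in ball x r, ∫⁻ y, ‖g y‖ₑ * kk β (y - z) := lintegral_mono h1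
    _ = ∫⁻ y, ∫⁻ z in ball x r, ‖g y‖ₑ * kk β (y - z) := by
        apply lintegral_lintegral_swap
        apply Measurable.aemeasurable
        have := measurable_kk (n := n) β
        unfold Function.uncurry
        apply Measurable.mul
        · fun_prop
        · exact this.comp (by fun_prop)
    _ = ∫⁻ y, ‖g y‖ₑ * ∫⁻ z in ball x r, kk β (y - z) := by
        congr 1; ext y
        rw [lintegral_const_mul]
        exact (measurable_kk β).comp (by fun_prop)
    _ ≤ ∫⁻ y, (C * volume (ball x r)) * (‖g y‖ₑ * kk β (y - x)) := by
        apply lintegral_mono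
        intro y
        simp only
        calc _ ≤ ‖g y‖ₑ * (C * kk β (y - x) * volume (ball x r)) := by gcongr; exact h x y r hr
          _ = _ := by ring
    _ = _ := by
        rw [lintegral_const_mul]
        · ring
        · exact (by fun_prop : Measurable fun y => ‖g y‖ₑ).mul ((measurable_kk β).comp (by fun_prop))

lemma kk_dyadic {n : ℕ} {β : ℝ} (hβn : β < n) {x y : EuclideanSpace ℝ (Fin n)} (hxy : y ≠ x) :
    kk β (y - x) ≤ e2 (n - β) *
      ∑' k : ℤ, (tri k (idx k x)).indicator (fun _ => e2 (k * (β - n))) y := by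
  have h0 : 0 < ‖y - x‖ := norm_pos_iff.2 (sub_ne_zero.2 hxy)
  obtain ⟨k, hk1, hk2⟩ := exists_mem_Ioc_zpow h0 (one_lt_two)
  have hmem : y ∈ tri (k+1) (idx (k+1) x) := by
    intro i
    have h1 : |(y - x) i| ≤ (2:ℝ)^(k+1) := le_trans (PiLp.norm_apply_le (y - x) i) hk2
    have hpos : (0:ℝ) < 2^(k+1) := by positivity
    have h2 : |y i / (2:ℝ)^(k+1) - x i / (2:ℝ)^(k+1)| ≤ 1 := by
      rw [← sub_div, abs_div, abs_of_pos hpos, div_le_one hpos]; exact h1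
    simp only [idx]
    rw [abs_le] at *
    have a1 := Int.floor_le (x i / (2:ℝ)^(k+1))
    have a2 := Int.lt_floor_add_one (x i / (2:ℝ)^(k+1))
    have a3 := Int.floor_le (y i / (2:ℝ)^(k+1))
    have a4 := Int.lt_floor_add_one (y i / (2:ℝ)^(k+1))
    have b1 : (⌊x i / (2:ℝ)^(k+1)⌋ : ℝ) < ⌊y i / (2:ℝ)^(k+1)⌋ + 2 := by linarith
    have b2 : (⌊y i / (2:ℝ)^(k+1)⌋ : ℝ) < ⌊x i / (2:ℝ)^(k+1)⌋ + 2 := by linarith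
    have c1 : ⌊x i / (2:ℝ)^(k+1)⌋ < ⌊y i / (2:ℝ)^(k+1)⌋ + 2 := by exact_mod_cast b1
    have c2 : ⌊y i / (2:ℝ)^(k+1)⌋ < ⌊x i / (2:ℝ)^(k+1)⌋ + 2 := by exact_mod_cast b2
    omega
  have h3 : e2 k ≤ ‖y - x‖ₑ := by
    rw [e2_zpow, ← ofReal_norm]; exact ENNReal.ofReal_le_ofReal hk1.le
  calc kk β (y - x) ≤ e2 k ^ (β - n) := rpow_anti (by linarith) h3
    _ = e2 (n - β) * (tri (k+1) (idx (k+1) x)).indicator (fun _ => e2 ((k+1 : ℤ) * (β - n))) y := by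
        rw [indicator_of_mem hmem, e2_rpow, ← e2_add]; congr 1; push_cast; ring
    _ ≤ _ := by
        gcongr
        exact ENNReal.le_tsum (f := fun k : ℤ =>
          (tri k (idx k x)).indicator (fun _ => e2 (k * (β - n))) y) (k+1)

lemma kk_set {n : ℕ} {β : ℝ} (hβn : β < n) (hn : 0 < n) (E : Set (EuclideanSpace ℝ (Fin n)))
    (x : EuclideanSpace ℝ (Fin n)) :
    ∫⁻ y in E, kk β (y - x) ≤ e2 (n - β) * tot (uu β E) x := by
  have : Nonempty (Fin n) := ⟨⟨0, hn⟩⟩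
  have hm : ∀ k : ℤ, Measurable ((tri k (idx k x)).indicator (fun _ => e2 (k * (β - n)))) :=
    fun k => measurable_const.indicator (measurableSet_tri _ _)
  calc _ ≤ ∫⁻ y in E, e2 (n - β) *
      ∑' k : ℤ, (tri k (idx k x)).indicator (fun _ => e2 (k * (β - n))) y := by
        apply lintegral_mono_ae
        have h3 : ∀ᵐ w : EuclideanSpace ℝ (Fin n) ∂(volume.restrict E), w ≠ x := by
          apply ae_restrict_of_ae
          simp [ae_iff]
        filter_upwards [h3] with y hy
        exact kk_dyadic hβn hy
    _ = e2 (n - β) * ∑' k : ℤ, ∫⁻ y in E, (tri k (idx k x)).indicator (fun _ => e2 (k * (β - n))) y := by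
        rw [lintegral_const_mul _ (Measurable.ennreal_tsum hm), lintegral_tsum]
        exact fun k => (hm k).aemeasurable
    _ = _ := by
        unfold tot uu
        congr 2; ext k
        rw [lintegral_indicator_const (measurableSet_tri _ _),
          Measure.restrict_apply (measurableSet_tri _ _), inter_comm]

/-- dyadic level sets -/
def lev {n : ℕ} (g : EuclideanSpace ℝ (Fin n) → ℝ) (j : ℤ) : Set (EuclideanSpace ℝ (Fin n)) :=
  {y | (2:ℝ)^j < |g y|}

lemma pot_le {n : ℕ} {β : ℝ} (hβn : β < n) (hn : 0 < n) (g : EuclideanSpace ℝ (Fin n) → ℝ)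
    (hg : Measurable g) (x : EuclideanSpace ℝ (Fin n)) :
    ∫⁻ y, ‖g y‖ₑ * kk β (y - x) ≤
      (2 * e2 (n - β)) * ∑' j : ℤ, e2 j * tot (uu β (lev g j)) x := by
  have hlev : ∀ j, MeasurableSet (lev g j) := fun j =>
    measurableSet_lt measurable_const (by fun_prop)
  have hkm : Measurable (fun y : EuclideanSpace ℝ (Fin n) => kk β (y - x)) :=
    (measurable_kk β).comp (by fun_prop)
  calc _ ≤ ∫⁻ y, ∑' j : ℤ, 2 * e2 j * (lev g j).indicator (fun y => kk β (y - x)) y := by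
        apply lintegral_mono
        intro y
        simp only
        by_cases h0 : g y = 0
        · simp [h0]
        obtain ⟨j, hj1, hj2⟩ := exists_mem_Ioc_zpow (abs_pos.2 h0) (one_lt_two)
        have hmem : y ∈ lev g j := hj1
        have h1 : ‖g y‖ₑ ≤ 2 * e2 j := by
          rw [Real.enorm_eq_ofReal_abs, e2_zpow]
          refine (ENNReal.ofReal_le_ofReal hj2).trans_eq ?_
          rw [zpow_add_one₀ (by norm_num), mul_comm, ENNReal.ofReal_mul (by norm_num)]; simp
        calc _ ≤ 2 * e2 j * (lev g j).indicator (fun y => kk β (y - x)) y := by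
              rw [indicator_of_mem hmem]; gcongr
          _ ≤ _ := ENNReal.le_tsum (f := fun j : ℤ =>
              2 * e2 j * (lev g j).indicator (fun y => kk β (y - x)) y) j
    _ = ∑' j : ℤ, 2 * e2 j * ∫⁻ y in lev g j, kk β (y - x) := by
        rw [lintegral_tsum (fun j => ((hkm.indicator (hlev j)).const_mul _).aemeasurable)]
        congr 1; ext j
        rw [lintegral_const_mul _ (hkm.indicator (hlev j)), lintegral_indicator (hlev j)]
    _ ≤ ∑' j : ℤ, (2 * e2 (n - β)) * (e2 j * tot (uu β (lev g j)) x) := by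
        apply ENNReal.tsum_le_tsum
        intro j
        calc _ ≤ 2 * e2 j * (e2 (n - β) * tot (uu β (lev g j)) x) := by
              gcongr; exact kk_set hβn hn _ x
          _ = _ := by ring
    _ = _ := ENNReal.tsum_mul_left

lemma lorentz_sum {n : ℕ} {p : ℝ} (hp : 1 < p) (g : EuclideanSpace ℝ (Fin n) → ℝ) :
    ∑' j : ℤ, e2 j * volume (lev g j) ^ (1/p) ≤ 2 * lorentzNorm p g := by
  have hp0 : 0 < 1 / p := by positivity
  have hmono : Monotone (fun j : ℤ => (2:ℝ)^j) := zpow_right_mono₀ (by norm_num)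
  have hd := hmono.pairwise_disjoint_on_Ioc_succ
  calc ∑' j : ℤ, e2 j * volume (lev g j) ^ (1/p)
      = ∑' j : ℤ, e2 (j+1 : ℤ) * volume (lev g (j+1)) ^ (1/p) :=
        ((Equiv.addRight (1:ℤ)).tsum_eq (fun j : ℤ => e2 j * volume (lev g j) ^ (1/p))).symm
    _ ≤ ∑' j : ℤ, 2 * ∫⁻ t in Ioc ((2:ℝ)^j) ((2:ℝ)^(Order.succ j)),
          (volume {x | t < |g x|}) ^ (1 / p) := by
        apply ENNReal.tsum_le_tsum
        intro j
        calc _ = 2 * ∫⁻ t in Ioc ((2:ℝ)^j) ((2:ℝ)^(Order.succ j)), volume (lev g (j+1)) ^ (1/p) := by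
              rw [setLIntegral_const, Real.volume_Ioc, e2_zpow, Int.succ_eq_succ, Int.succ,
                zpow_add_one₀ (by norm_num), show (2:ℝ)^j * 2 - 2^j = 2^j by ring, mul_comm ((2:ℝ)^j),
                ENNReal.ofReal_mul (by norm_num)]
              simp; ring
          _ ≤ _ := by
              gcongr 2 * ?_
              apply setLIntegral_mono' measurableSet_Ioc
              intro t ht
              gcongr
              intro y hy
              exact lt_of_le_of_lt ht.2 hy
    _ = 2 * ∫⁻ t in ⋃ j : ℤ, Ioc ((2:ℝ)^j) ((2:ℝ)^(Order.succ j)),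
          (volume {x | t < |g x|}) ^ (1 / p) := by
        rw [ENNReal.tsum_mul_left, lintegral_iUnion (fun _ => measurableSet_Ioc) hd]
    _ ≤ _ := by
        unfold lorentzNorm
        gcongr 2 * ?_
        apply lintegral_mono_set
        apply iUnion_subset
        intro j t ht
        exact lt_trans (by positivity : (0:ℝ) < 2^j) ht.1

lemma holder_tsum {ι : Type*} {p : ℝ} (hp : 1 < p) (a b : ι → ℝ≥0∞) :
    (∑' j, a j * b j) ^ p ≤ (∑' j, a j) ^ (p - 1) * ∑' j, a j * b j ^ p := by
  have hp0 : 0 < p := by linarith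
  have hp1 : p⁻¹ ≤ 1 := inv_le_one_of_one_le₀ hp.le
  have h1 : ∑' j, a j * b j ≤ (∑' j, a j) ^ (1 - p⁻¹) * (∑' j, a j * b j ^ p) ^ p⁻¹ := by
    rw [ENNReal.tsum_eq_iSup_sum (f := fun j => a j * b j)]
    apply iSup_le
    intro s
    refine (ENNReal.inner_le_weight_mul_Lp_of_nonneg s hp.le a b).trans ?_
    have hpp : 0 ≤ 1 - p⁻¹ := by linarith
    gcongr
    · exact ENNReal.sum_le_tsum _
    · exact ENNReal.sum_le_tsum _
  calc _ ≤ ((∑' j, a j) ^ (1 - p⁻¹) * (∑' j, a j * b j ^ p) ^ p⁻¹) ^ p := by gcongr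
    _ = _ := by
      rw [ENNReal.mul_rpow_of_nonneg _ _ hp0.le, ← ENNReal.rpow_mul, ← ENNReal.rpow_mul,
        inv_mul_cancel₀ hp0.ne', ENNReal.rpow_one, sub_mul, one_mul, inv_mul_cancel₀ hp0.ne']

/-- The limiting-case (`s = p`) Choquet-integral estimate for the maximal function of the
Riesz potential, with the Lorentz `L^{p,1}` norm on the right-hand side. -/
theorem choquet_estimate_lorentz {n : ℕ} (β p : ℝ) (hβ : 0 < β) (hp : 1 < p)
    (hτ : 0 < (n : ℝ) - β * p) :
    ∃ C : ℝ, 0 < C ∧ ∀ g : EuclideanSpace ℝ (Fin n) → ℝ,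
      Measurable g → lorentzNorm p g ≠ ⊤ →
      ∫⁻ t in Set.Ioi (0 : ℝ),
          hContent ((n : ℝ) - β * p)
            {x | ENNReal.ofReal (t ^ (1 / p)) ≤
              maxFn (fun y => (‖rieszPot β g y‖₊ : ℝ≥0∞)) x}
        ≤ ENNReal.ofReal C * (lorentzNorm p g) ^ p := by
  have hp0 : 0 < p := by linarith
  have hβn : β < n := by nlinarith
  have hn : 0 < n := by
    have : (0:ℝ) < n := by linarith
    exact_mod_cast this
  obtain ⟨C0, hC0t, hC0⟩ := vol_tri n
  obtain ⟨C1, hC1t, hC1⟩ := tot_uu_le hβ hβn hp hC0t hC0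
  obtain ⟨CM, hCMt, hCM⟩ := maxFn_le (n := n) hβ hβn hn
  set L := C0 + e2 β with hL
  have hLt : L ≠ ⊤ := ENNReal.add_ne_top.2 ⟨hC0t, e2_ne_top _⟩
  set C2 : ℝ≥0∞ := (3 ^ n * e2 ((n - β) * (p-1)) *
    ((e2 (n - β) * L) ^ (p-1) * geo (β * (p-1)))) with hC2
  have hC2t : C2 ≠ ⊤ := by
    refine ENNReal.mul_ne_top (ENNReal.mul_ne_top (by simp) (e2_ne_top _)) (ENNReal.mul_ne_top
      (ENNReal.rpow_ne_top_of_nonneg (by linarith) (ENNReal.mul_ne_top (e2_ne_top _) hLt))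
      (geo_ne_top (mul_pos hβ (by linarith))))
  set B : ℝ≥0∞ := (CM * (2 * e2 (n - β))) ^ p with hB
  have hBt : B ≠ ⊤ := ENNReal.rpow_ne_top_of_nonneg hp0.le
    (ENNReal.mul_ne_top hCMt (ENNReal.mul_ne_top (by simp) (e2_ne_top _)))
  set CF : ℝ≥0∞ := (n:ℝ≥0∞) ^ ((n:ℝ) - β * p) * (2 * B * C1 * C2) * 2 ^ p with hCF
  have hCFt : CF ≠ ⊤ := by
    refine ENNReal.mul_ne_top (ENNReal.mul_ne_top (ENNReal.rpow_ne_top_of_nonneg hτ.le (by simp))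
      (ENNReal.mul_ne_top (ENNReal.mul_ne_top (ENNReal.mul_ne_top (by simp) hBt) hC1t) hC2t))
      (ENNReal.rpow_ne_top_of_nonneg hp0.le (by simp))
  refine ⟨CF.toReal + 1, by positivity, fun g hg hgt => ?_⟩
  have hCFle : CF ≤ ENNReal.ofReal (CF.toReal + 1) := by
    rw [ENNReal.le_ofReal_iff_toReal_le hCFt (by positivity)]; linarith
  set w : ℤ → ℝ≥0∞ := fun j => volume (lev g j) with hw
  set a : ℤ → ℝ≥0∞ := fun j => e2 j * w j ^ (1/p) with ha
  set S := ∑' j, a j with hS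
  have hSle : S ≤ 2 * lorentzNorm p g := lorentz_sum hp g
  have hSt : S ≠ ⊤ := ne_top_of_le_ne_top (ENNReal.mul_ne_top (by simp) hgt) hSle
  have hwt : ∀ j, w j ≠ ⊤ := by
    intro j hj
    have h1 : a j ≤ S := ENNReal.le_tsum j
    apply hSt
    rw [eq_top_iff]
    refine le_trans ?_ h1
    simp only [ha]
    rw [hj, ENNReal.top_rpow_of_pos (by positivity), ENNReal.mul_top (e2_ne_zero _)]
  set c : ℤ → (Fin n → ℤ) → ℝ≥0∞ := fun k m =>
    (2 * B * C1 * S ^ (p-1)) * ∑' j, a j * (w j)⁻¹ * cc β p L (lev g j) k m with hc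
  have htotc : ∀ x, tot c x =
      (2 * B * C1 * S ^ (p-1)) * ∑' j, a j * (w j)⁻¹ * tot (cc β p L (lev g j)) x := by
    intro x
    simp only [tot, hc]
    rw [ENNReal.tsum_mul_left, ENNReal.tsum_comm]
    simp_rw [ENNReal.tsum_mul_left]
  have hmain : ∀ x, (∑' j : ℤ, e2 j * tot (uu β (lev g j)) x) ^ p ≤
      S ^ (p-1) * (C1 * ∑' j, a j * (w j)⁻¹ * tot (cc β p L (lev g j)) x) := by
    intro x
    set b : ℤ → ℝ≥0∞ := fun j => tot (uu β (lev g j)) x * (w j ^ (1/p))⁻¹ with hb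
    have h1 : ∀ j : ℤ, e2 j * tot (uu β (lev g j)) x ≤ a j * b j := by
      intro j
      by_cases h0 : w j = 0
      · have : tot (uu β (lev g j)) x = 0 := by
          simp only [tot, uu, ENNReal.tsum_eq_zero]
          intro k
          rw [measure_mono_null inter_subset_left h0, mul_zero]
        rw [this]; simp
      · have h2 : w j ^ (1/p) ≠ 0 := by
          rw [ne_eq, ENNReal.rpow_eq_zero_iff]; simp [h0, hwt j]
        have h3 : w j ^ (1/p) ≠ ⊤ := ENNReal.rpow_ne_top_of_nonneg (by positivity) (hwt j)
        apply le_of_eq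
        simp only [ha, hb]
        calc _ = e2 j * tot (uu β (lev g j)) x * (w j ^ (1/p) * (w j ^ (1/p))⁻¹) := by
              rw [ENNReal.mul_inv_cancel h2 h3, mul_one]
          _ = _ := by ring
    calc _ ≤ (∑' j, a j * b j) ^ p := by
          apply ENNReal.rpow_le_rpow _ hp0.le
          exact ENNReal.tsum_le_tsum h1
      _ ≤ S ^ (p-1) * ∑' j, a j * b j ^ p := holder_tsum hp a b
      _ ≤ S ^ (p-1) * ∑' j, C1 * (a j * (w j)⁻¹ * tot (cc β p L (lev g j)) x) := by
          gcongr S ^ (p-1) * ?_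
          apply ENNReal.tsum_le_tsum
          intro j
          simp only [hb]
          rw [ENNReal.mul_rpow_of_nonneg _ _ hp0.le, ENNReal.inv_rpow, ← ENNReal.rpow_mul,
            one_div_mul_cancel hp0.ne', ENNReal.rpow_one]
          calc _ ≤ a j * (C1 * tot (cc β p L (lev g j)) x * (w j)⁻¹) := by
                gcongr
                exact hC1 (lev g j) (hwt j) x
            _ = _ := by ring
      _ = _ := by rw [ENNReal.tsum_mul_left]
  have hsub : ∀ t ∈ Ioi (0:ℝ), hContent ((n : ℝ) - β * p)
            {x | ENNReal.ofReal (t ^ (1 / p)) ≤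
              maxFn (fun y => (‖rieszPot β g y‖₊ : ℝ≥0∞)) x} ≤
      hContent ((n : ℝ) - β * p) {x | ENNReal.ofReal t < tot c x} := by
    intro t (ht : 0 < t)
    apply hContent_mono
    intro x hx
    simp only [mem_setOf_eq] at hx ⊢
    have h1 : ENNReal.ofReal (t ^ (1/p)) ≤
        CM * (2 * e2 (n - β)) * ∑' j : ℤ, e2 j * tot (uu β (lev g j)) x := by
      refine (hx.trans (hCM g hg x)).trans ?_
      rw [mul_assoc]
      gcongr
      exact pot_le hβn hn g hg x
    have h2 : ENNReal.ofReal t ≤ B * (∑' j : ℤ, e2 j * tot (uu β (lev g j)) x) ^ p := by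
      calc ENNReal.ofReal t = ENNReal.ofReal (t ^ (1/p)) ^ p := by
            rw [← ENNReal.ofReal_rpow_of_pos ht, ← ENNReal.rpow_mul, one_div_mul_cancel hp0.ne',
              ENNReal.rpow_one]
        _ ≤ (CM * (2 * e2 (n - β)) * ∑' j : ℤ, e2 j * tot (uu β (lev g j)) x) ^ p := by gcongr
        _ = _ := ENNReal.mul_rpow_of_nonneg _ _ hp0.le
    calc ENNReal.ofReal t < 2 * ENNReal.ofReal t := by
          rw [two_mul]
          exact ENNReal.lt_add_right (by simp) (by simp [ht])
      _ ≤ 2 * (B * (S ^ (p-1) * (C1 * ∑' j, a j * (w j)⁻¹ * tot (cc β p L (lev g j)) x))) := by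
          gcongr
          refine h2.trans ?_
          gcongr
          exact hmain x
      _ = tot c x := by rw [htotc]; ring
  have hsum : ∑' q : ℤ × (Fin n → ℤ), c q.1 q.2 * e2 (q.1 * (n - β * p)) ≤
      (2 * B * C1 * S ^ (p-1)) * (C2 * S) := by
    calc _ = (2 * B * C1 * S ^ (p-1)) * ∑' j, a j * (w j)⁻¹ *
          ∑' q : ℤ × (Fin n → ℤ), cc β p L (lev g j) q.1 q.2 * e2 (q.1 * (n - β * p)) := by
          simp only [hc]
          simp_rw [mul_assoc (2 * B * C1 * S ^ (p-1)), ← ENNReal.tsum_mul_right]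
          rw [ENNReal.tsum_mul_left, ENNReal.tsum_comm]
          simp_rw [mul_assoc, ENNReal.tsum_mul_left]
      _ ≤ (2 * B * C1 * S ^ (p-1)) * ∑' j, C2 * a j := by
          gcongr (2 * B * C1 * S ^ (p-1)) * ?_
          apply ENNReal.tsum_le_tsum
          intro j
          calc _ ≤ a j * (w j)⁻¹ * (C2 * w j) := by
                gcongr a j * (w j)⁻¹ * ?_
                exact cc_sum hp L (lev g j)
            _ = C2 * a j * ((w j)⁻¹ * w j) := by ring
            _ ≤ C2 * a j * 1 := by
                gcongr
                exact ENNReal.inv_mul_le_one _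
            _ = _ := mul_one _
      _ = _ := by rw [ENNReal.tsum_mul_left]
  have hSp : S ^ (p-1) * S = S ^ p := by
    conv_lhs => rw [← ENNReal.rpow_one S, ← ENNReal.rpow_mul, one_mul]
    rw [← ENNReal.rpow_add_of_nonneg _ _ (by linarith) (by norm_num)]
    congr 1; ring
  calc _ ≤ ∫⁻ t in Ioi (0:ℝ), hContent ((n : ℝ) - β * p) {x | ENNReal.ofReal t < tot c x} :=
        setLIntegral_mono' measurableSet_Ioi hsub
    _ ≤ _ := choquet_tot hτ hn c
    _ ≤ (n:ℝ≥0∞) ^ ((n:ℝ) - β * p) * ((2 * B * C1 * S ^ (p-1)) * (C2 * S)) := by gcongr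
    _ = (n:ℝ≥0∞) ^ ((n:ℝ) - β * p) * (2 * B * C1 * C2) * (S ^ (p-1) * S) := by ring
    _ = (n:ℝ≥0∞) ^ ((n:ℝ) - β * p) * (2 * B * C1 * C2) * S ^ p := by rw [hSp]
    _ ≤ (n:ℝ≥0∞) ^ ((n:ℝ) - β * p) * (2 * B * C1 * C2) * (2 * lorentzNorm p g) ^ p := by gcongr
    _ = CF * (lorentzNorm p g) ^ p := by
        rw [ENNReal.mul_rpow_of_nonneg _ _ hp0.le, hCF]; ring
    _ ≤ _ := by gcongr
end

section
/- Let 1 ≤ l < k ≤ n be integers and τ = n − k + l. Then there is C = C(n, k, l) such that for every f ∈ W^{k,1}(ℝⁿ), ∫₀^∞ H^τ_∞({x ∈ ℝⁿ : M(∇^l f)(x) ≥ t}) dt ≤ C ‖∇^k f‖_{L¹(ℝⁿ)}. -/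
open MeasureTheory Metric Set
open scoped ENNReal NNReal

namespace AdamsAux

section partA
open Filter Topology

/-- Points of Euclidean space. -/
abbrev Eu (n : ℕ) := EuclideanSpace ℝ (Fin n)

/-- Indices of dyadic cubes: scale and integer corner. -/
abbrev DQ (n : ℕ) := ℤ × (Fin n → ℤ)

variable {n : ℕ}

/-- The dyadic cube of side `2^j` containing `x`. -/
noncomputable def qof (j : ℤ) (x : Eu n) : DQ n := (j, fun i => ⌊x i / (2 : ℝ) ^ j⌋)

/-- The dyadic cube as a set. -/
def cube (Q : DQ n) : Set (Eu n) := {x | qof Q.1 x = Q}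

/-- The `i`-th ancestor. -/
def anc (i : ℕ) (Q : DQ n) : DQ n := (Q.1 + i, fun m => Q.2 m / (2 : ℤ) ^ i)

/-- side length -/
noncomputable def len (j : ℤ) : ℝ≥0∞ := (2 : ℝ≥0∞) ^ j

lemma len_ne_zero (j : ℤ) : len j ≠ 0 := (ENNReal.zpow_pos (by norm_num) (by norm_num) j).ne'
lemma len_ne_top (j : ℤ) : len j ≠ ⊤ := ENNReal.zpow_ne_top (by norm_num) (by norm_num) j
lemma len_add (i j : ℤ) : len (i + j) = len i * len j := ENNReal.zpow_add (by norm_num) (by norm_num) i j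
lemma len_zero : len 0 = 1 := by simp [len]
lemma len_natCast (i : ℕ) : len i = 2 ^ i := by simp [len]
lemma len_eq_ofReal (j : ℤ) : len j = ENNReal.ofReal ((2 : ℝ) ^ j) := by
  have h : ((2 : ℝ≥0) : ℝ≥0∞) ^ j = (((2 : ℝ≥0) ^ j : ℝ≥0) : ℝ≥0∞) :=
    (ENNReal.coe_zpow (by norm_num) j).symm
  have h2 : (2 : ℝ) ^ j = (((2 : ℝ≥0) ^ j : ℝ≥0) : ℝ) := by push_cast; rfl
  rw [h2, ENNReal.ofReal_coe_nnreal, ← h]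
  rfl
lemma len_pow (j : ℤ) (d : ℕ) : len j ^ d = len (j * d) := by
  rw [len_eq_ofReal, len_eq_ofReal, ← ENNReal.ofReal_pow (by positivity), zpow_mul, zpow_natCast]
lemma len_mono {i j : ℤ} (h : i ≤ j) : len i ≤ len j :=
  ENNReal.zpow_le_of_le (by norm_num) h

lemma qof_add (j : ℤ) (i : ℕ) (x : Eu n) : qof (j + i) x = anc i (qof j x) := by
  unfold qof anc
  simp only [Prod.mk.injEq, true_and]
  funext m
  have := Int.floor_div_natCast (x m / (2:ℝ) ^ j) (2 ^ i)
  push_cast at this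
  rw [← this, div_div, zpow_add₀ (by norm_num), zpow_natCast]

lemma mem_cube_qof (j : ℤ) (x : Eu n) : x ∈ cube (qof j x) := rfl

lemma mem_cube_iff {Q : DQ n} {x : Eu n} :
    x ∈ cube Q ↔ ∀ i, (Q.2 i : ℝ) * 2 ^ Q.1 ≤ x i ∧ x i < ((Q.2 i : ℝ) + 1) * 2 ^ Q.1 := by
  obtain ⟨j, a⟩ := Q
  have h2 : (0 : ℝ) < 2 ^ j := by positivity
  simp only [cube, qof, mem_ofPred_eq, Prod.mk.injEq, true_and, funext_iff, Int.floor_eq_iff,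
    le_div_iff₀ h2, div_lt_iff₀ h2]

lemma cube_eq_preimage (Q : DQ n) : cube Q = (WithLp.ofLp : Eu n → Fin n → ℝ) ⁻¹'
    (univ.pi fun i => Ico ((Q.2 i : ℝ) * 2 ^ Q.1) (((Q.2 i : ℝ) + 1) * 2 ^ Q.1)) := by
  ext x
  simp [mem_cube_iff]

lemma measurableSet_cube (Q : DQ n) : MeasurableSet (cube Q) := by
  rw [cube_eq_preimage]
  exact (PiLp.volume_preserving_ofLp (Fin n)).measurable
    (MeasurableSet.univ_pi fun i => measurableSet_Ico)

lemma volume_cube (Q : DQ n) : volume (cube Q) = len Q.1 ^ n := by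
  rw [cube_eq_preimage, (PiLp.volume_preserving_ofLp (Fin n)).measure_preimage
    (MeasurableSet.univ_pi fun i => measurableSet_Ico).nullMeasurableSet, Real.volume_pi_Ico]
  simp only [add_mul, one_mul, add_sub_cancel_left, len_eq_ofReal]
  simp

lemma volume_cube_ne_zero (Q : DQ n) : volume (cube Q) ≠ 0 := by
  rw [volume_cube]; exact pow_ne_zero _ (len_ne_zero _)
lemma volume_cube_ne_top (Q : DQ n) : volume (cube Q) ≠ ⊤ := by
  rw [volume_cube]; exact ENNReal.pow_ne_top (len_ne_top _)

lemma convex_cube (Q : DQ n) : Convex ℝ (cube Q) := by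
  rw [cube_eq_preimage]
  exact (convex_pi fun i _ => convex_Ico _ _).is_linear_preimage
    (f := (WithLp.ofLp : Eu n → Fin n → ℝ)) ⟨fun _ _ => rfl, fun _ _ => rfl⟩

lemma norm_le_of_coord {x : Eu n} {b : ℝ} (h : ∀ i, |x i| ≤ b) : ‖x‖ ≤ n * b := by
  calc ‖x‖ ≤ ∑ i, ‖x i‖ := by
        have := EuclideanSpace.norm_eq x
        rw [this]
        apply Real.sqrt_le_iff.2 ⟨by positivity, ?_⟩
        exact Finset.sum_sq_le_sq_sum_of_nonneg fun i _ => norm_nonneg _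
    _ ≤ ∑ i : Fin n, b := Finset.sum_le_sum fun i _ => h i
    _ = n * b := by simp

lemma norm_sub_le_cube {Q : DQ n} {x y : Eu n} (hx : x ∈ cube Q) (hy : y ∈ cube Q) :
    ‖x - y‖ ≤ n * 2 ^ Q.1 := by
  apply norm_le_of_coord
  intro i
  have h1 := mem_cube_iff.1 hx i
  have h2 := mem_cube_iff.1 hy i
  simp only [PiLp.sub_apply, abs_le]
  constructor <;> linarith

lemma enorm_sub_le_cube {Q : DQ n} {x y : Eu n} (hx : x ∈ cube Q) (hy : y ∈ cube Q) :
    ‖x - y‖ₑ ≤ n * len Q.1 := by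
  rw [← ofReal_norm, len_eq_ofReal, ← ENNReal.ofReal_natCast, ← ENNReal.ofReal_mul (by simp)]
  exact ENNReal.ofReal_le_ofReal (norm_sub_le_cube hx hy)

lemma cube_subset_anc (i : ℕ) (Q : DQ n) : cube Q ⊆ cube (anc i Q) := by
  intro x hx
  have h : qof Q.1 x = Q := hx
  show qof (Q.1 + i) x = anc i Q
  rw [qof_add, h]

/-- sum of coefficients over the cubes containing `x` -/
noncomputable def phi (c : DQ n → ℝ≥0∞) (x : Eu n) : ℝ≥0∞ := ∑' j : ℤ, c (qof j x)

lemma phi_eq (c : DQ n → ℝ≥0∞) (x : Eu n) :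
    phi c x = ∑' Q : DQ n, c Q * (cube Q).indicator 1 x := by
  rw [ENNReal.tsum_prod', phi]
  congr 1 with j
  rw [tsum_eq_single (qof j x).2]
  · have : x ∈ cube (j, (qof j x).2) := mem_cube_qof j x
    simp only [indicator_of_mem this, Pi.one_apply, mul_one]
    rfl
  · intro a ha
    have : x ∉ cube (j, a) := by
      intro h
      apply ha
      have h' : qof j x = (j, a) := h
      rw [h']
    simp [this]

/-- total cost -/
noncomputable def cost (d : ℕ) (c : DQ n → ℝ≥0∞) : ℝ≥0∞ := ∑' Q : DQ n, c Q * len Q.1 ^ d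

/-- `h` is dominated by a superposition of dyadic cubes with cost at most `A`. -/
def NB (d : ℕ) (h : Eu n → ℝ≥0∞) (A : ℝ≥0∞) : Prop :=
  ∃ c : DQ n → ℝ≥0∞, (∀ x, h x ≤ phi c x) ∧ cost d c ≤ A

lemma NB.mono {d : ℕ} {h h' : Eu n → ℝ≥0∞} {A A' : ℝ≥0∞} (H : NB d h A) (h1 : ∀ x, h' x ≤ h x)
    (h2 : A ≤ A') : NB d h' A' := by
  obtain ⟨c, hc, hA⟩ := H
  exact ⟨c, fun x => (h1 x).trans (hc x), hA.trans h2⟩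

lemma NB.tsum {ι : Type*} {d : ℕ} {h : ι → Eu n → ℝ≥0∞} {A : ι → ℝ≥0∞}
    (H : ∀ i, NB d (h i) (A i)) : NB d (fun x => ∑' i, h i x) (∑' i, A i) := by
  choose c hc hA using H
  refine ⟨fun Q => ∑' i, c i Q, fun x => ?_, ?_⟩
  · calc ∑' i, h i x ≤ ∑' i, phi (c i) x := ENNReal.tsum_le_tsum fun i => hc i x
      _ = _ := by unfold phi; rw [ENNReal.tsum_comm]
  · calc cost d (fun Q => ∑' i, c i Q) = ∑' i, cost d (c i) := by
          unfold cost
          rw [ENNReal.tsum_comm]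
          congr 1 with Q
          rw [ENNReal.tsum_mul_right]
      _ ≤ _ := ENNReal.tsum_le_tsum hA

lemma NB.const_mul {d : ℕ} {h : Eu n → ℝ≥0∞} {A : ℝ≥0∞} (a : ℝ≥0∞) (H : NB d h A) :
    NB d (fun x => a * h x) (a * A) := by
  obtain ⟨c, hc, hA⟩ := H
  refine ⟨fun Q => a * c Q, fun x => ?_, ?_⟩
  · unfold phi
    rw [ENNReal.tsum_mul_left]
    exact mul_le_mul_right (hc x) a
  · unfold cost
    simp only [mul_assoc]
    rw [ENNReal.tsum_mul_left]
    exact mul_le_mul_right hA a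

lemma NB.cube (d : ℕ) (Q : DQ n) : NB d ((cube Q).indicator 1) (len Q.1 ^ d) := by
  classical
  refine ⟨fun R => if R = Q then 1 else 0, fun x => ?_, ?_⟩
  · by_cases hx : x ∈ AdamsAux.cube Q
    · rw [indicator_of_mem hx]
      refine le_trans ?_ (ENNReal.le_tsum Q.1)
      have : qof Q.1 x = Q := hx
      simp [this]
    · simp [hx]
  · unfold cost
    rw [tsum_eq_single Q]
    · simp
    · intro R hR
      simp [hR]

lemma NB.add {d : ℕ} {h h' : Eu n → ℝ≥0∞} {A A' : ℝ≥0∞} (H : NB d h A) (H' : NB d h' A') :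
    NB d (fun x => h x + h' x) (A + A') := by
  have := NB.tsum (ι := Bool) (h := fun b => if b then h else h') (A := fun b => if b then A else A')
    (d := d) (by rintro (_|_) <;> simpa)
  simpa [add_comm] using this

/-- Transfer principle. -/
lemma NB.transfer {d d' : ℕ} {c : DQ n → ℝ≥0∞} {K : DQ n → Eu n → ℝ≥0∞} {B A : ℝ≥0∞}
    (hc : cost d c ≤ A) (HK : ∀ Q, NB d' (K Q) (B * len Q.1 ^ d)) :
    NB d' (fun x => ∑' Q, c Q * K Q x) (B * A) := by
  refine (NB.tsum fun Q => (HK Q).const_mul (c Q)).mono (fun x => le_rfl) ?_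
  have : ∑' Q, c Q * (B * len Q.1 ^ d) = B * cost d c := by
    unfold cost
    rw [← ENNReal.tsum_mul_left]
    congr 1 with Q
    ring
  rw [this]
  gcongr

end partA

end AdamsAux

namespace AdamsAux

section partB
open Filter Topology
variable {n : ℕ}

/-- sum over strict ancestors -/
noncomputable def Sanc (c : DQ n → ℝ≥0∞) (Q : DQ n) : ℝ≥0∞ := ∑' i : ℕ, c (anc (i + 1) Q)

/-- interval of levels served by the cube `Q` -/
def lev (c : DQ n → ℝ≥0∞) (Q : DQ n) : Set ℝ :=
  {t | Sanc c Q ≤ ENNReal.ofReal t ∧ ENNReal.ofReal t < Sanc c Q + c Q}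

lemma measurableSet_lev (c : DQ n → ℝ≥0∞) (Q : DQ n) : MeasurableSet (lev c Q) :=
  (measurableSet_le measurable_const ENNReal.measurable_ofReal).inter
    (measurableSet_lt ENNReal.measurable_ofReal measurable_const)

lemma volume_lev_le (c : DQ n → ℝ≥0∞) (Q : DQ n) : volume (lev c Q ∩ Ioi 0) ≤ c Q := by
  by_cases hc : c Q = ⊤
  · simp [hc]
  by_cases hS : Sanc c Q = ⊤
  · have : lev c Q = ∅ := by
      ext t
      simp [lev, hS]
    simp [this]
  have hsub : lev c Q ∩ Ioi 0 ⊆ Ico (Sanc c Q).toReal ((Sanc c Q).toReal + (c Q).toReal) := by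
    rintro t ⟨⟨h1, h2⟩, h3⟩
    have h3' : (0 : ℝ) < t := h3
    refine ⟨ENNReal.toReal_le_of_le_ofReal h3'.le h1, ?_⟩
    rw [← ENNReal.toReal_add hS hc]
    exact (ENNReal.ofReal_lt_iff_lt_toReal h3'.le (by simp [hS, hc])).1 h2
  refine (measure_mono hsub).trans ?_
  rw [Real.volume_Ico, add_sub_cancel_left, ENNReal.ofReal_toReal hc]

lemma Sanc_qof (c : DQ n → ℝ≥0∞) (j : ℤ) (x : Eu n) :
    Sanc c (qof j x) = ∑' i : ℕ, c (qof (j + 1 + i) x) := by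
  unfold Sanc
  congr 1 with i
  rw [← qof_add]
  push_cast
  congr 2
  ring

lemma T_succ (c : DQ n → ℝ≥0∞) (j : ℤ) (x : Eu n) :
    ∑' i : ℕ, c (qof (j + i) x) = Sanc c (qof j x) + c (qof j x) := by
  rw [tsum_eq_zero_add' ENNReal.summable, Sanc_qof, add_comm]
  simp only [Nat.cast_zero, add_zero]
  congr 3 with i
  push_cast
  congr 2
  ring

lemma exists_lev {d : ℕ} (hd : 1 ≤ d) (c : DQ n → ℝ≥0∞) (hc : cost d c ≠ ⊤) (x : Eu n) {t : ℝ}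
    (ht : 0 < t) (htx : ENNReal.ofReal t < phi c x) : ∃ j : ℤ, t ∈ lev c (qof j x) := by
  set T : ℤ → ℝ≥0∞ := fun j => ∑' i : ℕ, c (qof (j + i) x) with hT
  have hex : ∃ j, ENNReal.ofReal t < T j := by
    unfold phi at htx
    rw [ENNReal.tsum_eq_iSup_sum] at htx
    obtain ⟨s, hs⟩ := lt_iSup_iff.1 htx
    obtain ⟨j, hj⟩ := s.bddBelow
    refine ⟨j, hs.trans_le ?_⟩
    have hinj : Set.InjOn (fun m : ℤ => (m - j).toNat) s := by
      intro a ha b hb hab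
      have h1 := hj ha
      have h2 := hj hb
      simp only at hab
      omega
    calc ∑ m ∈ s, c (qof m x) = ∑ m ∈ s, c (qof (j + ((m - j).toNat : ℕ)) x) := by
          refine Finset.sum_congr rfl fun m hm => ?_
          have h1 := hj hm
          congr 2
          omega
      _ = ∑ i ∈ s.image (fun m : ℤ => (m - j).toNat), c (qof (j + i) x) := by
          rw [Finset.sum_image hinj]
      _ ≤ T j := ENNReal.sum_le_tsum _
  have hcQ : ∀ Q : DQ n, 0 ≤ Q.1 → c Q ≤ cost d c * len (-Q.1) := by
    intro Q hQ
    have h1 : c Q * len Q.1 ^ d ≤ cost d c := ENNReal.le_tsum (f := fun Q : DQ n => c Q * len Q.1 ^ d) Q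
    have h2 : len (Q.1) * len (-Q.1) = 1 := by rw [← len_add]; simp [len_zero]
    have h3 : len Q.1 ≤ len Q.1 ^ d := by
      conv_lhs => rw [← pow_one (len Q.1)]
      exact pow_le_pow_right₀ (by rw [← len_zero]; exact len_mono hQ) hd
    calc c Q = c Q * len Q.1 * len (-Q.1) := by rw [mul_assoc, h2, mul_one]
      _ ≤ c Q * len Q.1 ^ d * len (-Q.1) := by gcongr
      _ ≤ _ := by gcongr
  have hTle : ∀ j : ℕ, T j ≤ 2 * cost d c * (2⁻¹) ^ j := by
    intro j
    calc T j ≤ ∑' i : ℕ, cost d c * ((2⁻¹) ^ j * (2⁻¹) ^ i) := by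
          refine ENNReal.tsum_le_tsum fun i => (hcQ _ (by simp only [qof]; positivity)).trans ?_
          simp only [qof]
          rw [neg_add, len_add]
          simp only [len, zpow_natCast, ENNReal.inv_pow, ENNReal.zpow_neg]
          exact le_rfl
      _ = _ := by
          rw [ENNReal.tsum_mul_left, ENNReal.tsum_mul_left, ENNReal.tsum_geometric,
            ENNReal.one_sub_inv_two, inv_inv]
          ring
  have hbd : ∃ b : ℤ, ∀ z : ℤ, ENNReal.ofReal t < T z → z ≤ b := by
    have hlim : Tendsto (fun j : ℕ => 2 * cost d c * (2⁻¹ : ℝ≥0∞) ^ j) atTop (𝓝 (2 * cost d c * 0)) :=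
      ENNReal.Tendsto.const_mul (ENNReal.tendsto_pow_atTop_nhds_zero_of_lt_one (by simp))
        (Or.inr (ENNReal.mul_ne_top (by simp) hc))
    rw [mul_zero] at hlim
    obtain ⟨b, hb⟩ := (eventually_atTop.1 (hlim.eventually_lt_const (ENNReal.ofReal_pos.2 ht)))
    refine ⟨b, fun z hz => ?_⟩
    by_contra hlt
    push Not at hlt
    lift z to ℕ using (by omega)
    have := hb z (by omega)
    exact absurd (hz.trans_le (hTle z)) (not_lt.2 this.le)
  obtain ⟨j, hj1, hj2⟩ := Int.exists_greatest_of_bdd hbd hex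
  refine ⟨j, ?_, ?_⟩
  · rw [Sanc_qof]
    by_contra hlt
    push Not at hlt
    have := hj2 (j + 1) hlt
    omega
  · rw [← T_succ]
    exact hj1

lemma ediam_cube_le (Q : DQ n) : Metric.ediam (cube Q) ≤ n * len Q.1 := by
  refine Metric.ediam_le fun x hx y hy => ?_
  rw [edist_eq_enorm_sub]
  exact enorm_sub_le_cube hx hy

lemma choquet_le {d : ℕ} (hn : 1 ≤ n) (hd : 1 ≤ d) {h : Eu n → ℝ≥0∞} {A : ℝ≥0∞} (H : NB d h A) :
    ∫⁻ t in Set.Ioi (0 : ℝ), hContent (d : ℝ) {x | ENNReal.ofReal t ≤ h x} ≤ 2 * (n : ℝ≥0∞) ^ d * A := by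
  classical
  by_cases hA : A = ⊤
  · rw [hA, ENNReal.mul_top]
    · exact le_top
    · have : (n : ℝ≥0∞) ≠ 0 := by simp; omega
      positivity
  obtain ⟨c, hc, hcA⟩ := H.const_mul 2
  have hcf : cost d c ≠ ⊤ := ne_top_of_le_ne_top (ENNReal.mul_ne_top (by simp) hA) hcA
  have hd0 : (0 : ℝ) < d := by exact_mod_cast hd
  have key : ∀ t ∈ Ioi (0 : ℝ), hContent (d : ℝ) {x | ENNReal.ofReal t ≤ h x} ≤
      ∑' Q : DQ n, (lev c Q).indicator (fun _ => ((n : ℝ≥0∞) * len Q.1) ^ d) t := by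
    intro t ht
    obtain ⟨e⟩ := nonempty_denumerable (DQ n)
    let ee : DQ n ≃ ℕ := Denumerable.eqv (DQ n)
    let g : DQ n → Set (Eu n) := fun Q => if t ∈ lev c Q then cube Q else ∅
    have hcov : {x | ENNReal.ofReal t ≤ h x} ⊆ ⋃ i, g (ee.symm i) := by
      intro x hx
      have hx' : ENNReal.ofReal t ≤ h x := hx
      have hlt : ENNReal.ofReal t < phi c x := by
        by_cases hp : phi c x = ⊤
        · rw [hp]; exact ENNReal.ofReal_lt_top
        · have h2 : 2 * h x ≤ phi c x := hc x
          have hht : h x ≠ ⊤ := by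
            intro h3
            rw [h3] at h2
            simp at h2
            exact hp h2
          have hpos : 0 < h x := (ENNReal.ofReal_pos.2 ht).trans_le hx'
          calc ENNReal.ofReal t ≤ h x := hx'
            _ < h x + h x := ENNReal.lt_add_right hht hpos.ne'
            _ = 2 * h x := (two_mul _).symm
            _ ≤ _ := h2
      obtain ⟨j, hj⟩ := exists_lev hd c hcf x ht hlt
      refine mem_iUnion.2 ⟨ee (qof j x), ?_⟩
      simp only [g, Equiv.symm_apply_apply, if_pos hj]
      exact mem_cube_qof j x
    calc hContent (d : ℝ) {x | ENNReal.ofReal t ≤ h x} ≤ ∑' i, Metric.ediam (g (ee.symm i)) ^ (d : ℝ) :=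
          iInf₂_le (fun i => g (ee.symm i)) hcov
      _ = ∑' Q, Metric.ediam (g Q) ^ (d : ℝ) := ee.symm.tsum_eq (fun Q => Metric.ediam (g Q) ^ (d : ℝ))
      _ ≤ _ := by
          refine ENNReal.tsum_le_tsum fun Q => ?_
          by_cases hQ : t ∈ lev c Q
          · simp only [g, if_pos hQ, indicator_of_mem hQ, ENNReal.rpow_natCast]
            gcongr
            exact ediam_cube_le Q
          · simp only [g, if_neg hQ, indicator_of_notMem hQ]
            rw [Metric.ediam_empty, ENNReal.zero_rpow_of_pos hd0]
  calc ∫⁻ t in Set.Ioi (0 : ℝ), hContent (d : ℝ) {x | ENNReal.ofReal t ≤ h x}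
      ≤ ∫⁻ t in Set.Ioi (0 : ℝ), ∑' Q : DQ n, (lev c Q).indicator (fun _ => ((n : ℝ≥0∞) * len Q.1) ^ d) t :=
        setLIntegral_mono' measurableSet_Ioi key
    _ = ∑' Q : DQ n, ∫⁻ t in Set.Ioi (0 : ℝ), (lev c Q).indicator (fun _ => ((n : ℝ≥0∞) * len Q.1) ^ d) t :=
        lintegral_tsum fun Q => (measurable_const.indicator (measurableSet_lev c Q)).aemeasurable
    _ ≤ ∑' Q : DQ n, (n : ℝ≥0∞) ^ d * (c Q * len Q.1 ^ d) := by
        refine ENNReal.tsum_le_tsum fun Q => ?_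
        rw [lintegral_indicator (measurableSet_lev c Q), lintegral_const, Measure.restrict_restrict
          (measurableSet_lev c Q), Measure.restrict_apply_univ, mul_pow, mul_assoc, mul_comm (c Q)]
        gcongr
        exact volume_lev_le c Q
    _ = (n : ℝ≥0∞) ^ d * cost d c := by rw [ENNReal.tsum_mul_left]; rfl
    _ ≤ (n : ℝ≥0∞) ^ d * (2 * A) := by gcongr
    _ = _ := by ring

end partB

end AdamsAux

namespace AdamsAux

section partC
open Filter Topology
variable {n : ℕ}

lemma len_inv (j : ℤ) : (len j)⁻¹ = len (-j) := by
  simp [len, ENNReal.zpow_neg]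

lemma tsum_len_neg : ∑' i : ℕ, len (-(i : ℤ)) = 2 := by
  simp only [← len_inv, len_natCast, ENNReal.inv_pow]
  rw [ENNReal.tsum_geometric, ENNReal.one_sub_inv_two, inv_inv]

lemma setLIntegral_phi (c : DQ n → ℝ≥0∞) (s : Set (Eu n)) :
    ∫⁻ x in s, phi c x = ∑' Q, c Q * volume (cube Q ∩ s) := by
  simp only [phi_eq]
  rw [lintegral_tsum]
  · congr 1 with Q
    rw [lintegral_const_mul _ (measurable_one.indicator (measurableSet_cube Q)),
      lintegral_indicator_one (measurableSet_cube Q), Measure.restrict_apply (measurableSet_cube Q)]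
  · intro Q
    exact ((measurable_one.indicator (measurableSet_cube Q)).const_mul _).aemeasurable

/-- neighbouring cube -/
def shiftQ (Q : DQ n) (ε : Fin n → Fin 3) : DQ n := (Q.1, fun m => Q.2 m + ((ε m : ℕ) : ℤ) - 1)

lemma exists_shift {Q : DQ n} {x y : Eu n} (i : ℕ) (hy : y ∈ cube Q)
    (hxy : ‖x - y‖ < 2 ^ (Q.1 + i)) : ∃ ε, x ∈ cube (shiftQ (anc i Q) ε) := by
  have hy' : qof (Q.1 + i) y = anc i Q := by
    have h : qof Q.1 y = Q := hy
    rw [qof_add, h]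
  have hP : (0 : ℝ) < 2 ^ (Q.1 + i) := by positivity
  have hfl : ∀ m, ∃ e : Fin 3, ⌊x m / (2:ℝ) ^ (Q.1 + i)⌋ = ⌊y m / (2:ℝ) ^ (Q.1 + i)⌋ + ((e : ℕ) : ℤ) - 1 := by
    intro m
    have h1 : |x m - y m| < 2 ^ (Q.1 + i) := by
      refine lt_of_le_of_lt ?_ hxy
      have := PiLp.norm_apply_le (x - y) m
      simpa using this
    have h2 : |x m / (2:ℝ) ^ (Q.1 + i) - y m / (2:ℝ) ^ (Q.1 + i)| < 1 := by
      rw [← sub_div, abs_div, abs_of_pos hP, div_lt_one hP]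
      exact h1
    rw [abs_lt] at h2
    have a1 := Int.floor_le (x m / (2:ℝ) ^ (Q.1 + i))
    have a2 := Int.lt_floor_add_one (x m / (2:ℝ) ^ (Q.1 + i))
    have a3 := Int.floor_le (y m / (2:ℝ) ^ (Q.1 + i))
    have a4 := Int.lt_floor_add_one (y m / (2:ℝ) ^ (Q.1 + i))
    set p := ⌊x m / (2:ℝ) ^ (Q.1 + i)⌋
    set q := ⌊y m / (2:ℝ) ^ (Q.1 + i)⌋
    have b1 : p < q + 2 := by
      have : (p : ℝ) < (q + 2 : ℤ) := by push_cast; linarith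
      exact_mod_cast this
    have b2 : q < p + 2 := by
      have : (q : ℝ) < (p + 2 : ℤ) := by push_cast; linarith
      exact_mod_cast this
    refine ⟨⟨(p - q + 1).toNat, by omega⟩, ?_⟩
    simp only
    omega
  choose ε hε using hfl
  refine ⟨ε, ?_⟩
  show qof (Q.1 + i) x = shiftQ (anc i Q) ε
  rw [← hy']
  unfold qof shiftQ
  simp only [Prod.mk.injEq, true_and]
  funext m
  exact hε m

/-- kernel for the maximal function of a cube -/
noncomputable def KM (C : ℝ≥0∞) (Q : DQ n) (x : Eu n) : ℝ≥0∞ :=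
  ∑' i : ℕ, ∑' ε : Fin n → Fin 3, C * len (-(i * n : ℤ)) * (cube (shiftQ (anc i Q) ε)).indicator 1 x

/-- constant -/
noncomputable def CM (n : ℕ) : ℝ≥0∞ := 1 + len n * (volume (ball (0 : Eu n) 1))⁻¹

lemma CM_ne_top : CM n ≠ ⊤ := by
  unfold CM
  refine ENNReal.add_ne_top.2 ⟨by simp, ENNReal.mul_ne_top (len_ne_top _) ?_⟩
  rw [ENNReal.inv_ne_top]
  exact (measure_ball_pos _ _ one_pos).ne'

lemma volume_ball_len (hn : 1 ≤ n) (x : Eu n) (j : ℤ) :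
    volume (ball x ((2:ℝ) ^ j)) = len (j * n) * volume (ball (0 : Eu n) 1) := by
  have : Nonempty (Fin n) := ⟨⟨0, hn⟩⟩
  rw [Measure.addHaar_ball _ _ (by positivity), finrank_euclideanSpace_fin, ← len_pow, len_eq_ofReal,
    ENNReal.ofReal_pow (by positivity)]

lemma ball_inter_le (hn : 1 ≤ n) (Q : DQ n) (x : Eu n) (r : ℝ) :
    volume (cube Q ∩ ball x r) ≤ KM (CM n) Q x * volume (ball x r) := by
  by_cases hne : (cube Q ∩ ball x r).Nonempty
  swap
  · rw [not_nonempty_iff_eq_empty] at hne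
    simp [hne]
  obtain ⟨y, hy, hyr⟩ := hne
  have hyr' : ‖x - y‖ < r := by
    rw [mem_ball, dist_comm, dist_eq_norm] at hyr; exact hyr
  have hex : ∃ i : ℕ, r ≤ 2 ^ (Q.1 + i) := by
    obtain ⟨i, hi⟩ := pow_unbounded_of_one_lt (r / 2 ^ Q.1) (one_lt_two)
    refine ⟨i, ?_⟩
    rw [zpow_add₀ (by norm_num), zpow_natCast]
    rw [div_lt_iff₀ (by positivity)] at hi
    linarith
  classical
  set i := Nat.find hex with hi
  have hi1 : r ≤ 2 ^ (Q.1 + i) := Nat.find_spec hex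
  obtain ⟨ε, hε⟩ := exists_shift (x := x) i hy (hyr'.trans_le hi1)
  have hK : CM n * len (-(i * n : ℤ)) ≤ KM (CM n) Q x := by
    unfold KM
    refine le_trans ?_ (ENNReal.le_tsum i)
    refine le_trans ?_ (ENNReal.le_tsum ε)
    rw [indicator_of_mem hε]
    simp
  refine le_trans ?_ (mul_le_mul_left hK _)
  rcases Nat.eq_zero_or_pos i with h0 | hpos
  · rw [h0]
    simp only [Nat.cast_zero, zero_mul, neg_zero, len_zero, mul_one]
    calc volume (cube Q ∩ ball x r) ≤ 1 * volume (ball x r) := by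
          rw [one_mul]; exact measure_mono inter_subset_right
      _ ≤ _ := by
          gcongr
          unfold CM
          exact le_self_add
  · have hlt : (2:ℝ) ^ (Q.1 + i - 1) ≤ r := by
      have := Nat.find_min hex (m := i - 1) (by omega)
      push Not at this
      have e : Q.1 + ((i - 1 : ℕ) : ℤ) = Q.1 + i - 1 := by push_cast [Nat.cast_sub hpos]; ring
      rw [e] at this
      exact this.le
    have hω0 : volume (ball (0 : Eu n) 1) ≠ 0 := (measure_ball_pos _ _ one_pos).ne'
    have hωt : volume (ball (0 : Eu n) 1) ≠ ⊤ := measure_ball_lt_top.ne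
    calc volume (cube Q ∩ ball x r) ≤ volume (cube Q) := measure_mono inter_subset_left
      _ = len (Q.1 * n) := by rw [volume_cube, len_pow]
      _ = len n * len (-(i * n : ℤ)) * len ((Q.1 + i - 1) * n) := by
          rw [← len_add, ← len_add]; congr 1; ring
      _ = len n * (volume (ball (0 : Eu n) 1))⁻¹ * len (-(i * n : ℤ)) *
            (len ((Q.1 + i - 1) * n) * volume (ball (0 : Eu n) 1)) := by
          have := ENNReal.inv_mul_cancel hω0 hωt
          calc _ = len n * len (-(i * n : ℤ)) * len ((Q.1 + i - 1) * n) *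
              ((volume (ball (0 : Eu n) 1))⁻¹ * volume (ball (0 : Eu n) 1)) := by rw [this, mul_one]
            _ = _ := by ring
      _ ≤ CM n * len (-(i * n : ℤ)) * volume (ball x r) := by
          rw [← volume_ball_len hn x]
          have h1 : len n * (volume (ball (0 : Eu n) 1))⁻¹ ≤ CM n := le_add_self
          have h2 : volume (ball x ((2:ℝ) ^ (Q.1 + i - 1))) ≤ volume (ball x r) :=
            measure_mono (ball_subset_ball hlt)
          gcongr

lemma NB_KM {d : ℕ} (hd : d < n) (C : ℝ≥0∞) (Q : DQ n) :
    NB d (KM C Q) (2 * 3 ^ n * C * len Q.1 ^ d) := by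
  unfold KM
  refine (NB.tsum fun i : ℕ => NB.tsum fun ε : Fin n → Fin 3 =>
    (NB.cube d (shiftQ (anc i Q) ε)).const_mul (C * len (-(i * n : ℤ)))).mono (fun x => le_rfl) ?_
  have : ∀ (i : ℕ) (ε : Fin n → Fin 3), C * len (-(i * n : ℤ)) * len (shiftQ (anc i Q) ε).1 ^ d
      ≤ C * len Q.1 ^ d * len (-(i : ℤ)) := by
    intro i ε
    have e : (shiftQ (anc i Q) ε).1 = Q.1 + i := rfl
    rw [e, len_pow, len_pow, mul_assoc, mul_assoc, ← len_add, ← len_add]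
    gcongr
    apply len_mono
    have : (i : ℤ) * (d + 1) ≤ i * n := by
      have : (d : ℤ) + 1 ≤ n := by exact_mod_cast hd
      gcongr
    linarith
  calc _ ≤ ∑' i : ℕ, ∑' ε : Fin n → Fin 3, C * len Q.1 ^ d * len (-(i : ℤ)) :=
        ENNReal.tsum_le_tsum fun i => ENNReal.tsum_le_tsum fun ε => this i ε
    _ = _ := by
        simp only [tsum_fintype, Finset.sum_const, Finset.card_univ, Fintype.card_pi, Fintype.card_fin,
          Finset.prod_const, nsmul_eq_mul]
        rw [ENNReal.tsum_mul_left, ENNReal.tsum_mul_left, tsum_len_neg]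
        push_cast
        ring

lemma NB_maxFn {d : ℕ} (hd : d < n) {h : Eu n → ℝ≥0∞} {A : ℝ≥0∞} (H : NB d h A) :
    NB d (maxFn h) (2 * 3 ^ n * CM n * A) := by
  obtain ⟨c, hc, hA⟩ := H
  refine (NB.transfer hA (fun Q => NB_KM hd (CM n) Q)).mono (fun x => ?_) le_rfl
  unfold maxFn
  refine iSup₂_le fun r _ => ENNReal.div_le_of_le_mul ?_
  calc ∫⁻ y in ball x r, h y ≤ ∫⁻ y in ball x r, phi c y := lintegral_mono fun y => hc y
    _ = ∑' Q, c Q * volume (cube Q ∩ ball x r) := setLIntegral_phi c _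
    _ ≤ ∑' Q, c Q * KM (CM n) Q x * volume (ball x r) := by
        refine ENNReal.tsum_le_tsum fun Q => ?_
        rw [mul_assoc]
        gcongr
        exact ball_inter_le (by omega) Q x r
    _ = _ := ENNReal.tsum_mul_right

/-- dyadic Riesz kernel of a cube -/
noncomputable def KR (R : DQ n) (x : Eu n) : ℝ≥0∞ :=
  ∑' j : ℤ, len j * (len j ^ n)⁻¹ * volume (cube R ∩ cube (qof j x))

lemma tsum_int_le (f : ℤ → ℝ≥0∞) (j : ℤ) :
    ∑' i, f i = ∑' i : ℕ, f (j + i) + ∑' i : ℕ, f (j - 1 - i) := by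
  rw [← (Equiv.addLeft j).tsum_eq f, tsum_of_nat_of_neg_add_one ENNReal.summable ENNReal.summable]
  congr 1
  congr 1 with i
  simp only [Equiv.coe_addLeft]
  congr 1
  ring

lemma NB_KR {d : ℕ} (hd : d + 1 < n) (R : DQ n) : NB d (KR R) (3 * len R.1 ^ (d + 1)) := by
  have h1 : NB d (fun x => len R.1 * (cube R).indicator 1 x) (len R.1 * len R.1 ^ d) :=
    (NB.cube d R).const_mul _
  have h2 : NB d (fun x => ∑' i : ℕ, (len (R.1 + i) * (len (R.1 + i) ^ n)⁻¹ * len R.1 ^ n) *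
      (cube (anc i R)).indicator 1 x) (∑' i : ℕ, (len (R.1 + i) * (len (R.1 + i) ^ n)⁻¹ * len R.1 ^ n) *
        len (R.1 + i) ^ d) :=
    NB.tsum fun i : ℕ => (NB.cube d (anc i R)).const_mul _
  refine (h2.add h1).mono (fun x => ?_) ?_
  · unfold KR
    rw [tsum_int_le _ R.1]
    refine add_le_add ?_ ?_
    · refine ENNReal.tsum_le_tsum fun i => ?_
      rw [mul_assoc _ (len R.1 ^ n)]
      gcongr
      by_cases hne : (cube R ∩ cube (qof (R.1 + i) x)).Nonempty
      · obtain ⟨y, hy, hy'⟩ := hne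
        have e1 : qof R.1 y = R := hy
        have e2 : qof (R.1 + i) y = qof (R.1 + i) x := hy'
        have hx : x ∈ cube (anc i R) := by
          show qof (R.1 + i) x = anc i R
          rw [← e2, qof_add, e1]
        rw [indicator_of_mem hx, Pi.one_apply, mul_one, ← volume_cube]
        exact measure_mono inter_subset_left
      · rw [not_nonempty_iff_eq_empty] at hne
        simp [hne]
    · by_cases hx : x ∈ cube R
      · rw [indicator_of_mem hx, Pi.one_apply, mul_one]
        calc _ ≤ ∑' i : ℕ, len (R.1 - 1) * len (-(i : ℤ)) := by
              refine ENNReal.tsum_le_tsum fun i => ?_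
              rw [← len_add, mul_assoc, ← sub_eq_add_neg]
              calc _ ≤ len (R.1 - 1 - i) * ((len (R.1 - 1 - i) ^ n)⁻¹ * len (R.1 - 1 - i) ^ n) := by
                    gcongr
                    refine (measure_mono inter_subset_right).trans ?_
                    rw [volume_cube]
                    exact le_rfl
                _ = _ := by
                    rw [ENNReal.inv_mul_cancel (pow_ne_zero _ (len_ne_zero _))
                      (ENNReal.pow_ne_top (len_ne_top _)), mul_one]
          _ = len (R.1 - 1) * len 1 := by
              rw [ENNReal.tsum_mul_left, tsum_len_neg]
              congr 1
              simp [len]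
          _ = len R.1 := by rw [← len_add]; congr 1; ring
          _ ≤ _ := le_rfl
      · rw [indicator_of_notMem hx, mul_zero]
        refine le_of_eq (ENNReal.tsum_eq_zero.2 fun i => ?_)
        have : cube R ∩ cube (qof (R.1 - 1 - i) x) = ∅ := by
          by_contra hne
          obtain ⟨y, hy, hy'⟩ := nonempty_iff_ne_empty.2 hne
          apply hx
          have e1 : qof R.1 y = R := hy
          have e2 : qof (R.1 - 1 - i) y = qof (R.1 - 1 - i) x := hy'
          have e3 : R.1 = R.1 - 1 - i + ((i + 1 : ℕ) : ℤ) := by push_cast; ring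
          show qof R.1 x = R
          rw [← e1]
          rw [show (qof R.1 y).1 = R.1 from rfl]
          rw [e3, qof_add, ← e2, ← qof_add]
        rw [this]
        simp
  · have : ∀ i : ℕ, (len (R.1 + i) * (len (R.1 + i) ^ n)⁻¹ * len R.1 ^ n) * len (R.1 + i) ^ d ≤
        len R.1 ^ (d + 1) * len (-(i : ℤ)) := by
      intro i
      simp only [len_pow, len_inv, ← len_add]
      apply len_mono
      have h1 : (d : ℤ) + 1 + 1 ≤ n := by exact_mod_cast hd
      have : (i : ℤ) * (d + 1 + 1) ≤ i * n := by gcongr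
      push_cast
      linarith
    calc _ ≤ ∑' i : ℕ, len R.1 ^ (d + 1) * len (-(i : ℤ)) + len R.1 ^ (d + 1) := by
          refine add_le_add (ENNReal.tsum_le_tsum this) (le_of_eq ?_)
          ring
      _ = _ := by
          rw [ENNReal.tsum_mul_left, tsum_len_neg]
          ring

lemma NB_riesz {d : ℕ} (hd : d + 1 < n) {u v : Eu n → ℝ≥0∞} {A C : ℝ≥0∞} (H : NB (d + 1) v A)
    (huv : ∀ x, u x ≤ C * ∑' j : ℤ, len j * (len j ^ n)⁻¹ * ∫⁻ y in cube (qof j x), v y) :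
    NB d u (C * (3 * A)) := by
  obtain ⟨c, hc, hA⟩ := H
  refine ((NB.transfer hA (fun Q => NB_KR hd Q)).const_mul C).mono (fun x => ?_) le_rfl
  refine (huv x).trans ?_
  refine mul_le_mul_right ?_ C
  calc _ ≤ ∑' j : ℤ, len j * (len j ^ n)⁻¹ * ∑' Q, c Q * volume (cube Q ∩ cube (qof j x)) := by
        refine ENNReal.tsum_le_tsum fun j => ?_
        rw [← setLIntegral_phi]
        gcongr
        exact hc _
    _ = _ := by
        unfold KR
        simp only [← ENNReal.tsum_mul_left]
        rw [ENNReal.tsum_comm]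
        congr 1 with Q
        congr 1 with j
        ring

end partC

end AdamsAux

namespace AdamsAux

section partD
open Filter Topology
variable {n : ℕ} {F : Type*} [NormedAddCommGroup F] [NormedSpace ℝ F] [CompleteSpace F]

lemma lintegral_affine (H : Eu n → ℝ≥0∞) (hH : Measurable H) {a : ℝ} (ha : 1 / 2 ≤ a) (b : Eu n) :
    ∫⁻ y, H (a • y + b) ≤ 2 ^ n * ∫⁻ y, H y := by
  have ha0 : 0 < a := by linarith
  have h1 : ∫⁻ y, H (a • y + b) = ENNReal.ofReal |(a ^ n)⁻¹| * ∫⁻ y, H y := by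
    have e1 : ∫⁻ y, H (a • y + b) = ∫⁻ z, H (z + b) ∂(Measure.map (fun x : Eu n => a • x) volume) := by
      have hm : Measurable fun z : Eu n => H (z + b) := hH.comp (measurable_id.add_const b)
      rw [lintegral_map hm (measurable_const_smul a)]
    rw [e1, Measure.map_addHaar_smul _ ha0.ne', finrank_euclideanSpace_fin, lintegral_smul_measure,
      lintegral_add_right_eq_self]
    rfl
  rw [h1]
  gcongr
  rw [abs_of_pos (by positivity)]
  have : (a ^ n)⁻¹ ≤ 2 ^ n := by
    rw [← inv_pow]
    gcongr
    rw [inv_le_comm₀ ha0 (by norm_num)]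
    linarith
  calc ENNReal.ofReal (a ^ n)⁻¹ ≤ ENNReal.ofReal (2 ^ n) := ENNReal.ofReal_le_ofReal this
    _ = 2 ^ n := by rw [ENNReal.ofReal_pow (by norm_num)]; norm_num

lemma setLIntegral_affine (Q : DQ n) (G : Eu n → ℝ≥0∞) (hG : Measurable G) {a : ℝ} (ha : 1 / 2 ≤ a)
    (ha1 : a ≤ 1) {z : Eu n} (hz : z ∈ cube Q) :
    ∫⁻ y in cube Q, G (a • y + (1 - a) • z) ≤ 2 ^ n * ∫⁻ y in cube Q, G y := by
  have hm := measurableSet_cube Q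
  rw [← lintegral_indicator hm, ← lintegral_indicator hm]
  refine le_trans (lintegral_mono fun y => ?_) (lintegral_affine _ (hG.indicator hm) ha ((1 - a) • z))
  by_cases hy : y ∈ cube Q
  · have : a • y + (1 - a) • z ∈ cube Q := convex_cube Q hy hz (by linarith) (by linarith) (by ring)
    rw [indicator_of_mem hy, indicator_of_mem this]
  · simp [hy]

lemma enorm_sub_le_seg {w : Eu n → F} (hw : ContDiff ℝ 1 w) (x y : Eu n) :
    ‖w x - w y‖ₑ ≤ ∫⁻ t in Ioc (0 : ℝ) 1, ‖x - y‖ₑ * ‖fderiv ℝ w (x + t • (y - x))‖ₑ := by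
  have hd : Differentiable ℝ w := hw.differentiable (by norm_num)
  have hc : Continuous (fderiv ℝ w) := hw.continuous_fderiv (by norm_num)
  have h1 : ∀ t ∈ uIcc (0 : ℝ) 1, HasDerivAt (fun t : ℝ => w (x + t • (y - x)))
      (fderiv ℝ w (x + t • (y - x)) (y - x)) t := by
    intro t _
    have hl : HasDerivAt (fun t : ℝ => x + t • (y - x)) (y - x) t := by
      simpa using ((hasDerivAt_id t).smul_const (y - x)).const_add x
    exact (hd _).hasFDerivAt.comp_hasDerivAt t hl
  have hcont : Continuous fun t : ℝ => fderiv ℝ w (x + t • (y - x)) (y - x) := by fun_prop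
  have h2 := intervalIntegral.integral_eq_sub_of_hasDerivAt h1 (hcont.intervalIntegrable 0 1)
  simp only [one_smul, zero_smul, add_zero, add_sub_cancel] at h2
  rw [enorm_sub_rev, ← h2, intervalIntegral.integral_of_le zero_le_one]
  refine (enorm_integral_le_lintegral_enorm _).trans (lintegral_mono fun t => ?_)
  rw [mul_comm, enorm_sub_rev]
  exact ContinuousLinearMap.le_opENorm _ _

lemma seg_double (Q : DQ n) {G : Eu n → ℝ≥0∞} (hGc : Continuous G) {t : ℝ} (ht : t ∈ Ioc (0 : ℝ) 1) :
    ∫⁻ x in cube Q, ∫⁻ y in cube Q, G (x + t • (y - x)) ≤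
      2 ^ n * (∫⁻ z in cube Q, G z) * len Q.1 ^ n := by
  have hm := measurableSet_cube Q
  set I := ∫⁻ z in cube Q, G z with hI
  rcases le_total (1 / 2) t with h | h
  · calc _ ≤ ∫⁻ x in cube Q, 2 ^ n * I := by
          refine setLIntegral_mono' hm fun x hx => ?_
          refine le_trans (le_of_eq ?_) (setLIntegral_affine Q G hGc.measurable h ht.2 hx)
          congr 1 with y
          congr 1
          rw [smul_sub, sub_smul, one_smul]
          abel
      _ = _ := by rw [setLIntegral_const, volume_cube]
  · rw [lintegral_lintegral_swap (by
      apply Continuous.aemeasurable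
      unfold Function.uncurry
      fun_prop)]
    calc _ ≤ ∫⁻ y in cube Q, 2 ^ n * I := by
          refine setLIntegral_mono' hm fun y hy => ?_
          refine le_trans (le_of_eq ?_) (setLIntegral_affine Q G hGc.measurable (a := 1 - t)
            (by linarith) (by linarith [ht.1]) hy)
          congr 1 with x
          congr 1
          rw [smul_sub, sub_smul, one_smul, sub_sub_cancel]
          abel
      _ = _ := by rw [setLIntegral_const, volume_cube]
lemma seg_triple (Q : DQ n) {G : Eu n → ℝ≥0∞} (hGc : Continuous G) (D : ℝ≥0∞) :
    ∫⁻ x in cube Q, ∫⁻ y in cube Q, ∫⁻ t in Ioc (0 : ℝ) 1, D * G (x + t • (y - x)) ≤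
      D * (2 ^ n * (∫⁻ z in cube Q, G z) * len Q.1 ^ n) := by
  set I := ∫⁻ z in cube Q, G z with hI
  have hmeas : Measurable fun p : (Eu n × ℝ) × Eu n => G (p.1.1 + p.1.2 • (p.2 - p.1.1)) := by
    apply Continuous.measurable
    fun_prop
  calc _ = ∫⁻ x in cube Q, ∫⁻ t in Ioc (0 : ℝ) 1, ∫⁻ y in cube Q, D * G (x + t • (y - x)) := by
        congr 1 with x
        rw [lintegral_lintegral_swap]
        apply Measurable.aemeasurable
        refine Measurable.const_mul ?_ _
        apply Continuous.measurable
        fun_prop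
    _ = ∫⁻ x in cube Q, ∫⁻ t in Ioc (0 : ℝ) 1, D * ∫⁻ y in cube Q, G (x + t • (y - x)) := by
        congr 1 with x
        congr 1 with t
        rw [lintegral_const_mul]
        apply Continuous.measurable
        fun_prop
    _ = ∫⁻ t in Ioc (0 : ℝ) 1, ∫⁻ x in cube Q, D * ∫⁻ y in cube Q, G (x + t • (y - x)) := by
        rw [lintegral_lintegral_swap]
        exact ((hmeas.lintegral_prod_right').const_mul _).aemeasurable
    _ = ∫⁻ t in Ioc (0 : ℝ) 1, D * ∫⁻ x in cube Q, ∫⁻ y in cube Q, G (x + t • (y - x)) := by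
        congr 1 with t
        rw [lintegral_const_mul]
        exact (hmeas.lintegral_prod_right').comp (measurable_id.prodMk measurable_const)
    _ ≤ ∫⁻ t in Ioc (0 : ℝ) 1, D * (2 ^ n * I * len Q.1 ^ n) := by
        refine setLIntegral_mono' measurableSet_Ioc fun t ht => ?_
        exact mul_le_mul_right (seg_double Q hGc ht) _
    _ = _ := by
        rw [setLIntegral_const, Real.volume_Ioc]
        simp only [sub_zero, ENNReal.ofReal_one, mul_one]

lemma poincare {w : Eu n → F} (hw : ContDiff ℝ 1 w) (Q : DQ n) :
    ∫⁻ x in cube Q, ∫⁻ y in cube Q, ‖w x - w y‖ₑ ≤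
      n * 2 ^ n * len Q.1 * len Q.1 ^ n * ∫⁻ z in cube Q, ‖fderiv ℝ w z‖ₑ := by
  have hc : Continuous (fderiv ℝ w) := hw.continuous_fderiv (by norm_num)
  set G : Eu n → ℝ≥0∞ := fun z => ‖fderiv ℝ w z‖ₑ with hG
  have hGc : Continuous G := hc.enorm
  have hm := measurableSet_cube Q
  set I := ∫⁻ z in cube Q, G z with hI
  have step1 : ∫⁻ x in cube Q, ∫⁻ y in cube Q, ‖w x - w y‖ₑ ≤
      ∫⁻ x in cube Q, ∫⁻ y in cube Q, ∫⁻ t in Ioc (0 : ℝ) 1, n * len Q.1 * G (x + t • (y - x)) := by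
    refine setLIntegral_mono' hm fun x hx => setLIntegral_mono' hm fun y hy => ?_
    refine (enorm_sub_le_seg hw x y).trans (lintegral_mono fun t => ?_)
    exact mul_le_mul_left (enorm_sub_le_cube hx hy) _
  refine step1.trans ?_
  have := seg_triple Q hGc (n * len Q.1)
  refine this.trans (le_of_eq ?_)
  ring

end partD

section partE
open Filter Topology
variable {n : ℕ} {F : Type*} [NormedAddCommGroup F] [NormedSpace ℝ F] [CompleteSpace F]

/-- mean oscillation about `x` -/
noncomputable def osc (u : Eu n → F) (x : Eu n) (j : ℤ) : ℝ≥0∞ :=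
  (len j ^ n)⁻¹ * ∫⁻ y in cube (qof j x), ‖u x - u y‖ₑ

lemma lenpow_inv_mul (j : ℤ) : (len j ^ n)⁻¹ * len j ^ n = 1 :=
  ENNReal.inv_mul_cancel (pow_ne_zero _ (len_ne_zero _)) (ENNReal.pow_ne_top (len_ne_top _))

lemma measurable_enorm_sub {F : Type*} [NormedAddCommGroup F] {u : Eu n → F} (hu : Continuous u) (x : Eu n) :
    Measurable fun y => ‖u x - u y‖ₑ := by
  apply Continuous.measurable
  fun_prop

lemma osc_succ {u : Eu n → F} (hu : ContDiff ℝ 1 u) (x : Eu n) (j : ℤ) :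
    osc u x (j + 1) ≤ osc u x j + (n * 4 ^ n) * (len (j + 1) * (len (j + 1) ^ n)⁻¹ *
      ∫⁻ y in cube (qof (j + 1) x), ‖fderiv ℝ u y‖ₑ) := by
  have hc : Continuous u := hu.continuous
  set P := cube (qof (j + 1) x) with hP
  set q := cube (qof j x) with hq
  have hqP : q ⊆ P := by
    have := cube_subset_anc 1 (qof j x)
    rw [← qof_add] at this
    exact_mod_cast this
  have vP : volume P = len (j + 1) ^ n := volume_cube _
  have vq : volume q = len j ^ n := volume_cube _
  have mP : MeasurableSet P := measurableSet_cube _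
  have mq : MeasurableSet q := measurableSet_cube _
  have h1 : ∀ y, len j ^ n * ‖u x - u y‖ₑ ≤ (∫⁻ z in q, ‖u x - u z‖ₑ) + ∫⁻ z in q, ‖u z - u y‖ₑ := by
    intro y
    rw [← lintegral_add_left (measurable_enorm_sub hc x), ← vq, mul_comm, ← setLIntegral_const]
    refine lintegral_mono fun z => ?_
    calc ‖u x - u y‖ₑ = ‖(u x - u z) + (u z - u y)‖ₑ := by congr 1; abel
      _ ≤ _ := enorm_add_le _ _
  have h2 : len j ^ n * ∫⁻ y in P, ‖u x - u y‖ₑ ≤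
      len (j + 1) ^ n * (∫⁻ z in q, ‖u x - u z‖ₑ) + ∫⁻ y in P, ∫⁻ z in P, ‖u y - u z‖ₑ := by
    calc len j ^ n * ∫⁻ y in P, ‖u x - u y‖ₑ = ∫⁻ y in P, len j ^ n * ‖u x - u y‖ₑ := by
          rw [lintegral_const_mul _ (measurable_enorm_sub hc x)]
      _ ≤ ∫⁻ y in P, ((∫⁻ z in q, ‖u x - u z‖ₑ) + ∫⁻ z in q, ‖u z - u y‖ₑ) := lintegral_mono h1
      _ = (∫⁻ y in P, ∫⁻ z in q, ‖u x - u z‖ₑ) + ∫⁻ y in P, ∫⁻ z in q, ‖u z - u y‖ₑ :=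
          lintegral_add_left measurable_const _
      _ ≤ _ := by
          refine add_le_add ?_ (lintegral_mono fun y => ?_)
          · rw [setLIntegral_const, vP, mul_comm]
          · simp only [enorm_sub_rev _ (u y)]
            exact lintegral_mono_set hqP
  have e1 : len (j + 1) ^ n = 2 ^ n * len j ^ n := by
    rw [len_add, mul_pow, mul_comm]; simp [len]
  have a1 := lenpow_inv_mul (n := n) j
  have a2 := lenpow_inv_mul (n := n) (j + 1)
  have h3 := poincare hu (qof (j + 1) x)
  have e2 : (qof (j + 1) x).1 = j + 1 := rfl
  rw [e2] at h3
  unfold osc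
  set X := ∫⁻ y in P, ‖u x - u y‖ₑ
  set Y := ∫⁻ y in q, ‖u x - u y‖ₑ
  set I := ∫⁻ y in P, ‖fderiv ℝ u y‖ₑ
  set p := len (j + 1) ^ n
  set r := len j ^ n
  calc p⁻¹ * X = p⁻¹ * r⁻¹ * (r * X) := by
        rw [mul_assoc, ← mul_assoc r⁻¹, a1, one_mul]
    _ ≤ p⁻¹ * r⁻¹ * (p * Y + n * 2 ^ n * len (j + 1) * p * I) := by
        gcongr
        exact h2.trans (add_le_add le_rfl h3)
    _ = (p⁻¹ * p) * (r⁻¹ * Y) + (p⁻¹ * p) * (r⁻¹ * (n * 2 ^ n * len (j + 1) * I)) := by ring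
    _ = r⁻¹ * Y + (r⁻¹ * (n * 2 ^ n * len (j + 1) * I)) := by rw [a2, one_mul, one_mul]
    _ = r⁻¹ * Y + (n * 4 ^ n) * (len (j + 1) * p⁻¹ * I) := by
        congr 1
        have : r⁻¹ = 2 ^ n * p⁻¹ := by
          have h0 : (2 : ℝ≥0∞) ^ n ≠ 0 := by simp
          have ht : (2 : ℝ≥0∞) ^ n ≠ ⊤ := by simp
          rw [e1, ENNReal.mul_inv (Or.inl h0) (Or.inl ht), ← mul_assoc, ENNReal.mul_inv_cancel h0 ht, one_mul]
        rw [this]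
        have e4 : (4 : ℝ≥0∞) ^ n = 2 ^ n * 2 ^ n := by rw [← mul_pow]; norm_num
        rw [e4]
        ring

lemma osc_le {u : Eu n → F} (hu : ContDiff ℝ 1 u) (x : Eu n) (j : ℤ) (i : ℕ) :
    osc u x (j + i) ≤ osc u x j + (n * 4 ^ n) * ∑ m ∈ Finset.range i, (len (j + m + 1) *
      (len (j + m + 1) ^ n)⁻¹ * ∫⁻ y in cube (qof (j + m + 1) x), ‖fderiv ℝ u y‖ₑ) := by
  induction i with
  | zero => simp
  | succ i ih =>
    rw [Finset.sum_range_succ, mul_add, ← add_assoc]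
    push_cast
    rw [← add_assoc]
    exact (osc_succ hu x (j + i)).trans (add_le_add ih le_rfl)

lemma osc_le' {u : Eu n → F} (hu : ContDiff ℝ 1 u) (x : Eu n) {j j' : ℤ} (h : j ≤ j') :
    osc u x j' ≤ osc u x j + (n * 4 ^ n) * ∑' m : ℤ, (len m *
      (len m ^ n)⁻¹ * ∫⁻ y in cube (qof m x), ‖fderiv ℝ u y‖ₑ) := by
  obtain ⟨i, rfl⟩ := Int.le.dest h
  refine (osc_le hu x j i).trans ?_
  gcongr
  set f : ℤ → ℝ≥0∞ := fun m => (len m * (len m ^ n)⁻¹ * ∫⁻ y in cube (qof m x), ‖fderiv ℝ u y‖ₑ)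
  have hinj : Set.InjOn (fun m : ℕ => j + m + 1) (Finset.range i) := by
    intro a _ b _ hab
    simp only at hab
    omega
  calc _ = ∑ m ∈ (Finset.range i).image (fun m : ℕ => j + m + 1), f m := by
        rw [Finset.sum_image hinj]
    _ ≤ _ := ENNReal.sum_le_tsum _

lemma osc_small {F : Type*} [NormedAddCommGroup F] {u : Eu n → F} (hu : Continuous u) (x : Eu n) {ε : ℝ≥0∞} (hε : 0 < ε) (j0 : ℤ) :
    ∃ j ≤ j0, osc u x j ≤ ε := by
  have h1 : ∀ᶠ y in 𝓝 x, ‖u x - u y‖ₑ < ε := by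
    have : Continuous fun y => ‖u x - u y‖ₑ := by fun_prop
    refine (this.tendsto x).eventually_lt_const ?_
    simpa using hε
  obtain ⟨δ, hδ, hball⟩ := Metric.eventually_nhds_iff.1 h1
  have hlim : ∃ m : ℕ, (n : ℝ) * 2 ^ (-(m : ℤ)) < δ := by
    have : Tendsto (fun m : ℕ => (n : ℝ) * (1 / 2) ^ m) atTop (𝓝 (n * 0)) :=
      (tendsto_pow_atTop_nhds_zero_of_lt_one (by norm_num) (by norm_num)).const_mul _
    rw [mul_zero] at this
    obtain ⟨m, hm⟩ := (this.eventually_lt_const hδ).exists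
    refine ⟨m, ?_⟩
    simpa [zpow_neg] using hm
  obtain ⟨m, hm⟩ := hlim
  refine ⟨min j0 (-(m : ℤ)), min_le_left _ _, ?_⟩
  set j := min j0 (-(m : ℤ))
  have hj : (2 : ℝ) ^ j ≤ 2 ^ (-(m : ℤ)) := zpow_le_zpow_right₀ (by norm_num) (min_le_right _ _)
  unfold osc
  calc _ ≤ (len j ^ n)⁻¹ * ∫⁻ y in cube (qof j x), ε := by
        refine mul_le_mul_right (setLIntegral_mono' (measurableSet_cube _) fun y hy => ?_) _
        refine (hball ?_).le
        rw [dist_eq_norm]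
        have h3 := norm_sub_le_cube hy (mem_cube_qof j x)
        have h4 : (qof j x).1 = j := rfl
        rw [h4] at h3
        refine h3.trans_lt (lt_of_le_of_lt ?_ hm)
        gcongr
    _ = ε * ((len j ^ n)⁻¹ * len j ^ n) := by
        rw [setLIntegral_const, volume_cube]
        simp only [qof]
        ring
    _ ≤ ε := by rw [lenpow_inv_mul, mul_one]

lemma lenpow_inv_small (hn : 1 ≤ n) {A ε : ℝ≥0∞} (hA : A ≠ ⊤) (hε : 0 < ε) :
    ∃ j : ℕ, ∀ i : ℤ, (j : ℤ) ≤ i → (len i ^ n)⁻¹ * A < ε := by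
  have hlim : Tendsto (fun j : ℕ => (2⁻¹ : ℝ≥0∞) ^ j * A) atTop (𝓝 (0 * A)) :=
    ENNReal.Tendsto.mul_const (ENNReal.tendsto_pow_atTop_nhds_zero_of_lt_one (by simp)) (Or.inr hA)
  rw [zero_mul] at hlim
  obtain ⟨j, hj⟩ := (hlim.eventually_lt_const hε).exists
  refine ⟨j, fun i hi => lt_of_le_of_lt ?_ hj⟩
  gcongr
  rw [len_pow, len_inv, ← ENNReal.inv_pow, ← len_natCast, len_inv]
  apply len_mono
  have : (1 : ℤ) ≤ n := by exact_mod_cast hn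
  nlinarith

lemma riesz_bound (hn : 1 ≤ n) {u : Eu n → F} (hu : ContDiff ℝ 1 u) (hi : ∫⁻ y, ‖u y‖ₑ ≠ ⊤) (x : Eu n) :
    ‖u x‖ₑ ≤ (n * 4 ^ n) * ∑' j : ℤ, (len j *
      (len j ^ n)⁻¹ * ∫⁻ y in cube (qof j x), ‖fderiv ℝ u y‖ₑ) := by
  refine le_of_forall_pos_le_add fun ε hε => ?_
  have hε2 : 0 < ε / 2 := ENNReal.half_pos hε.ne'
  obtain ⟨j', hj'⟩ := lenpow_inv_small hn hi hε2
  have hj' := hj' j' le_rfl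
  obtain ⟨j, hjj, hj⟩ := osc_small hu.continuous x hε2 j'
  have h1 := osc_le' hu x hjj
  have h2 : ‖u x‖ₑ ≤ osc u x j' + (len j' ^ n)⁻¹ * ∫⁻ y, ‖u y‖ₑ := by
    have hc := hu.continuous
    calc ‖u x‖ₑ = (len j' ^ n)⁻¹ * ∫⁻ y in cube (qof j' x), ‖u x‖ₑ := by
          rw [setLIntegral_const, volume_cube]
          simp only [qof]
          rw [mul_left_comm, lenpow_inv_mul, mul_one]
      _ ≤ (len j' ^ n)⁻¹ * ∫⁻ y in cube (qof j' x), (‖u x - u y‖ₑ + ‖u y‖ₑ) := by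
          refine mul_le_mul_right (lintegral_mono fun y => ?_) _
          calc ‖u x‖ₑ = ‖(u x - u y) + u y‖ₑ := by congr 1; abel
            _ ≤ _ := enorm_add_le _ _
      _ = osc u x j' + (len j' ^ n)⁻¹ * ∫⁻ y in cube (qof j' x), ‖u y‖ₑ := by
          rw [lintegral_add_left (measurable_enorm_sub hc x), mul_add]
          rfl
      _ ≤ _ := by
          gcongr
          exact Measure.restrict_le_self
  calc ‖u x‖ₑ ≤ _ := h2
    _ ≤ (osc u x j + _) + ε / 2 := add_le_add h1 hj'.le
    _ ≤ (ε / 2 + _) + ε / 2 := by gcongr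
    _ = _ := by rw [add_comm (ε / 2), add_assoc, ENNReal.add_halves]

end partE

end AdamsAux

namespace AdamsAux

section partF
open Filter Topology
variable {n : ℕ}

lemma exists_K : ∃ K : ℝ≥0∞, K ≠ ⊤ ∧ 1 ≤ K ∧ ∀ t : ℝ, ‖deriv Real.smoothTransition t‖ₑ ≤
    K * (Icc (0:ℝ) 1).indicator 1 t := by
  have hc : ContDiff ℝ 1 Real.smoothTransition := Real.smoothTransition.contDiff
  obtain ⟨B, hB⟩ := (isCompact_Icc (a := (0:ℝ)) (b := 1)).exists_bound_of_continuousOn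
    ((hc.continuous_deriv le_rfl).continuousOn)
  refine ⟨ENNReal.ofReal B + 1, by finiteness, le_add_self, fun t => ?_⟩
  by_cases ht : t ∈ Icc (0:ℝ) 1
  · rw [indicator_of_mem ht]
    simp only [Pi.one_apply, mul_one]
    rw [← ofReal_norm]
    exact (ENNReal.ofReal_le_ofReal (hB t ht)).trans le_self_add
  · have : deriv Real.smoothTransition t = 0 := by
      rw [mem_Icc, not_and_or, not_le, not_le] at ht
      rcases ht with ht | ht
      · have : Real.smoothTransition =ᶠ[𝓝 t] fun _ => (0:ℝ) := by
          filter_upwards [Iio_mem_nhds ht] with y hy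
          exact Real.smoothTransition.zero_of_nonpos (le_of_lt hy)
        rw [this.deriv_eq]; simp
      · have : Real.smoothTransition =ᶠ[𝓝 t] fun _ => (1:ℝ) := by
          filter_upwards [Ioi_mem_nhds ht] with y hy
          exact Real.smoothTransition.one_of_one_le (le_of_lt hy)
        rw [this.deriv_eq]; simp
    rw [this]; simp

/-- the approximate perimeter density -/
noncomputable def pm (g : Eu n → ℝ) (N : ℕ) (s : ℝ) (x : Eu n) : ℝ≥0∞ :=
  ENNReal.ofReal ((N:ℝ) + 1) * (Icc (0:ℝ) 1).indicator 1 ((g x - s) * ((N:ℝ) + 1)) * ‖fderiv ℝ g x‖ₑ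

/-- the cutoff of `g` at level `s` -/
noncomputable def wf (g : Eu n → ℝ) (N : ℕ) (s : ℝ) (x : Eu n) : ℝ :=
  Real.smoothTransition ((g x - s) * ((N:ℝ) + 1))

lemma wf_contDiff {g : Eu n → ℝ} (hg : ContDiff ℝ 1 g) (N : ℕ) (s : ℝ) : ContDiff ℝ 1 (wf g N s) :=
  Real.smoothTransition.contDiff.comp ((hg.sub contDiff_const).mul contDiff_const)

lemma wf_fderiv {g : Eu n → ℝ} (hg : ContDiff ℝ 1 g) {K : ℝ≥0∞} (hK : ∀ t : ℝ,
    ‖deriv Real.smoothTransition t‖ₑ ≤ K * (Icc (0:ℝ) 1).indicator 1 t) (N : ℕ) (s : ℝ) (x : Eu n) :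
    ‖fderiv ℝ (wf g N s) x‖ₑ ≤ K * pm g N s x := by
  have h1 : HasFDerivAt g (fderiv ℝ g x) x := (hg.differentiable one_ne_zero x).hasFDerivAt
  have hc : ContDiff ℝ 1 Real.smoothTransition := Real.smoothTransition.contDiff
  have h2 := ((hc.differentiable one_ne_zero) ((g x - s) * ((N:ℝ) + 1))).hasDerivAt
  have h3 := h2.comp_hasFDerivAt x ((h1.sub_const s).mul_const ((N:ℝ)+1))
  have h4 : fderiv ℝ (wf g N s) x = _ := h3.fderiv
  rw [h4, enorm_smul, enorm_smul, Real.enorm_of_nonneg (by positivity : (0:ℝ) ≤ (N:ℝ)+1)]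
  calc _ ≤ (K * (Icc (0:ℝ) 1).indicator 1 ((g x - s) * ((N:ℝ) + 1))) *
        (ENNReal.ofReal ((N:ℝ) + 1) * ‖fderiv ℝ g x‖ₑ) := by gcongr; exact hK _
    _ = _ := by unfold pm; ring

lemma wf_eq_zero {g : Eu n → ℝ} {N : ℕ} {s : ℝ} {x : Eu n} (h : ¬ s < g x) : wf g N s x = 0 := by
  apply Real.smoothTransition.zero_of_nonpos
  exact mul_nonpos_of_nonpos_of_nonneg (by linarith) (by positivity)

lemma wf_eq_one {g : Eu n → ℝ} {s : ℝ} {x : Eu n} (h : s < g x) : ∀ᶠ N in atTop, wf g N s x = 1 := by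
  obtain ⟨M, hM⟩ := exists_nat_gt (1 / (g x - s))
  filter_upwards [eventually_ge_atTop M] with N hN
  apply Real.smoothTransition.one_of_one_le
  have h0 : 0 < g x - s := by linarith
  rw [div_lt_iff₀ h0] at hM
  have : (M:ℝ) ≤ N := by exact_mod_cast hN
  nlinarith

lemma iso_aux (hn : 1 ≤ n) {g : Eu n → ℝ} (hg : ContDiff ℝ 1 g) {K : ℝ≥0∞} (hK1 : 1 ≤ K) (hKt : K ≠ ⊤)
    (hK : ∀ t : ℝ, ‖deriv Real.smoothTransition t‖ₑ ≤ K * (Icc (0:ℝ) 1).indicator 1 t)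
    (s : ℝ) (Q : DQ n) :
    volume (cube Q \ {x | s < g x}) * volume (cube Q ∩ {x | s < g x}) ≤
      (n * 2 ^ n * len Q.1 * len Q.1 ^ n * K) * liminf (fun N => ∫⁻ x in cube Q, pm g N s x) atTop := by
  set E := {x | s < g x} with hE
  have hEm : MeasurableSet E := measurableSet_lt measurable_const hg.continuous.measurable
  have hQm := measurableSet_cube Q
  set C : ℝ≥0∞ := n * 2 ^ n * len Q.1 * len Q.1 ^ n * K with hC
  have hC0 : C ≠ 0 := by
    have := len_ne_zero Q.1
    have hk : K ≠ 0 := (zero_lt_one.trans_le hK1).ne'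
    have hn0 : (n:ℝ≥0∞) ≠ 0 := by simp; omega
    simp only [hC, ne_eq, mul_eq_zero, not_or]
    exact ⟨⟨⟨⟨hn0, by positivity⟩, this⟩, pow_ne_zero _ this⟩, hk⟩
  have hCt : C ≠ ⊤ := by
    have := len_ne_top Q.1
    simp only [hC]; finiteness
  set a : ℝ≥0∞ := volume (cube Q \ E) * C⁻¹ with ha
  have key : a * volume (cube Q ∩ E) ≤ liminf (fun N => ∫⁻ x in cube Q, pm g N s x) atTop := by
    have hwm : ∀ N, Measurable fun x => a * ‖wf g N s x‖ₑ := fun N =>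
      (wf_contDiff hg N s).continuous.enorm.measurable.const_mul a
    calc a * volume (cube Q ∩ E) = ∫⁻ x in cube Q ∩ E, a := by simp
      _ ≤ ∫⁻ x in cube Q ∩ E, liminf (fun N => a * ‖wf g N s x‖ₑ) atTop := by
          apply setLIntegral_mono' (hQm.inter hEm)
          intro x hx
          have : Tendsto (fun N => a * ‖wf g N s x‖ₑ) atTop (𝓝 a) := by
            apply tendsto_const_nhds.congr'
            filter_upwards [wf_eq_one (hx.2 : s < g x)] with N hN
            simp [hN]
          exact this.liminf_eq.ge
      _ ≤ liminf (fun N => ∫⁻ x in cube Q ∩ E, a * ‖wf g N s x‖ₑ) atTop := lintegral_liminf_le hwm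
      _ ≤ _ := by
          refine liminf_le_liminf (Eventually.of_forall fun N => ?_)
          have hw := wf_contDiff hg N s
          have hsub : volume (cube Q \ E) * ∫⁻ x in cube Q ∩ E, ‖wf g N s x‖ₑ ≤
              C * ∫⁻ x in cube Q, pm g N s x := by
            calc volume (cube Q \ E) * ∫⁻ x in cube Q ∩ E, ‖wf g N s x‖ₑ
                = ∫⁻ x in cube Q \ E, ∫⁻ y in cube Q ∩ E, ‖wf g N s y‖ₑ := by
                  simp [mul_comm]
              _ ≤ ∫⁻ x in cube Q \ E, ∫⁻ y in cube Q, ‖wf g N s x - wf g N s y‖ₑ := by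
                  apply setLIntegral_mono' (hQm.diff hEm)
                  intro x hx
                  refine le_trans ?_ (lintegral_mono_set (s := cube Q ∩ E) inter_subset_left)
                  apply lintegral_mono
                  intro y
                  simp only []
                  rw [wf_eq_zero (x := x) hx.2, zero_sub, enorm_neg]
              _ ≤ ∫⁻ x in cube Q, ∫⁻ y in cube Q, ‖wf g N s x - wf g N s y‖ₑ :=
                  lintegral_mono_set sdiff_subset
              _ ≤ _ := poincare hw Q
              _ ≤ (n * 2 ^ n * len Q.1 * len Q.1 ^ n) * ∫⁻ x in cube Q, K * pm g N s x := by
                  gcongr with z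
                  exact wf_fderiv hg hK N s z
              _ = _ := by
                  rw [lintegral_const_mul' _ _ hKt, ← mul_assoc]
          calc ∫⁻ x in cube Q ∩ E, a * ‖wf g N s x‖ₑ
              = C⁻¹ * (volume (cube Q \ E) * ∫⁻ x in cube Q ∩ E, ‖wf g N s x‖ₑ) := by
                rw [lintegral_const_mul _ hw.continuous.enorm.measurable, ha]; ring
            _ ≤ C⁻¹ * (C * ∫⁻ x in cube Q, pm g N s x) := by gcongr
            _ = _ := by rw [← mul_assoc, ENNReal.inv_mul_cancel hC0 hCt, one_mul]
  calc volume (cube Q \ E) * volume (cube Q ∩ E) = C * (a * volume (cube Q ∩ E)) := by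
        rw [ha]
        calc _ = (C * C⁻¹) * (volume (cube Q \ E) * volume (cube Q ∩ E)) := by
              rw [ENNReal.mul_inv_cancel hC0 hCt, one_mul]
          _ = _ := by ring
    _ ≤ _ := by gcongr

/-- balanced cubes -/
def Bal (E : Set (Eu n)) (Q : DQ n) : Prop :=
  len Q.1 ^ n ≤ 2 ^ (n + 1) * volume (cube Q ∩ E) ∧ 2 * volume (cube Q ∩ E) ≤ len Q.1 ^ n

lemma iso {d : ℕ} {g : Eu (d+1) → ℝ} (hg : ContDiff ℝ 1 g) {K : ℝ≥0∞} (hK1 : 1 ≤ K) (hKt : K ≠ ⊤)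
    (hK : ∀ t : ℝ, ‖deriv Real.smoothTransition t‖ₑ ≤ K * (Icc (0:ℝ) 1).indicator 1 t)
    (s : ℝ) (Q : DQ (d+1)) (hB : Bal {x | s < g x} Q) :
    len Q.1 ^ d ≤ ((d+1:ℕ) * 2 ^ (d+1) * K * 2 ^ (d+3)) *
      liminf (fun N => ∫⁻ x in cube Q, pm g N s x) atTop := by
  have h := iso_aux (by omega) hg hK1 hKt hK s Q
  set E := {x | s < g x} with hE
  set P := liminf (fun N => ∫⁻ x in cube Q, pm g N s x) atTop
  have hEm : MeasurableSet E := measurableSet_lt measurable_const hg.continuous.measurable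
  obtain ⟨h1, h2⟩ := hB
  have hlt := len_ne_top Q.1
  have hl0 := len_ne_zero Q.1
  have hV : volume (cube Q ∩ E) + volume (cube Q \ E) = len Q.1 ^ (d+1) := by
    rw [measure_inter_add_sdiff _ hEm, volume_cube]
  have hVt : volume (cube Q ∩ E) ≠ ⊤ := by
    intro h; rw [h, top_add] at hV
    exact (ENNReal.pow_ne_top hlt) hV.symm
  have h3 : len Q.1 ^ (d+1) ≤ 2 * volume (cube Q \ E) := by
    rw [← hV] at h2 ⊢
    rw [two_mul] at h2
    have := (ENNReal.add_le_add_iff_left hVt).1 h2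
    rw [two_mul]; gcongr
  set L := len Q.1
  have h4 : L ^ (d+1) * L ^ (d+1) ≤ L ^ (d+1) * L *
      (((d+1:ℕ) * 2 ^ (d+1) * K * 2 ^ (d+3)) * P) := by
    calc L ^ (d+1) * L ^ (d+1) ≤ (2 * volume (cube Q \ E)) * (2 ^ (d+1+1) * volume (cube Q ∩ E)) := by
          gcongr
      _ = 2 ^ (d+3) * (volume (cube Q \ E) * volume (cube Q ∩ E)) := by ring
      _ ≤ 2 ^ (d+3) * (((d+1:ℕ) * 2 ^ (d+1) * L * L ^ (d+1) * K) * P) := by gcongr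
      _ = _ := by ring
  have h5 : (L ^ (d+1) * L) * L ^ d ≤ (L ^ (d+1) * L) * (((d+1:ℕ) * 2 ^ (d+1) * K * 2 ^ (d+3)) * P) := by
    refine le_trans (le_of_eq ?_) h4; ring
  refine (ENNReal.mul_le_mul_iff_right ?_ ?_).1 h5
  · simp [hl0]
  · finiteness

end partF

end AdamsAux

namespace AdamsAux

section partG
open Filter Topology
variable {n : ℕ}

lemma lt_lenpow_of {A : ℝ≥0∞} {i : ℤ} (h : (len i ^ n)⁻¹ * A < 1) : A < len i ^ n := by
  have h0 : len i ^ n ≠ 0 := pow_ne_zero _ (len_ne_zero i)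
  have ht : len i ^ n ≠ ⊤ := ENNReal.pow_ne_top (len_ne_top i)
  have := (ENNReal.mul_lt_mul_iff_right h0 ht).2 h
  rwa [← mul_assoc, ENNReal.mul_inv_cancel h0 ht, one_mul, mul_one] at this

lemma boxing (hn : 1 ≤ n) {E : Set (Eu n)} (hE : IsOpen E) (hEt : volume E ≠ ⊤) :
    ∃ G : Set (DQ n), (∀ Q ∈ G, Bal E Q) ∧ (∀ Q ∈ G, ∀ Q' ∈ G, ∀ x, x ∈ cube Q → x ∈ cube Q' → Q = Q') ∧
      ∀ x ∈ E, ∃ j : ℤ, qof j x ∈ G := by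
  refine ⟨{Q | Bal E Q ∧ ∀ i : ℕ, ¬ Bal E (anc (i+1) Q)}, fun Q hQ => hQ.1, ?_, ?_⟩
  · have key : ∀ x (j j' : ℤ), j < j' → (∀ i : ℕ, ¬ Bal E (anc (i+1) (qof j x))) →
        Bal E (qof j' x) → False := by
      intro x j j' hjj h1 h2
      obtain ⟨m, hm⟩ := Int.eq_ofNat_of_zero_le (show 0 ≤ j' - j - 1 by omega)
      apply h1 m
      rw [← qof_add]
      convert h2 using 2
      push_cast; omega
    intro Q hQ Q' hQ' x hx hx'
    have e : qof Q.1 x = Q := hx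
    have e' : qof Q'.1 x = Q' := hx'
    rcases lt_trichotomy Q.1 Q'.1 with h | h | h
    · exact (key x _ _ h (by rw [e]; exact hQ.2) (by rw [e']; exact hQ'.1)).elim
    · rw [← e, ← e', h]
    · exact (key x _ _ h (by rw [e']; exact hQ'.2) (by rw [e]; exact hQ.1)).elim
  · intro x hx
    -- first scale
    obtain ⟨r, hr, hrE⟩ := Metric.isOpen_iff.1 hE x hx
    obtain ⟨m, hm⟩ := exists_pow_lt_of_lt_one (show 0 < r / n by positivity) (show (1/2:ℝ) < 1 by norm_num)
    have hnpos : (0:ℝ) < n := by exact_mod_cast hn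
    have hlow : ∀ j : ℤ, 2 * volume (cube (qof j x) ∩ E) ≤ len j ^ n → -(m:ℤ) ≤ j := by
      intro j hj
      by_contra hlt
      push Not at hlt
      have hsub : cube (qof j x) ⊆ E := by
        intro y hy
        apply hrE
        rw [mem_ball, dist_eq_norm]
        refine lt_of_le_of_lt (norm_sub_le_cube hy (mem_cube_qof j x)) ?_
        have : (2:ℝ) ^ j ≤ (1/2) ^ m := by
          calc (2:ℝ)^j ≤ 2 ^ (-(m:ℤ)) := zpow_le_zpow_right₀ (by norm_num) hlt.le
            _ = _ := by rw [zpow_neg, zpow_natCast, one_div, inv_pow]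
        rw [lt_div_iff₀ hnpos] at hm
        calc (n:ℝ) * 2 ^ (qof j x).1 ≤ n * (1/2)^m := by
              gcongr; exact this
          _ < r := by linarith
      rw [inter_eq_left.2 hsub, volume_cube] at hj
      change 2 * len j ^ n ≤ len j ^ n at hj
      have h0 : len j ^ n ≠ 0 := pow_ne_zero _ (len_ne_zero j)
      have ht : len j ^ n ≠ ⊤ := ENNReal.pow_ne_top (len_ne_top j)
      rw [two_mul] at hj
      have := ENNReal.lt_add_right ht h0
      exact absurd hj (not_le.2 this)
    have hex : ∃ j : ℤ, 2 * volume (cube (qof j x) ∩ E) ≤ len j ^ n := by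
      obtain ⟨j, hj⟩ := lenpow_inv_small hn (A := 2 * volume E) (by finiteness) zero_lt_one
      refine ⟨j, le_trans ?_ (lt_lenpow_of (hj j le_rfl)).le⟩
      gcongr; exact inter_subset_right
    obtain ⟨j, hj, hjmin⟩ := Int.exists_least_of_bdd ⟨_, hlow⟩ hex
    have hBj : Bal E (qof j x) := by
      refine ⟨?_, hj⟩
      have h1 : len (j-1) ^ n < 2 * volume (cube (qof (j-1) x) ∩ E) := by
        by_contra hc
        have := hjmin (j-1) (not_lt.1 hc)
        omega
      have h2 : cube (qof (j-1) x) ⊆ cube (qof j x) := by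
        have := cube_subset_anc 1 (qof (j-1) x)
        rwa [← qof_add, show j - 1 + ((1:ℕ):ℤ) = j by push_cast; ring] at this
      calc len (qof j x).1 ^ n = 2 ^ n * len (j-1) ^ n := by
            have : len (qof j x).1 = 2 * len (j-1) := by
              change len j = _
              conv_lhs => rw [show j = ((1:ℕ):ℤ) + (j - 1) by push_cast; ring, len_add, len_natCast, pow_one]
            rw [this, mul_pow]
        _ ≤ 2 ^ n * (2 * volume (cube (qof j x) ∩ E)) := by
            gcongr
            refine h1.le.trans ?_
            gcongr
        _ = _ := by ring
    have hbdd : ∃ b : ℤ, ∀ i : ℤ, Bal E (qof i x) → i ≤ b := by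
      obtain ⟨b, hb⟩ := lenpow_inv_small hn (A := 2 ^ (n+1) * volume E) (by finiteness) zero_lt_one
      refine ⟨b, fun i hi => ?_⟩
      by_contra hc
      have h1 := lt_lenpow_of (hb i (by omega))
      refine absurd hi.1 (not_le.2 (lt_of_le_of_lt ?_ h1))
      gcongr; exact inter_subset_right
    obtain ⟨i, hi, himax⟩ := Int.exists_greatest_of_bdd hbdd ⟨j, hBj⟩
    refine ⟨i, hi, fun m hm => ?_⟩
    rw [← qof_add] at hm
    have := himax _ hm
    push_cast at this
    omega

lemma measurable_pm {g : Eu n → ℝ} (hg : ContDiff ℝ 1 g) (N : ℕ) :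
    Measurable fun p : ℝ × Eu n => pm g N p.1 p.2 := by
  unfold pm
  have h1 : Measurable fun p : ℝ × Eu n => (g p.2 - p.1) * ((N:ℝ) + 1) :=
    ((hg.continuous.measurable.comp measurable_snd).sub measurable_fst).mul_const _
  have h2 : Measurable ((Icc (0:ℝ) 1).indicator (1 : ℝ → ℝ≥0∞)) := measurable_one.indicator measurableSet_Icc
  have h3 : Measurable fun p : ℝ × Eu n => ‖fderiv ℝ g p.2‖ₑ :=
    ((hg.continuous_fderiv one_ne_zero).enorm.measurable).comp measurable_snd
  exact ((h2.comp h1).const_mul _).mul h3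

/-- the approximate perimeter -/
noncomputable def per (g : Eu n → ℝ) (s : ℝ) : ℝ≥0∞ := liminf (fun N => ∫⁻ x, pm g N s x) atTop

lemma measurable_per {g : Eu n → ℝ} (hg : ContDiff ℝ 1 g) : Measurable (per g) := by
  apply Measurable.liminf
  intro N
  exact (measurable_pm hg N).lintegral_prod_right'

lemma coarea {g : Eu n → ℝ} (hg : ContDiff ℝ 1 g) (S : Set ℝ) :
    ∫⁻ s in S, per g s ≤ ∫⁻ x, ‖fderiv ℝ g x‖ₑ := by
  calc ∫⁻ s in S, per g s ≤ ∫⁻ s, per g s := setLIntegral_le_lintegral _ _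
    _ ≤ liminf (fun N => ∫⁻ s, ∫⁻ x, pm g N s x) atTop :=
        lintegral_liminf_le fun N => (measurable_pm hg N).lintegral_prod_right'
    _ ≤ liminf (fun N : ℕ => ∫⁻ x, ‖fderiv ℝ g x‖ₑ) atTop := by
        refine liminf_le_liminf (Eventually.of_forall fun N => ?_)
        rw [lintegral_lintegral_swap (measurable_pm hg N).aemeasurable]
        apply lintegral_mono
        intro x
        simp only [pm]
        have hN : (0:ℝ) < (N:ℝ) + 1 := by positivity
        rw [lintegral_mul_const' _ _ (by finiteness), lintegral_const_mul' _ _ (by finiteness)]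
        calc _ ≤ 1 * ‖fderiv ℝ g x‖ₑ := ?_
          _ = _ := one_mul _
        gcongr
        have : ∫⁻ s : ℝ, (Icc (0:ℝ) 1).indicator (1 : ℝ → ℝ≥0∞) ((g x - s) * ((N:ℝ) + 1)) ≤
            ENNReal.ofReal (1 / ((N:ℝ)+1)) := by
          calc _ ≤ ∫⁻ s : ℝ, (Icc (g x - 1 / ((N:ℝ)+1)) (g x)).indicator (1 : ℝ → ℝ≥0∞) s := by
                apply lintegral_mono
                intro s
                by_cases hs : (g x - s) * ((N:ℝ) + 1) ∈ Icc (0:ℝ) 1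
                · have : s ∈ Icc (g x - 1 / ((N:ℝ)+1)) (g x) := by
                    constructor
                    · have := hs.2
                      rw [← le_div_iff₀ hN] at this
                      linarith
                    · have := nonneg_of_mul_nonneg_left hs.1 hN
                      linarith
                  simp only [indicator_of_mem hs, indicator_of_mem this]
                  exact le_rfl
                · simp only [indicator_of_notMem hs]; exact zero_le
            _ = _ := by
                rw [lintegral_indicator_one measurableSet_Icc, Real.volume_Icc]
                congr 1; ring
        calc _ ≤ ENNReal.ofReal ((N:ℝ)+1) * ENNReal.ofReal (1 / ((N:ℝ)+1)) := by gcongr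
          _ = 1 := by
            rw [← ENNReal.ofReal_mul hN.le, mul_one_div_cancel hN.ne', ENNReal.ofReal_one]
    _ = _ := liminf_const _

lemma level {d : ℕ} {g : Eu (d+1) → ℝ} (hg : ContDiff ℝ 1 g) (hi : ∫⁻ x, ‖g x‖ₑ ≠ ⊤) {K : ℝ≥0∞}
    (hK1 : 1 ≤ K) (hKt : K ≠ ⊤)
    (hK : ∀ t : ℝ, ‖deriv Real.smoothTransition t‖ₑ ≤ K * (Icc (0:ℝ) 1).indicator 1 t)
    {s : ℝ} (hs : 0 < s) :
    NB d ({x | s < g x}.indicator 1) (((d+1:ℕ) * 2 ^ (d+1) * K * 2 ^ (d+3)) * per g s) := by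
  set E := {x | s < g x} with hE
  set C1 : ℝ≥0∞ := (d+1:ℕ) * 2 ^ (d+1) * K * 2 ^ (d+3) with hC1
  have hEo : IsOpen E := isOpen_lt continuous_const hg.continuous
  have hEt : volume E ≠ ⊤ := by
    have h1 : volume E ≤ volume {x | ENNReal.ofReal s ≤ ‖g x‖ₑ} := by
      apply measure_mono
      intro x hx
      have hx : s < g x := hx
      simp only [mem_ofPred_eq]
      rw [Real.enorm_of_nonneg (hs.trans hx).le]
      exact ENNReal.ofReal_le_ofReal hx.le
    have h2 := mul_meas_ge_le_lintegral (μ := volume) hg.continuous.enorm.measurable (ENNReal.ofReal s)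
    intro h
    rw [h, top_le_iff] at h1
    rw [h1, ENNReal.mul_top (by simpa using hs), top_le_iff] at h2
    exact hi h2
  obtain ⟨G, hGB, hGd, hGc⟩ := boxing (by omega) hEo hEt
  refine ⟨G.indicator 1, fun x => ?_, ?_⟩
  · by_cases hx : x ∈ E
    · obtain ⟨j, hj⟩ := hGc x hx
      rw [indicator_of_mem hx]
      calc (1 : Eu (d+1) → ℝ≥0∞) x = G.indicator 1 (qof j x) := by rw [indicator_of_mem hj]; rfl
        _ ≤ _ := ENNReal.le_tsum (f := fun j => G.indicator (1 : DQ (d+1) → ℝ≥0∞) (qof j x)) j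
    · rw [indicator_of_notMem hx]; exact zero_le
  · have e1 : cost d (G.indicator 1) = ∑' Q : G, len Q.1.1 ^ d := by
      unfold cost
      rw [tsum_subtype G (fun Q => len Q.1 ^ d)]
      congr 1; funext Q
      by_cases hQ : Q ∈ G <;> simp [hQ]
    rw [e1]
    calc ∑' Q : G, len Q.1.1 ^ d
        ≤ ∑' Q : G, C1 * liminf (fun N => ∫⁻ x in cube Q.1, pm g N s x) atTop := by
          exact ENNReal.tsum_le_tsum fun Q => iso hg hK1 hKt hK s Q.1 (hGB Q.1 Q.2)
      _ = C1 * ∑' Q : G, liminf (fun N => ∫⁻ x in cube Q.1, pm g N s x) atTop := ENNReal.tsum_mul_left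
      _ ≤ C1 * liminf (fun N => ∑' Q : G, ∫⁻ x in cube Q.1, pm g N s x) atTop := by
          gcongr
          simp only [← lintegral_count]
          exact lintegral_liminf_le fun N => measurable_of_countable _
      _ ≤ C1 * per g s := by
          gcongr
          refine liminf_le_liminf (Eventually.of_forall fun N => ?_)
          rw [← lintegral_iUnion (fun Q : G => measurableSet_cube Q.1)]
          · exact setLIntegral_le_lintegral _ _
          · intro Q Q' hQQ
            simp only [Function.onFun]
            rw [Set.disjoint_left]
            intro x hx hx'
            exact hQQ (Subtype.ext (hGd _ Q.2 _ Q'.2 x hx hx'))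

lemma boxing_pos {d : ℕ} {K : ℝ≥0∞}
    (hK1 : 1 ≤ K) (hKt : K ≠ ⊤)
    (hK : ∀ t : ℝ, ‖deriv Real.smoothTransition t‖ₑ ≤ K * (Icc (0:ℝ) 1).indicator 1 t)
    {g : Eu (d+1) → ℝ} (hg : ContDiff ℝ 1 g) (hi : ∫⁻ x, ‖g x‖ₑ ≠ ⊤) :
    NB d (fun x => ENNReal.ofReal (g x))
      (4 * ((d+1:ℕ) * 2 ^ (d+1) * K * 2 ^ (d+3)) * ∫⁻ x, ‖fderiv ℝ g x‖ₑ) := by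
  set C1 : ℝ≥0∞ := (d+1:ℕ) * 2 ^ (d+1) * K * 2 ^ (d+3) with hC1
  have hvol : ∀ i : ℤ, volume (Ioc ((2:ℝ)^(i-1)) (2^i)) = len (i-1) := by
    intro i
    rw [Real.volume_Ioc, len_eq_ofReal]
    congr 1
    rw [zpow_sub_one₀ (by norm_num)]; ring
  have hch : ∀ i : ℤ, ∃ s ∈ Ioc ((2:ℝ)^(i-1)) (2^i), len (i-1) * per g s ≤
      ∫⁻ s in Ioc ((2:ℝ)^(i-1)) (2^i), per g s := by
    intro i
    obtain ⟨s, hs, h⟩ := exists_le_setLAverage (μ := volume) (s := Ioc ((2:ℝ)^(i-1)) (2^i)) (f := per g)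
      (by rw [hvol]; exact len_ne_zero _) (by rw [hvol]; exact len_ne_top _)
      (measurable_per hg).aemeasurable
    refine ⟨s, hs, ?_⟩
    rw [setLAverage_eq, hvol] at h
    rw [mul_comm]
    exact (ENNReal.le_div_iff_mul_le (Or.inl (len_ne_zero _)) (Or.inl (len_ne_top _))).1 h
  choose s hs hsP using hch
  have hs0 : ∀ i, 0 < s i := fun i => lt_trans (by positivity) (hs i).1
  have H := NB.tsum (fun i : ℤ => (level hg hi hK1 hKt hK (hs0 i)).const_mul (len (i+1)))
  refine H.mono (fun x => ?_) ?_
  · by_cases hx : 0 < g x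
    · obtain ⟨i, hi1, hi2⟩ := exists_mem_Ioc_zpow hx (show (1:ℝ) < 2 by norm_num)
      refine le_trans ?_ (ENNReal.le_tsum i)
      have : x ∈ {x | s i < g x} := lt_of_le_of_lt (hs i).2 hi1
      rw [indicator_of_mem this, len_eq_ofReal]
      simp only [Pi.one_apply, mul_one]
      exact ENNReal.ofReal_le_ofReal hi2
    · rw [ENNReal.ofReal_of_nonpos (not_lt.1 hx)]; exact zero_le
  · calc ∑' i : ℤ, len (i+1) * (C1 * per g (s i))
        = ∑' i : ℤ, (4 * C1) * (len (i-1) * per g (s i)) := by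
          congr 1; funext i
          have : len (i+1) = 4 * len (i-1) := by
            rw [show i + 1 = ((2:ℕ):ℤ) + (i-1) by push_cast; ring, len_add, len_natCast]
            norm_num
          rw [this]; ring
      _ = (4 * C1) * ∑' i : ℤ, (len (i-1) * per g (s i)) := ENNReal.tsum_mul_left
      _ ≤ (4 * C1) * ∑' i : ℤ, ∫⁻ s in Ioc ((2:ℝ)^(i-1)) (2^i), per g s := by
          gcongr with i
          exact hsP i
      _ = (4 * C1) * ∫⁻ s in ⋃ i : ℤ, Ioc ((2:ℝ)^(i-1)) (2^i), per g s := by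
          rw [lintegral_iUnion (fun i => measurableSet_Ioc)]
          have hm : Monotone fun i : ℤ => (2:ℝ)^i := fun i j h => zpow_le_zpow_right₀ (by norm_num) h
          exact hm.pairwise_disjoint_on_Ioc_pred
      _ ≤ _ := by gcongr; exact coarea hg _

lemma boxing_abs (d : ℕ) : ∃ C : ℝ≥0∞, C ≠ ⊤ ∧ ∀ g : Eu (d+1) → ℝ, ContDiff ℝ 1 g →
    ∫⁻ x, ‖g x‖ₑ ≠ ⊤ → NB d (fun x => ‖g x‖ₑ) (C * ∫⁻ x, ‖fderiv ℝ g x‖ₑ) := by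
  obtain ⟨K, hKt, hK1, hK⟩ := exists_K
  set C1 : ℝ≥0∞ := 4 * ((d+1:ℕ) * 2 ^ (d+1) * K * 2 ^ (d+3)) with hC1
  refine ⟨C1 + C1, by finiteness, fun g hg hi => ?_⟩
  have h1 := boxing_pos hK1 hKt hK hg hi
  have h2 := boxing_pos hK1 hKt hK hg.neg (by simpa using hi)
  refine (h1.add h2).mono (fun x => ?_) ?_
  · rcases le_total 0 (g x) with h | h
    · rw [Real.enorm_of_nonneg h]; exact le_self_add
    · rw [← enorm_neg, Real.enorm_of_nonneg (by linarith)]; exact le_add_self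
  · rw [add_mul]
    gcongr with x
    rw [fderiv_fun_neg, enorm_neg]

end partG

end AdamsAux

namespace AdamsAux

section partH
open Filter Topology

/-- evaluation on basis vectors -/
noncomputable def cmp {n : ℕ} (p : ℕ) (I : Fin p → Fin n) :
    ContinuousMultilinearMap ℝ (fun _ : Fin p => Eu n) ℝ →L[ℝ] ℝ :=
  ContinuousMultilinearMap.apply ℝ (fun _ : Fin p => Eu n) ℝ (fun m => EuclideanSpace.single (I m) (1:ℝ))

lemma cmp_apply {n p : ℕ} (I : Fin p → Fin n) (T : ContinuousMultilinearMap ℝ (fun _ : Fin p => Eu n) ℝ) :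
    cmp p I T = T (fun m => EuclideanSpace.single (I m) (1:ℝ)) := rfl

lemma norm_cmp_apply_le {n p : ℕ} (I : Fin p → Fin n)
    (T : ContinuousMultilinearMap ℝ (fun _ : Fin p => Eu n) ℝ) : ‖cmp p I T‖ ≤ ‖T‖ := by
  rw [cmp_apply]
  refine (T.le_opNorm _).trans ?_
  simp

lemma norm_cmp_le {n p : ℕ} (I : Fin p → Fin n) : ‖cmp p I‖ ≤ 1 :=
  ContinuousLinearMap.opNorm_le_bound _ zero_le_one fun T => by
    rw [one_mul]; exact norm_cmp_apply_le I T

lemma norm_le_sum_cmp {n p : ℕ} (T : ContinuousMultilinearMap ℝ (fun _ : Fin p => Eu n) ℝ) :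
    ‖T‖ ≤ ∑ I : Fin p → Fin n, ‖cmp p I T‖ := by
  refine ContinuousMultilinearMap.opNorm_le_bound (by positivity) fun v => ?_
  have hv : v = fun m => ∑ i : Fin n, (v m i) • EuclideanSpace.single i (1:ℝ) := by
    funext m
    ext j
    simp [Finset.sum_apply, Pi.single_apply]
  have h1 : T v = ∑ I : Fin p → Fin n, (∏ m, v m (I m)) • cmp p I T := by
    conv_lhs => rw [hv]
    rw [ContinuousMultilinearMap.map_sum]
    refine Finset.sum_congr rfl fun I _ => ?_
    rw [cmp_apply]
    exact T.map_smul_univ (fun m => v m (I m)) (fun m => EuclideanSpace.single (I m) (1:ℝ))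
  rw [h1, Finset.sum_mul]
  refine (norm_sum_le _ _).trans (Finset.sum_le_sum fun I _ => ?_)
  rw [norm_smul, mul_comm, norm_prod]
  gcongr with m
  exact PiLp.norm_apply_le (v m) (I m)

lemma NB_top (d p : ℕ) : ∃ C : ℝ≥0∞, C ≠ ⊤ ∧ ∀ f : Eu (d+1) → ℝ, ContDiff ℝ (p+1:ℕ) f →
    ∫⁻ x, ‖iteratedFDeriv ℝ p f x‖ₑ ≠ ⊤ →
    NB d (fun x => ‖iteratedFDeriv ℝ p f x‖ₑ) (C * ∫⁻ x, ‖iteratedFDeriv ℝ (p+1) f x‖ₑ) := by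
  obtain ⟨C, hC, H⟩ := boxing_abs d
  refine ⟨∑' I : Fin p → Fin (d+1), C, ?_, fun f hf hi => ?_⟩
  · rw [tsum_fintype]; simp only [Finset.sum_const, nsmul_eq_mul]; finiteness
  have hT : ContDiff ℝ 1 (iteratedFDeriv ℝ p f) := hf.iteratedFDeriv_right (by push_cast; rw [add_comm])
  have hI : ∀ I : Fin p → Fin (d+1), NB d (fun x => ‖cmp p I (iteratedFDeriv ℝ p f x)‖ₑ)
      (C * ∫⁻ x, ‖iteratedFDeriv ℝ (p+1) f x‖ₑ) := by
    intro I
    have hg : ContDiff ℝ 1 fun x => cmp p I (iteratedFDeriv ℝ p f x) := (cmp p I).contDiff.comp hT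
    refine (H _ hg ?_).mono (fun _ => le_rfl) ?_
    · refine ne_top_of_le_ne_top hi (lintegral_mono fun x => ?_)
      exact enorm_le_iff_norm_le.2 (norm_cmp_apply_le _ _)
    · gcongr with x
      have h1 := ((cmp p I).hasFDerivAt.comp x (hT.differentiable one_ne_zero x).hasFDerivAt).fderiv
      have h2 : fderiv ℝ (fun x => cmp p I (iteratedFDeriv ℝ p f x)) x = _ := h1
      rw [h2, enorm_le_iff_norm_le]
      refine (ContinuousLinearMap.opNorm_comp_le _ _).trans ?_
      rw [norm_fderiv_iteratedFDeriv]
      exact mul_le_of_le_one_left (norm_nonneg _) (norm_cmp_le I)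
  refine (NB.tsum hI).mono (fun x => ?_) (by rw [ENNReal.tsum_mul_right])
  rw [tsum_fintype]
  calc ‖iteratedFDeriv ℝ p f x‖ₑ ≤ ENNReal.ofReal (∑ I : Fin p → Fin (d+1), ‖cmp p I (iteratedFDeriv ℝ p f x)‖) := by
        rw [← ofReal_norm]; exact ENNReal.ofReal_le_ofReal (norm_le_sum_cmp _)
    _ = _ := by
        rw [ENNReal.ofReal_sum_of_nonneg fun _ _ => norm_nonneg _]
        simp only [ofReal_norm]

lemma NB_down (d p : ℕ) (i : ℕ) : i ≤ p → i < d + 1 → (i = 0 ∨ i ≤ d) → ∃ C : ℝ≥0∞, C ≠ ⊤ ∧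
    ∀ f : Eu (d+1) → ℝ, ContDiff ℝ (p+1:ℕ) f →
    (∀ m ≤ p, ∫⁻ x, ‖iteratedFDeriv ℝ m f x‖ₑ ≠ ⊤) →
    NB (d-i) (fun x => ‖iteratedFDeriv ℝ (p-i) f x‖ₑ) (C * ∫⁻ x, ‖iteratedFDeriv ℝ (p+1) f x‖ₑ) := by
  induction i with
  | zero =>
    intro _ _ _
    obtain ⟨C, hC, H⟩ := NB_top d p
    exact ⟨C, hC, fun f hf hi => H f hf (hi p le_rfl)⟩
  | succ i ih =>
    intro h1 h2 _
    obtain ⟨C, hC, H⟩ := ih (by omega) (by omega) (by omega)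
    refine ⟨((d+1:ℕ) * 4 ^ (d+1)) * (3 * C), by finiteness, fun f hf hi => ?_⟩
    have hT : ContDiff ℝ 1 (iteratedFDeriv ℝ (p-(i+1)) f) := by
      apply hf.iteratedFDeriv_right
      have : 1 + (p - (i+1)) ≤ p + 1 := by omega
      exact_mod_cast this
    have hv := H f hf hi
    rw [show d - i = d - (i+1) + 1 by omega] at hv
    have := NB_riesz (u := fun x => ‖iteratedFDeriv ℝ (p-(i+1)) f x‖ₑ) (by omega) hv
      (C := (d+1:ℕ) * 4 ^ (d+1)) (fun x => by
        refine (riesz_bound (by omega) hT (hi _ (by omega)) x).trans (le_of_eq ?_)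
        congr 2; funext j; congr 2; funext y
        rw [← ofReal_norm, ← ofReal_norm, norm_fderiv_iteratedFDeriv,
          show p - (i+1) + 1 = p - i by omega])
    refine this.mono (fun _ => le_rfl) (le_of_eq (by ring))

end partH

end AdamsAux

/-- Adams' estimate for `W^{k,1}`: the Choquet integral with respect to `(n-k+l)`-dimensional
Hausdorff content of the maximal function of `∇^l f` is controlled by `‖∇^k f‖_{L¹}`. -/
theorem adams_choquet_sobolev {n k l : ℕ} (hl : 1 ≤ l) (hlk : l < k) (hkn : k ≤ n) :
    ∃ C : ℝ, 0 < C ∧ ∀ f : EuclideanSpace ℝ (Fin n) → ℝ,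
      ContDiff ℝ k f →
      (∀ i ≤ k, Integrable fun x => ‖iteratedFDeriv ℝ i f x‖) →
      ∫⁻ t in Set.Ioi (0 : ℝ),
          hContent ((n : ℝ) - k + l)
            {x | ENNReal.ofReal t ≤ maxFn (fun y => (‖iteratedFDeriv ℝ l f y‖₊ : ℝ≥0∞)) x}
        ≤ ENNReal.ofReal C * ENNReal.ofReal (∫ x, ‖iteratedFDeriv ℝ k f x‖) := by
  obtain ⟨d, rfl⟩ : ∃ d, n = d + 1 := ⟨n - 1, by omega⟩
  obtain ⟨p, rfl⟩ : ∃ p, k = p + 1 := ⟨k - 1, by omega⟩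
  obtain ⟨C, hC, H⟩ := AdamsAux.NB_down d p (p - l) (by omega) (by omega) (by omega)
  set e := d - (p - l) with he
  have hτ : (((d + 1 : ℕ) : ℝ) - ((p + 1 : ℕ) : ℝ) + l) = (e : ℝ) := by
    have : e + (p + 1) = d + 1 + l := by omega
    have h2 : (e : ℝ) + ((p + 1 : ℕ) : ℝ) = ((d + 1 : ℕ) : ℝ) + l := by exact_mod_cast this
    linarith
  set D : ℝ≥0∞ := 2 * ((d + 1 : ℕ) : ℝ≥0∞) ^ e * (2 * 3 ^ (d + 1) * AdamsAux.CM (d + 1) * C) with hD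
  have hDt : D ≠ ⊤ := by
    have := AdamsAux.CM_ne_top (n := d + 1)
    finiteness
  refine ⟨D.toReal + 1, by positivity, fun f hf hi => ?_⟩
  have hfin : ∀ m ≤ p, ∫⁻ x, ‖iteratedFDeriv ℝ m f x‖ₑ ≠ ⊤ := by
    intro m hm
    have := (hi m (by omega)).2
    rw [hasFiniteIntegral_iff_enorm] at this
    simpa using this.ne
  have h1 := H f hf hfin
  rw [show p - (p - l) = l by omega] at h1
  have h2 := AdamsAux.choquet_le (by omega) (by omega) (AdamsAux.NB_maxFn (by omega) h1)
  have e1 : ENNReal.ofReal (∫ x, ‖iteratedFDeriv ℝ (p + 1) f x‖) =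
      ∫⁻ x, ‖iteratedFDeriv ℝ (p + 1) f x‖ₑ := by
    rw [ofReal_integral_eq_lintegral_ofReal (hi (p + 1) le_rfl)
      (Filter.Eventually.of_forall fun x => norm_nonneg _)]
    simp only [ofReal_norm]
  rw [hτ, e1]
  refine h2.trans ?_
  have hle : D ≤ ENNReal.ofReal (D.toReal + 1) := by
    conv_lhs => rw [← ENNReal.ofReal_toReal hDt]
    exact ENNReal.ofReal_le_ofReal (by linarith)
  calc _ = D * ∫⁻ x, ‖iteratedFDeriv ℝ (p + 1) f x‖ₑ := by rw [hD]; ring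
    _ ≤ _ := by gcongr
end
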